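/- arXiv:2306.12192 — 3 statements merged into one kernel-verified Lean document; each statement's English description precedes it below -/
import Mathlib

section
/- Let G = GP(Γ, 𝒢) be a non-degenerate graph product over a finite simple graph Γ in which every vertex group is infinite. Then G is acylindrically arboreal (admits a non-elementary acylindrical action on a tree) if and only if diam(Γ) ≥ 3. -/
/-- An action of a group `G` by simplicial isometries (automorphisms) on a simplicial
tree, i.e. a connected acyclic simple graph, with the natural edge metric. -/
structure TreeAction (G : Type*) [Group G] where
  V : Type
  T : SimpleGraph V
  isTree : T.IsTree
  act : G →* (T ≃g T)

namespace TreeAction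

variable {G : Type*} [Group G] (A : TreeAction G)

/-- The action fixes a point of the tree (the action is elliptic). -/
def FixesPoint : Prop := ∃ x : A.V, ∀ g : G, A.act g x = x

/-- An element is elliptic if it fixes a point of the tree. -/
def Elliptic (g : G) : Prop := ∃ x : A.V, A.act g x = x

/-- The action has bounded orbits. -/
def BoundedOrbits : Prop := ∃ (x : A.V) (B : ℕ), ∀ g : G, A.T.dist x (A.act g x) ≤ B

/-- `(k, C)`-acylindricity: the pointwise stabiliser of any geodesic edge path of length
at least `k` (equivalently, in a tree, the common stabiliser of two points at distance
at least `k`) has at most `C` elements. -/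
def KCAcylindrical (k C : ℕ) : Prop :=
  ∀ x y : A.V, k ≤ A.T.dist x y →
    {g : G | A.act g x = x ∧ A.act g y = y}.Finite ∧
      {g : G | A.act g x = x ∧ A.act g y = y}.ncard ≤ C

/-- An action on a tree is acylindrical if it is `(k, C)`-acylindrical for some `k ≥ 0`,
`C ≥ 1`. -/
def Acylindrical : Prop := ∃ k C : ℕ, 1 ≤ C ∧ A.KCAcylindrical k C

/-- Bowditch's definition of acylindricity for the action on the tree. -/
def BowditchAcylindrical : Prop :=
  ∀ ε : ℕ, ∃ R N : ℕ, ∀ x y : A.V, R ≤ A.T.dist x y →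
    {g : G | A.T.dist x (A.act g x) ≤ ε ∧ A.T.dist y (A.act g y) ≤ ε}.Finite ∧
      {g : G | A.T.dist x (A.act g x) ≤ ε ∧ A.T.dist y (A.act g y) ≤ ε}.ncard ≤ N

end TreeAction

/-- A group is virtually cyclic if it has a cyclic subgroup of finite index. -/
def IsVirtuallyCyclic (G : Type*) [Group G] : Prop :=
  ∃ H : Subgroup G, H.FiniteIndex ∧ IsCyclic H

namespace TreeAction

variable {G : Type*} [Group G] (A : TreeAction G)

/-- The action is non-elementary: unbounded orbits and the group is not virtually
cyclic. -/
def NonElementary : Prop := ¬ A.BoundedOrbits ∧ ¬ IsVirtuallyCyclic G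

/-- The action fixes a bi-infinite geodesic line setwise. -/
def FixesLine : Prop :=
  ∃ ℓ : ℤ → A.V, (∀ m n : ℤ, (A.T.dist (ℓ m) (ℓ n) : ℤ) = |m - n|) ∧
    ∀ g : G, (fun v => A.act g v) '' Set.range ℓ = Set.range ℓ

end TreeAction

/-- A group is acylindrically arboreal if it admits a non-elementary acylindrical
action on a simplicial tree. -/
def AcylindricallyArboreal (G : Type*) [Group G] : Prop :=
  ∃ A : TreeAction G, A.Acylindrical ∧ A.NonElementary

/-- Property (FA⁻): every action on a simplicial tree either fixes a point or fixes a
bi-infinite geodesic setwise. -/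
def PropertyFAMinus (G : Type*) [Group G] : Prop :=
  ∀ A : TreeAction G, A.FixesPoint ∨ A.FixesLine

section GraphProduct

variable {V : Type} (Γ : SimpleGraph V) (Gv : V → Type) [∀ v, Group (Gv v)]

/-- The commutation relators defining a graph product: for each edge `{u, v}` of `Γ`,
the elements of `G_u` commute with the elements of `G_v` inside the free product. -/
def graphProductRels : Set (Monoid.CoprodI Gv) :=
  {x | ∃ (u v : V), Γ.Adj u v ∧ ∃ (a : Gv u) (b : Gv v),
    x = Monoid.CoprodI.of a * Monoid.CoprodI.of b *
      (Monoid.CoprodI.of a)⁻¹ * (Monoid.CoprodI.of b)⁻¹}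

/-- The graph product of the groups `Gv` over the finite simple graph `Γ`: the free
product of the vertex groups modulo commutation of adjacent vertex groups. -/
def GraphProduct : Type :=
  Monoid.CoprodI Gv ⧸ Subgroup.normalClosure (graphProductRels Γ Gv)

instance : Group (GraphProduct Γ Gv) :=
  inferInstanceAs (Group (Monoid.CoprodI Gv ⧸ Subgroup.normalClosure (graphProductRels Γ Gv)))

/-- The canonical map of a vertex group into the graph product. -/
def GraphProduct.of (v : V) : Gv v →* GraphProduct Γ Gv :=
  (QuotientGroup.mk' _).comp Monoid.CoprodI.of

/-- The full subgroup on a set `S` of vertices: the subgroup generated by the vertex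
groups of the vertices in `S`. -/
def GraphProduct.full (S : Set V) : Subgroup (GraphProduct Γ Gv) :=
  ⨆ v ∈ S, (GraphProduct.of Γ Gv v).range

/-- A graph product is non-degenerate if all vertex groups are nontrivial and `Γ` has
more than one vertex. -/
def GraphProduct.NonDegenerate : Prop :=
  (∀ v, Nontrivial (Gv v)) ∧ Nontrivial V

/-- The conjugate `g H g⁻¹` of a subgroup. -/
def conjSubgroup {G : Type*} [Group G] (g : G) (H : Subgroup G) : Subgroup G :=
  H.map (MulAut.conj g).toMonoidHom

/-- Edge distance at least `n` between two vertices of a graph (with the convention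
that vertices in different components are at infinite distance). -/
def SimpleGraph.distAtLeast (n : ℕ) (a b : V) : Prop :=
  a ≠ b ∧ (¬ Γ.Reachable a b ∨ n ≤ Γ.dist a b)

/-- Two vertices are separated (w.r.t. the graph product) if their edge distance is at
least 2 and the full subgroup on the intersection of their links is finite. -/
def GraphProduct.SeparatedPair (a b : V) : Prop :=
  a ≠ b ∧ ¬ Γ.Adj a b ∧
    Finite (GraphProduct.full Γ Gv (Γ.neighborSet a ∩ Γ.neighborSet b))

/-- The graph-theoretic diameter of `Γ` is at least `n`. -/
def SimpleGraph.diamAtLeast (n : ℕ) : Prop := ∃ a b : V, Γ.distAtLeast n a b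

end GraphProduct


namespace GPArb

section Metric

variable {X : Type*} {T : SimpleGraph X}

/-- `m` lies on a geodesic from `x` to `y`. -/
def Btw (T : SimpleGraph X) (x m y : X) : Prop := T.dist x m + T.dist m y = T.dist x y

theorem Btw.symm {x m y : X} (h : Btw T x m y) : Btw T y m x := by
  unfold Btw at *
  rw [T.dist_comm (u := y) (v := m), T.dist_comm (u := m) (v := x), T.dist_comm (u := y) (v := x)]
  omega

theorem btw_of_mem_support (hc : T.Connected) {x m y : X} (p : T.Walk x y)
    (hp : p.length = T.dist x y) (hm : m ∈ p.support) : Btw T x m y := by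
  classical
  have h1 := T.dist_le (p.takeUntil m hm)
  have h2 := T.dist_le (p.dropUntil m hm)
  have h3 : (p.takeUntil m hm).length + (p.dropUntil m hm).length = p.length := by
    rw [← SimpleGraph.Walk.length_append, SimpleGraph.Walk.take_spec]
  have h4 := hc.dist_triangle (u := x) (v := m) (w := y)
  unfold Btw
  omega

theorem mem_support_of_btw (hT : T.IsTree) {x m y : X} (h : Btw T x m y) (p : T.Walk x y) :
    m ∈ p.support := by
  classical
  obtain ⟨q1, h1⟩ := hT.1.exists_walk_length_eq_dist x m
  obtain ⟨q2, h2⟩ := hT.1.exists_walk_length_eq_dist m y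
  have hq : (q1.append q2).IsPath := by
    apply SimpleGraph.Walk.isPath_of_length_eq_dist
    rw [SimpleGraph.Walk.length_append, h1, h2]
    exact h
  have := hT.existsUnique_path x y
  have he : q1.append q2 = p.bypass := this.unique hq p.bypass_isPath
  apply p.support_bypass_subset_support
  rw [← he]
  simp

theorem btw_or (hT : T.IsTree) {y m z : X} (h : Btw T y m z) (s : X) :
    Btw T s m y ∨ Btw T s m z := by
  obtain ⟨q1, h1⟩ := hT.1.exists_walk_length_eq_dist y s
  obtain ⟨q2, h2⟩ := hT.1.exists_walk_length_eq_dist s z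
  have := mem_support_of_btw hT h (q1.append q2)
  rw [SimpleGraph.Walk.mem_support_append_iff] at this
  rcases this with h | h
  · exact Or.inl (btw_of_mem_support hT.1 q1 h1 h).symm
  · exact Or.inr (btw_of_mem_support hT.1 q2 h2 h)

theorem btw_dist (hT : T.IsTree) {x y z z' : X} (h : Btw T x z y) (h' : Btw T x z' y)
    (hle : T.dist x z' ≤ T.dist x z) : T.dist z' z + T.dist x z' = T.dist x z := by
  have c1 := T.dist_comm (u := z') (v := x)
  have c2 := T.dist_comm (u := z) (v := x)
  have c3 := T.dist_comm (u := z) (v := z')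
  rcases btw_or hT h z' with h1 | h1 <;> unfold Btw at * <;> omega

theorem btw_unique (hT : T.IsTree) {x y z z' : X} (h : Btw T x z y) (h' : Btw T x z' y)
    (he : T.dist x z' = T.dist x z) : z' = z := by
  have := btw_dist hT h h' he.le
  exact hT.1.dist_eq_zero_iff.1 (by omega)

theorem exists_btw (hc : T.Connected) (x y : X) {i : ℕ} (hi : i ≤ T.dist x y) :
    ∃ z, Btw T x z y ∧ T.dist x z = i := by
  obtain ⟨p, hp⟩ := hc.exists_walk_length_eq_dist x y
  refine ⟨p.getVert i, btw_of_mem_support hc p hp (p.getVert_mem_support i), ?_⟩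
  have h1 := T.dist_le (p.take i)
  have h2 := T.dist_le (p.drop i)
  rw [SimpleGraph.Walk.take_length] at h1
  rw [SimpleGraph.Walk.drop_length] at h2
  have h4 := hc.dist_triangle (u := x) (v := p.getVert i) (w := y)
  omega

theorem btw_left (hc : T.Connected) (x y : X) : Btw T x x y := by simp [Btw]
theorem btw_right (hc : T.Connected) (x y : X) : Btw T x y y := by simp [Btw]

theorem dist_adj (hT : T.IsTree) {a b : X} (h : T.dist a b = 1) (z : X) :
    T.dist z a = T.dist z b + 1 ∨ T.dist z b = T.dist z a + 1 := by
  have hadj : T.Adj a b := SimpleGraph.dist_eq_one_iff_adj.1 h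
  obtain ⟨p, hp, hl⟩ := hT.1.exists_path_of_dist z a
  by_cases hb : b ∈ p.support
  · left
    have := btw_of_mem_support hT.1 p hl hb
    have c := T.dist_comm (u := b) (v := a)
    unfold Btw at this
    omega
  · right
    have hq : (p.concat hadj).IsPath := hp.concat hb hadj
    obtain ⟨p', hp', hl'⟩ := hT.1.exists_path_of_dist z b
    have he : p.concat hadj = p' := (hT.existsUnique_path z b).unique hq hp'
    rw [← hl', ← he, SimpleGraph.Walk.length_concat, hl]

theorem exists_median (hT : T.IsTree) (x y z : X) :
    ∃ m, Btw T x m y ∧ Btw T y m z ∧ Btw T x m z := by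
  classical
  -- the largest `i` such that the point at distance `i` is on `[x,z]`
  let P : ℕ → Prop := fun i => ∃ m, Btw T x m y ∧ Btw T x m z ∧ T.dist x m = i
  have hP0 : P 0 := ⟨x, btw_left hT.1 _ _, btw_left hT.1 _ _, by simp⟩
  have hb : ∀ i, P i → i ≤ T.dist x y := by
    rintro i ⟨m, h1, h2, h3⟩
    unfold Btw at h1
    omega
  obtain ⟨m, h1, h2, h3⟩ := Nat.findGreatest_spec (P := P) (Nat.zero_le (T.dist x y)) hP0
  set i := Nat.findGreatest P (T.dist x y) with hi
  refine ⟨m, h1, ?_, h2⟩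
  by_cases hlt : i = T.dist x y
  · have : T.dist m y = 0 := by unfold Btw at h1; omega
    have := hT.1.dist_eq_zero_iff.1 this
    subst this
    exact btw_left hT.1 _ _
  have hlt : i < T.dist x y := lt_of_le_of_ne (hb _ ⟨m, h1, h2, h3⟩) hlt
  obtain ⟨m', h1', h3'⟩ := exists_btw hT.1 x y (i := i + 1) hlt
  have hd := btw_dist hT h1' h1 (by omega)
  have hmm : T.dist m m' = 1 := by omega
  have c0 := T.dist_comm (u := m) (v := m')
  have hnot : ¬ P (i + 1) := by
    intro h
    have := Nat.le_findGreatest (hb _ h) h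
    omega
  have c1 := T.dist_comm (u := z) (v := m)
  have c2 := T.dist_comm (u := z) (v := m')
  have c3 := T.dist_comm (u := z) (v := y)
  have c4 := T.dist_comm (u := z) (v := x)
  have c5 := T.dist_comm (u := y) (v := m)
  have c6 := T.dist_comm (u := y) (v := m')
  have c7 := T.dist_comm (u := m) (v := x)
  have c8 := T.dist_comm (u := m') (v := x)
  rcases dist_adj hT hmm z with h | h
  · exfalso
    apply hnot
    refine ⟨m', h1', ?_, h3'⟩
    unfold Btw at *
    omega
  · rcases btw_or hT h1' z with h4 | h4
    · exact absurd ⟨m', h1', h4.symm, h3'⟩ hnot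
    · unfold Btw at *
      omega

/-- Local-to-global for geodesics in trees. -/
theorem btw_chain (hT : T.IsTree) {x y z w : X} (h1 : Btw T x y z) (h2 : Btw T y z w)
    (hne : y ≠ z) : Btw T x z w := by
  have hp := hT.1.pos_dist_of_ne hne
  rcases btw_or hT h2 x with h | h
  · unfold Btw at *
    have c := T.dist_comm (u := z) (v := y)
    omega
  · exact h

theorem btw_trans_right (hT : T.IsTree) {x y z w : X} (h1 : Btw T x z w) (h2 : Btw T x y z) :
    Btw T x y w ∧ Btw T y z w := by
  have t1 := hT.1.dist_triangle (u := x) (v := y) (w := w)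
  have t2 := hT.1.dist_triangle (u := y) (v := z) (w := w)
  unfold Btw at *
  omega

/-- A set closed under geodesics. -/
def Cvx (T : SimpleGraph X) (s : Set X) : Prop :=
  ∀ x ∈ s, ∀ y ∈ s, ∀ z, Btw T x z y → z ∈ s

theorem Cvx.inter {s t : Set X} (hs : Cvx T s) (ht : Cvx T t) : Cvx T (s ∩ t) :=
  fun x hx y hy z hz => ⟨hs x hx.1 y hy.1 z hz, ht x hx.2 y hy.2 z hz⟩

theorem helly (hT : T.IsTree) {ι : Type*} (F : Finset ι) :
    ∀ (C : ι → Set X), (∀ i ∈ F, Cvx T (C i)) → (∀ i ∈ F, ∀ j ∈ F, (C i ∩ C j).Nonempty) →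
      ∃ x, ∀ i ∈ F, x ∈ C i := by
  classical
  induction F using Finset.induction_on with
  | empty =>
    intro C _ _
    obtain ⟨x⟩ := hT.1.nonempty
    exact ⟨x, by simp⟩
  | insert a F ha ih =>
    intro C hC hp
    by_cases hF : F = ∅
    · subst hF
      obtain ⟨x, hx, _⟩ := hp a (by simp) a (by simp)
      exact ⟨x, by simpa using hx⟩
    obtain ⟨b, hb⟩ := Finset.nonempty_iff_ne_empty.2 hF
    obtain ⟨x, hx⟩ := ih (fun i => C i ∩ C a)
      (fun i hi => (hC i (by simp [hi])).inter (hC a (by simp))) (by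
        intro i hi j hj
        obtain ⟨p, hp1, hp2⟩ := hp i (by simp [hi]) j (by simp [hj])
        obtain ⟨q, hq1, hq2⟩ := hp i (by simp [hi]) a (by simp)
        obtain ⟨r, hr1, hr2⟩ := hp j (by simp [hj]) a (by simp)
        obtain ⟨m, h1, h2, h3⟩ := exists_median hT p q r
        have e1 := hC i (by simp [hi]) p hp1 q hq1 m h1
        have e2 := hC j (by simp [hj]) p hp2 r hr1 m h3
        have e3 := hC a (by simp) q hq2 r hr2 m h2
        exact ⟨m, ⟨e1, e3⟩, ⟨e2, e3⟩⟩)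
    refine ⟨x, fun i hi => ?_⟩
    rcases Finset.mem_insert.1 hi with rfl | hi
    · exact (hx b hb).2
    · exact (hx i hi).1

/-- Recognising trees via a rank function. -/
theorem isTree_of_rank (hc : T.Connected) (r : X → ℕ)
    (h : ∀ v u u', T.Adj v u → T.Adj v u' → r u ≤ r v → r u' ≤ r v → u = u') : T.IsTree := by
  classical
  refine ⟨hc, ?_⟩
  intro v c hcyc
  obtain ⟨w, hw, hmax⟩ := Finset.exists_max_image c.support.toFinset r ⟨v, by simp⟩
  have hw' : w ∈ c.support := by simpa using hw
  have hcyc' : (c.rotate w hw').IsCycle := by simpa using hcyc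
  have hnn : ¬ (c.rotate w hw').Nil := hcyc'.not_nil
  have hle : ∀ u ∈ (c.rotate w hw').support, r u ≤ r w := by
    intro u hu
    apply hmax
    rw [SimpleGraph.Walk.mem_support_rotate_iff] at hu
    simpa using hu
  apply hcyc'.snd_ne_penultimate
  apply h w
  · exact SimpleGraph.Walk.adj_snd hnn
  · exact (SimpleGraph.Walk.adj_penultimate hnn).symm
  · exact hle _ (SimpleGraph.Walk.getVert_mem_support _ _)
  · exact hle _ (SimpleGraph.Walk.getVert_mem_support _ _)

theorem dist_map_le {Y : Type*} {S : SimpleGraph Y} (hT : T.Connected) (hS : S.Connected)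
    (f : X → Y) (c : ℕ) (hf : ∀ x y, T.Adj x y → S.dist (f x) (f y) ≤ c) (x y : X) :
    S.dist (f x) (f y) ≤ c * T.dist x y := by
  obtain ⟨p, hp⟩ := hT.exists_walk_length_eq_dist x y
  rw [← hp]
  clear hp
  induction p with
  | nil => simp
  | cons hadj p ih =>
    rename_i u v w
    have h1 := hf _ _ hadj
    have h2 := hS.dist_triangle (u := f u) (v := f v) (w := f w)
    rw [SimpleGraph.Walk.length_cons, Nat.mul_add]
    omega

end Metric

end GPArb

namespace GPArb

section Action

variable {X : Type*} {T : SimpleGraph X} {G : Type*} [Group G] [MulAction G X]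

theorem btw_smul (hd : ∀ (g : G) x y, T.dist (g • x) (g • y) = T.dist x y) (g : G) {x y z : X}
    (h : Btw T x y z) : Btw T (g • x) (g • y) (g • z) := by
  unfold Btw at *
  rw [hd, hd, hd, h]

/-- The set of points fixed by a set of group elements. -/
def FixSet (X : Type*) [MulAction G X] (S : Set G) : Set X := {x | ∀ g ∈ S, g • x = x}

theorem fix_btw (hT : T.IsTree) (hd : ∀ (g : G) x y, T.dist (g • x) (g • y) = T.dist x y)
    {g : G} {x y z : X} (hx : g • x = x) (hy : g • y = y) (h : Btw T x z y) : g • z = z := by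
  have h' := btw_smul hd g h
  rw [hx, hy] at h'
  apply btw_unique hT h h'
  conv_lhs => rw [← hx]
  exact hd g x z

theorem cvx_fixSet (hT : T.IsTree) (hd : ∀ (g : G) x y, T.dist (g • x) (g • y) = T.dist x y)
    (S : Set G) : Cvx T (FixSet X S) :=
  fun _ hx _ hy _ hz g hg => fix_btw hT hd (hx g hg) (hy g hg) hz

theorem fixed_of_bounded (hT : T.IsTree)
    (hd : ∀ (g : G) x y, T.dist (g • x) (g • y) = T.dist x y)
    (hi : ∀ (g : G) x, T.dist x (g • x) ≠ 1) (K : Subgroup G) (x : X) (B : ℕ)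
    (hB : ∀ k ∈ K, T.dist x (k • x) ≤ B) : ∃ y : X, ∀ k ∈ K, k • y = y := by
  classical
  let R : ℕ → Prop := fun n => ∃ y : X, ∀ k ∈ K, T.dist y (k • x) ≤ n
  have hR : ∃ n, R n := ⟨B, x, hB⟩
  obtain ⟨y, hy⟩ := Nat.find_spec hR
  have hmin : ∀ n, R n → Nat.find hR ≤ n := fun n hn => Nat.find_min' hR hn
  set n := Nat.find hR
  refine ⟨y, fun h hh => ?_⟩
  have hy' : ∀ k ∈ K, T.dist (h • y) (k • x) ≤ n := by
    intro k hk
    have := hy (h⁻¹ * k) (K.mul_mem (K.inv_mem hh) hk)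
    rw [← hd h, smul_smul] at this
    simpa using this
  by_contra hne
  have hpos := hT.1.pos_dist_of_ne (Ne.symm hne)
  have h1 := hi h y
  obtain ⟨z, hz, hz1⟩ := exists_btw hT.1 y (h • y) (i := 1) hpos
  have hz2 : 1 ≤ T.dist z (h • y) := by unfold Btw at hz; omega
  have key : ∀ k ∈ K, T.dist z (k • x) + 1 ≤ n := by
    intro k hk
    have a1 := hy k hk
    have a2 := hy' k hk
    rw [T.dist_comm] at a1 a2
    have c1 := T.dist_comm (u := k • x) (v := z)
    have c2 := T.dist_comm (u := y) (v := z)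
    rcases btw_or hT hz (k • x) with h | h <;> unfold Btw at h <;> omega
  have hn1 := key 1 K.one_mem
  have := hmin (n - 1) ⟨z, fun k hk => by have := key k hk; omega⟩
  omega

theorem dist_pow (hT : T.IsTree) (hd : ∀ (g : G) x y, T.dist (g • x) (g • y) = T.dist x y)
    {g : G} {x : X} (hne : g • x ≠ x) (h : Btw T x (g • x) (g • g • x)) (n : ℕ) :
    T.dist x (g ^ n • x) = n * T.dist x (g • x) := by
  have key : ∀ n : ℕ, Btw T x (g ^ n • x) (g ^ (n + 1) • x) := by
    intro n
    induction n with
    | zero => simp [Btw]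
    | succ n ih =>
      have h2 := btw_smul hd (g ^ n) h
      simp only [smul_smul] at h2
      rw [← pow_succ] at h2
      rw [show g ^ n * (g * g) = g ^ (n + 1 + 1) by rw [pow_succ, pow_succ, mul_assoc]] at h2
      refine btw_chain hT ih h2 ?_
      intro he
      rw [pow_succ, mul_smul] at he
      exact hne (MulAction.injective _ he).symm
  induction n with
  | zero => simp
  | succ n ih =>
    have := key n
    unfold Btw at this
    rw [ih, pow_succ, mul_smul, hd] at this
    rw [pow_succ, mul_smul, ← this]
    ring

theorem min_disp (hT : T.IsTree) (hd : ∀ (g : G) x y, T.dist (g • x) (g • y) = T.dist x y)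
    (hi : ∀ (g : G) x, T.dist x (g • x) ≠ 1) {g : G} {x : X} (hne : g • x ≠ x)
    (hmin : ∀ y, T.dist x (g • x) ≤ T.dist y (g • y)) : Btw T x (g • x) (g • g • x) := by
  obtain ⟨m, h1, h2, h3⟩ := exists_median hT x (g • x) (g • g • x)
  by_cases hm : m = g • x
  · rw [hm] at h3; exact h3
  exfalso
  have hp := hT.1.pos_dist_of_ne (Ne.symm hm)
  obtain ⟨z, hz, hz1⟩ := exists_btw hT.1 (g • x) m (i := 1) hp
  have hza : Btw T (g • x) z x := (btw_trans_right hT h1.symm hz).1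
  have hzb : Btw T (g • x) z (g • g • x) := (btw_trans_right hT h2 hz).1
  have hzc := btw_smul hd g⁻¹ hzb
  simp only [inv_smul_smul] at hzc
  have hp2 := hT.1.pos_dist_of_ne (Ne.symm hne)
  have hi1 := hi g x
  have hdz : T.dist x (g⁻¹ • z) = 1 := by
    rw [← hd g, smul_inv_smul, hz1]
  have hza' := hza.symm
  have c1 := T.dist_comm (u := z) (v := g • x)
  have e : T.dist x z + 1 = T.dist x (g • x) := by unfold Btw at hza'; omega
  have := btw_dist hT hza' hzc (by omega)
  have h4 := hmin (g⁻¹ • z)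
  rw [smul_inv_smul] at h4
  omega

theorem exists_min_disp [Nonempty X] (g : G) :
    ∃ x : X, ∀ y, T.dist x (g • x) ≤ T.dist y (g • y) := by
  exact ⟨Function.argmin (fun y : X => T.dist y (g • y)), 
    fun y => Function.argmin_le (fun y : X => T.dist y (g • y)) y⟩

theorem axis_mem (hT : T.IsTree) (hd : ∀ (g : G) x y, T.dist (g • x) (g • y) = T.dist x y)
    (hi : ∀ (g : G) x, T.dist x (g • x) ≠ 1) {g : G} {x y : X} (hne : g • x ≠ x)
    (hmin : ∀ y, T.dist x (g • x) ≤ T.dist y (g • y)) (hy : T.dist y (g • y) = T.dist x (g • x)) :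
    ∃ j : ℤ, Btw T x (g ^ j • y) (g • x) := by
  have hp := hT.1.pos_dist_of_ne (Ne.symm hne)
  have hney : g • y ≠ y := by
    intro h
    rw [h, T.dist_self] at hy
    omega
  have hby := min_disp hT hd hi hney (by rw [hy]; exact hmin)
  set D := T.dist x y with hD
  set n := D + 1 with hn
  have hyn := dist_pow hT hd hney hby n
  have hyb : Btw T ((g ^ n)⁻¹ • y) y (g ^ n • y) := by
    have h2 := dist_pow hT hd hney hby (n + n)
    rw [Btw, ← hd (g ^ n) ((g ^ n)⁻¹ • y), ← hd (g ^ n) ((g ^ n)⁻¹ • y), smul_inv_smul, smul_smul,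
      ← pow_add, h2, hyn]
    ring
  have hlarge : D < n * T.dist y (g • y) := by
    rw [hy]
    calc D < n := by omega
      _ ≤ n * _ := Nat.le_mul_of_pos_right _ hp
  have hxy : Btw T ((g ^ n)⁻¹ • x) y (g ^ n • x) := by
    have h1 : Btw T (g ^ n • x) y ((g ^ n)⁻¹ • y) := by
      rcases btw_or hT hyb (g ^ n • x) with h | h
      · exact h
      · unfold Btw at h
        rw [hd, hyn] at h
        omega
    rcases btw_or hT h1 ((g ^ n)⁻¹ • x) with h | h
    · exact h
    · unfold Btw at h
      rw [hd, ← hd (g ^ n) y, smul_inv_smul, T.dist_comm (u := g ^ n • y), hyn] at h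
      omega
  have sub : ∀ (k : ℕ) (a : ℤ), Btw T (g ^ a • x) y (g ^ (a + k) • x) →
      ∃ j : ℤ, Btw T (g ^ j • x) y (g ^ (j + 1) • x) := by
    intro k
    induction k with
    | zero =>
      intro a ha
      refine ⟨a, ?_⟩
      have : g ^ a • x = y := by
        unfold Btw at ha
        simp only [Nat.cast_zero, add_zero, T.dist_self] at ha
        exact hT.1.dist_eq_zero_iff.1 (by omega)
      rw [this]
      exact btw_left hT.1 _ _
    | succ k ih =>
      intro a ha
      rcases btw_or hT ha (g ^ (a + 1) • x) with h | h
      · exact ⟨a, h.symm⟩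
      · refine ih (a + 1) ?_
        rw [show a + 1 + (k : ℤ) = a + ((k + 1 : ℕ) : ℤ) by push_cast; ring]
        exact h
  obtain ⟨j, hj⟩ := sub (n + n) (-(n : ℤ)) (by
    rw [show (-(n : ℤ)) + ((n + n : ℕ) : ℤ) = (n : ℤ) by push_cast; ring]
    simpa using hxy)
  refine ⟨-j, ?_⟩
  have := btw_smul hd (g ^ (-j)) hj
  rw [smul_smul, smul_smul, ← zpow_add, ← zpow_add, show -j + j = 0 by ring,
    show -j + (j + 1) = 1 by ring, zpow_zero, zpow_one, one_smul] at this
  exact this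

theorem finite_interval (hT : T.IsTree) (x y : X) : {z | Btw T x z y}.Finite := by
  apply Set.Finite.of_finite_image (f := fun z => T.dist x z)
  · apply (Set.finite_Iic (T.dist x y)).subset
    rintro _ ⟨z, hz, rfl⟩
    have : Btw T x z y := hz
    unfold Btw at this
    simp only [Set.mem_Iic]
    omega
  · intro z hz z' hz' he
    exact btw_unique hT hz' hz he

/-- A fixed-point-free element cannot commute with an infinite complementary subgroup. -/
theorem no_loxodromic (hT : T.IsTree)
    (hd : ∀ (g : G) x y, T.dist (g • x) (g • y) = T.dist x y)
    (hi : ∀ (g : G) x, T.dist x (g • x) ≠ 1) (k : ℕ)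
    (hk : ∀ x y : X, k ≤ T.dist x y → {g : G | g • x = x ∧ g • y = y}.Finite)
    {g : G} (L : Subgroup G) (hL : Infinite L) (hcomm : ∀ l ∈ L, g * l = l * g)
    (hinj : ∀ l ∈ L, ∀ l' ∈ L, ∀ i j : ℤ, g ^ i * l = g ^ j * l' → l = l') :
    ∃ x : X, g • x = x := by
  by_contra hno
  push Not at hno
  have := hT.1.nonempty
  obtain ⟨x, hmin⟩ := exists_min_disp (T := T) (X := X) g
  have hne := hno x
  have hx : ∀ l : L, T.dist ((l : G) • x) (g • (l : G) • x) = T.dist x (g • x) := by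
    intro l
    rw [smul_smul, hcomm l l.2, mul_smul, hd]
  choose j hj using fun l : L => axis_mem hT hd hi hne hmin (hx l)
  have hfin := finite_interval hT x (g • x)
  have : Finite {z | Btw T x z (g • x)} := hfin
  obtain ⟨z, hz⟩ := Finite.exists_infinite_fiber
    (fun l : L => (⟨g ^ (j l) • (l : G) • x, hj l⟩ : {z | Btw T x z (g • x)}))
  have hb := min_disp hT hd hi hne hmin
  have hfar := dist_pow hT hd hne hb k
  have hp := hT.1.pos_dist_of_ne (Ne.symm hne)
  have hfin2 := hk z.1 (g ^ k • z.1) (by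
    obtain ⟨l, hl⟩ : ((fun l : L => (⟨g ^ (j l) • (l : G) • x, hj l⟩ :
      {z | Btw T x z (g • x)})) ⁻¹' {z}).Nonempty := Set.Nonempty.of_subtype
    have hl : g ^ (j l) • (l : G) • x = z.1 := congrArg Subtype.val hl
    rw [← hl, smul_smul (g ^ k), ← zpow_natCast g k, ← zpow_add, add_comm, zpow_add, mul_smul, hd,
      smul_smul, zpow_natCast, (show Commute (g ^ k) (l : G) from
        Commute.pow_left (hcomm l l.2) k).eq, mul_smul, hd, hfar]
    exact Nat.le_mul_of_pos_right _ hp)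
  obtain ⟨l0, hl0⟩ : ((fun l : L => (⟨g ^ (j l) • (l : G) • x, hj l⟩ :
      {z | Btw T x z (g • x)})) ⁻¹' {z}).Nonempty := Set.Nonempty.of_subtype
  have hl0' : g ^ (j l0) • (l0 : G) • x = z.1 := congrArg Subtype.val hl0
  set F := ((fun l : L => (⟨g ^ (j l) • (l : G) • x, hj l⟩ :
      {z | Btw T x z (g • x)})) ⁻¹' {z})
  have cm : ∀ l : L, Commute g (g ^ (j l) * (l : G)) := fun l =>
    (Commute.zpow_right (Commute.refl g) _).mul_right (hcomm l l.2)
  let f : F → {h : G | h • z.1 = z.1 ∧ h • g ^ k • z.1 = g ^ k • z.1} := fun l =>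
    ⟨(g ^ (j l.1) * (l.1 : G)) * (g ^ (j l0) * (l0 : G))⁻¹, by
      have hl : g ^ (j l.1) • ((l.1 : L) : G) • x = z.1 := congrArg Subtype.val l.2
      have h1 : ((g ^ (j l.1) * (l.1 : G)) * (g ^ (j l0) * (l0 : G))⁻¹) • z.1 = z.1 := by
        have e0 : (g ^ (j l0) * (l0 : G))⁻¹ • z.1 = x := by
          rw [inv_smul_eq_iff, mul_smul, hl0']
        rw [mul_smul, e0, mul_smul, hl]
      have hc : Commute (g ^ k) ((g ^ (j l.1) * (l.1 : G)) * (g ^ (j l0) * (l0 : G))⁻¹) :=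
        Commute.pow_left ((cm l.1).mul_right (cm l0).inv_right) k
      refine ⟨h1, ?_⟩
      rw [smul_smul, ← hc.eq, mul_smul, h1]⟩
  have hf : Function.Injective f := by
    intro l l' h
    have h := congrArg Subtype.val h
    have h := mul_right_cancel h
    have := hinj _ l.1.2 _ l'.1.2 _ _ h
    exact Subtype.ext (Subtype.ext this)
  have : Finite {h : G | h • z.1 = z.1 ∧ h • g ^ k • z.1 = g ^ k • z.1} := hfin2
  have : Infinite F := hz
  exact not_finite_iff_infinite.2 (Infinite.of_injective f hf) inferInstance

theorem serre (hT : T.IsTree) (hd : ∀ (g : G) x y, T.dist (g • x) (g • y) = T.dist x y)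
    {g h : G} (hg : ∃ x : X, g • x = x) (hh : ∃ x : X, h • x = x)
    (hgh : ∃ x : X, (g * h) • x = x) : ∃ x : X, g • x = x ∧ h • x = x := by
  classical
  let P : ℕ → Prop := fun n => ∃ x y : X, g • x = x ∧ h • y = y ∧ T.dist x y = n
  have hP : ∃ n, P n := by
    obtain ⟨x, hx⟩ := hg
    obtain ⟨y, hy⟩ := hh
    exact ⟨_, x, y, hx, hy, rfl⟩
  obtain ⟨x, y, hx, hy, hxy⟩ := Nat.find_spec hP
  have hmin : ∀ n, P n → Nat.find hP ≤ n := fun n hn => Nat.find_min' hP hn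
  set D := Nat.find hP
  by_cases hD : D = 0
  · have := hT.1.dist_eq_zero_iff.1 (hxy.trans hD)
    subst this
    exact ⟨x, hx, hy⟩
  exfalso
  have hne : x ≠ y := by
    rintro rfl
    simp at hxy
    omega
  -- the closest-point property
  have b1 : Btw T y x (g • y) := by
    obtain ⟨m, h1, h2, h3⟩ := exists_median hT y x (g • y)
    have h4 := btw_smul hd g h1.symm
    rw [hx] at h4
    have h5 : g • m = m := btw_unique hT h2 h4 (by
      conv_lhs => rw [← hx]
      exact hd g x m)
    have h6 := hmin _ ⟨m, y, h5, hy, rfl⟩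
    have c1 := T.dist_comm (u := y) (v := m)
    have c2 := T.dist_comm (u := y) (v := x)
    have h1' := h1
    unfold Btw at h1'
    have : m = x := hT.1.dist_eq_zero_iff.1 (by omega)
    rwa [this] at h3
  have b2 : Btw T x y (h • x) := by
    obtain ⟨m, h1, h2, h3⟩ := exists_median hT x y (h • x)
    have h4 := btw_smul hd h h1.symm
    rw [hy] at h4
    have h5 : h • m = m := btw_unique hT h2 h4 (by
      conv_lhs => rw [← hy]
      exact hd h y m)
    have h6 := hmin _ ⟨x, m, hx, h5, rfl⟩
    have h1' := h1
    unfold Btw at h1'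
    have : m = y := hT.1.dist_eq_zero_iff.1 (by omega)
    rwa [this] at h3
  have b3 : Btw T x (g • y) ((g * h) • x) := by
    have := btw_smul hd g b2
    rwa [hx, smul_smul] at this
  have b4 : Btw T (g • y) ((g * h) • x) ((g * h) • g • y) := by
    have := btw_smul hd (g * h) b1
    rwa [mul_smul g h y, hy] at this
  have n1 : x ≠ g • y := by
    intro he
    rw [← hx] at he
    exact hne (MulAction.injective g he)
  have n2 : g • y ≠ (g * h) • x := by
    intro he
    rw [mul_smul] at he
    have := MulAction.injective g he
    rw [← hy] at this
    exact hne (MulAction.injective h this.symm)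
  have c1 : Btw T y (g • y) ((g * h) • x) := btw_chain hT b1 b3 n1
  have c2 : Btw T y ((g * h) • x) ((g * h) • g • y) := btw_chain hT c1 b4 n2
  have c3 : Btw T y (g • y) ((g * h) • g • y) := (btw_trans_right hT c2 c1).1
  have e1 : (g * h) • y = g • y := by rw [mul_smul, hy]
  rw [← e1] at c3
  have hny : (g * h) • y ≠ y := by
    intro he
    rw [e1] at he
    rw [he] at b1
    unfold Btw at b1
    rw [T.dist_self] at b1
    have := hT.1.pos_dist_of_ne hne
    omega
  obtain ⟨z, hz⟩ := hgh
  have hpow := dist_pow hT hd hny c3 (2 * T.dist y z + 1)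
  have hzf : (g * h) ^ (2 * T.dist y z + 1) • z = z := by
    generalize 2 * T.dist y z + 1 = n
    induction n with
    | zero => simp
    | succ n ih => rw [pow_succ, mul_smul, hz, ih]
  have t := hT.1.dist_triangle (u := y) (v := z) (w := (g * h) ^ (2 * T.dist y z + 1) • y)
  have e2 : T.dist z ((g * h) ^ (2 * T.dist y z + 1) • y) = T.dist z y := by
    have := hd ((g * h) ^ (2 * T.dist y z + 1)) z y
    rwa [hzf] at this
  rw [e2, hpow, T.dist_comm (u := z)] at t
  have := hT.1.pos_dist_of_ne (Ne.symm hny)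
  have := Nat.le_mul_of_pos_right (2 * T.dist y z + 1) this
  omega

/-- Boundedness of a subgroup commuting with a set having a nonempty bounded fixed set. -/
theorem bounded_of_comm (S : Set G) (K : Subgroup G) (B : ℕ) (hSK : ∀ s ∈ S, ∀ k ∈ K, s * k = k * s)
    (hb : ∀ x ∈ FixSet X S, ∀ y ∈ FixSet X S, T.dist x y ≤ B) {x : X} (hx : x ∈ FixSet X S) :
    ∀ k ∈ K, T.dist x (k • x) ≤ B := by
  intro k hk
  refine hb x hx _ ?_
  intro s hs
  rw [smul_smul, hSK s hs k hk, mul_smul, hx s hs]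

/-- Two commuting infinite complementary subgroups both have fixed points. -/
theorem fixed_of_comm_pair (hT : T.IsTree)
    (hd : ∀ (g : G) x y, T.dist (g • x) (g • y) = T.dist x y)
    (hi : ∀ (g : G) x, T.dist x (g • x) ≠ 1) (k C : ℕ)
    (hk : ∀ x y : X, k ≤ T.dist x y → {g : G | g • x = x ∧ g • y = y}.Finite ∧
      {g : G | g • x = x ∧ g • y = y}.ncard ≤ C)
    (K L : Subgroup G) (hK : Infinite K) (hL : Infinite L)
    (hcomm : ∀ a ∈ K, ∀ l ∈ L, a * l = l * a)
    (hdisj : ∀ a ∈ K, a ∈ L → a = 1) : (FixSet X (L : Set G)).Nonempty := by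
  classical
  have hell : ∀ g ∈ K, ∃ x : X, g • x = x := by
    intro g hg
    refine no_loxodromic hT hd hi k (fun x y h => (hk x y h).1) L hL (hcomm g hg) ?_
    intro l hl l' hl' i j he
    have h1 : l * l'⁻¹ = g ^ (-i) * g ^ j := by
      rw [zpow_neg]
      rw [mul_inv_eq_iff_eq_mul, mul_assoc, ← he]
      group
    have h2 := hdisj _ (K.mul_mem (K.zpow_mem hg (-i)) (K.zpow_mem hg j))
      (h1 ▸ L.mul_mem hl (L.inv_mem hl'))
    rw [h2] at h1
    exact mul_inv_eq_one.1 h1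
  obtain ⟨F, hF⟩ := Infinite.exists_subset_card_eq K (C + 1)
  obtain ⟨x, hx⟩ := helly hT F (fun g => FixSet X {(g : G)}) (fun g _ => cvx_fixSet hT hd _) (by
    intro g _ h _
    obtain ⟨x, h1, h2⟩ := serre hT hd (hell g g.2) (hell h h.2) (hell _ (K.mul_mem g.2 h.2))
    exact ⟨x, by simpa [FixSet] using h1, by simpa [FixSet] using h2⟩)
  let S : Set G := ((fun g : K => (g : G)) '' (F : Set K))
  have hxS : x ∈ FixSet X S := by
    rintro _ ⟨g, hg, rfl⟩
    exact hx g hg _ rfl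
  have hbS : ∀ x ∈ FixSet X S, ∀ y ∈ FixSet X S, T.dist x y ≤ k := by
    intro x hx y hy
    by_contra hlt
    obtain ⟨h1, h2⟩ := hk x y (by omega)
    have h3 : S ⊆ {g : G | g • x = x ∧ g • y = y} := fun s hs => ⟨hx s hs, hy s hs⟩
    have h4 := Set.ncard_le_ncard h3 h1
    have h5 : S.ncard = C + 1 := by
      rw [Set.ncard_image_of_injective _ Subtype.val_injective, Set.ncard_coe_finset, hF]
    omega
  have := bounded_of_comm S L k (by
    rintro _ ⟨g, hg, rfl⟩ l hl
    exact hcomm g g.2 l hl) hbS hxS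
  obtain ⟨y, hy⟩ := fixed_of_bounded hT hd hi L x k this
  exact ⟨y, hy⟩

theorem bounded_fixSet (k : ℕ)
    (hk : ∀ x y : X, k ≤ T.dist x y → {g : G | g • x = x ∧ g • y = y}.Finite)
    (L : Subgroup G) (hL : Infinite L) :
    ∀ x ∈ FixSet X (L : Set G), ∀ y ∈ FixSet X (L : Set G), T.dist x y ≤ k := by
  intro x hx y hy
  by_contra hlt
  have h1 := hk x y (by omega)
  have h2 : (L : Set G) ⊆ {g : G | g • x = x ∧ g • y = y} := fun s hs => ⟨hx s hs, hy s hs⟩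
  have h3 := h1.subset h2
  exact hL.not_finite h3

/-- The main elliptic statement: a family of infinite subgroups indexed by a finite graph of
diameter at most two, commuting along edges, has a common fixed point. -/
theorem fixed_of_diam_le_two (hT : T.IsTree)
    (hd : ∀ (g : G) x y, T.dist (g • x) (g • y) = T.dist x y)
    (hi : ∀ (g : G) x, T.dist x (g • x) ≠ 1) (k C : ℕ)
    (hk : ∀ x y : X, k ≤ T.dist x y → {g : G | g • x = x ∧ g • y = y}.Finite ∧
      {g : G | g • x = x ∧ g • y = y}.ncard ≤ C)
    {V : Type*} [Fintype V] (Γ : SimpleGraph V) (K : V → Subgroup G) (hK : ∀ v, Infinite (K v))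
    (hcomm : ∀ u v, Γ.Adj u v → ∀ a ∈ K u, ∀ b ∈ K v, a * b = b * a)
    (hdisj : ∀ u v, Γ.Adj u v → ∀ a ∈ K u, a ∈ K v → a = 1)
    (hnb : ∀ u, ∃ v, Γ.Adj u v)
    (hdiam : ∀ u v, u = v ∨ Γ.Adj u v ∨ ∃ w, Γ.Adj u w ∧ Γ.Adj w v) :
    ∃ x : X, ∀ v, ∀ a ∈ K v, a • x = x := by
  have hfix : ∀ v, (FixSet X (K v : Set G)).Nonempty := by
    intro v
    obtain ⟨u, hu⟩ := hnb v
    exact fixed_of_comm_pair hT hd hi k C hk (K u) (K v) (hK u) (hK v) (hcomm u v hu.symm)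
      (hdisj u v hu.symm)
  have hbd := fun v => bounded_fixSet k (fun x y h => (hk x y h).1) (K v) (hK v)
  obtain ⟨x, hx⟩ := helly hT Finset.univ (fun v => FixSet X (K v : Set G))
    (fun v _ => cvx_fixSet hT hd _) (by
      intro u _ v _
      rcases hdiam u v with rfl | h | ⟨w, hw1, hw2⟩
      · simpa using hfix u
      · obtain ⟨x, hx⟩ := hfix v
        have hb := bounded_of_comm (K v : Set G) (K u) k
          (fun s hs a ha => hcomm v u h.symm s hs a ha) (hbd v) hx
        have hb2 : ∀ a ∈ K u ⊔ K v, T.dist x (a • x) ≤ k := by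
          intro a ha
          have hset : ∀ a ∈ K u ⊔ K v, ∃ b ∈ K u, a • x = b • x := by
            intro a ha
            have hprod : ∃ b ∈ K u, ∃ c ∈ K v, a = b * c := by
              rw [Subgroup.sup_eq_closure] at ha
              induction ha using Subgroup.closure_induction with
              | mem a ha =>
                rcases ha with ha | ha
                · exact ⟨a, ha, 1, one_mem _, by simp⟩
                · exact ⟨1, one_mem _, a, ha, by simp⟩
              | one => exact ⟨1, one_mem _, 1, one_mem _, by simp⟩
              | mul a a' _ _ iha iha' =>
                obtain ⟨b, hb, c, hc, rfl⟩ := iha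
                obtain ⟨b', hb', c', hc', rfl⟩ := iha'
                refine ⟨b * b', mul_mem hb hb', c * c', mul_mem hc hc', ?_⟩
                have := hcomm u v h b' hb' c hc
                rw [mul_assoc, ← mul_assoc c, ← this]
                simp only [mul_assoc]
              | inv a _ iha =>
                obtain ⟨b, hb, c, hc, rfl⟩ := iha
                refine ⟨b⁻¹, inv_mem hb, c⁻¹, inv_mem hc, ?_⟩
                rw [hcomm u v h b hb c hc, mul_inv_rev]
            obtain ⟨b, hb, c, hc, rfl⟩ := hprod
            exact ⟨b, hb, by rw [mul_smul, hx c hc]⟩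
          obtain ⟨b, hb', he⟩ := hset a ha
          rw [he]
          exact hb b hb'
        obtain ⟨y, hy⟩ := fixed_of_bounded hT hd hi _ x k hb2
        exact ⟨y, fun a ha => hy a (Subgroup.mem_sup_left ha),
          fun a ha => hy a (Subgroup.mem_sup_right ha)⟩
      · obtain ⟨x, hx⟩ := hfix w
        have hcc : ∀ s ∈ (K w : Set G), ∀ a ∈ K u ⊔ K v, s * a = a * s := by
          intro s hs a ha
          have : K u ⊔ K v ≤ Subgroup.centralizer {s} := by
            apply sup_le
            · intro a ha
              rw [Subgroup.mem_centralizer_singleton_iff]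
              exact (hcomm u w hw1 a ha s hs)
            · intro a ha
              rw [Subgroup.mem_centralizer_singleton_iff]
              exact (hcomm w v hw2 s hs a ha).symm
          have := this ha
          rw [Subgroup.mem_centralizer_singleton_iff] at this
          exact this.symm
        have hb := bounded_of_comm (K w : Set G) (K u ⊔ K v) k hcc (hbd w) hx
        obtain ⟨y, hy⟩ := fixed_of_bounded hT hd hi _ x k hb
        exact ⟨y, fun a ha => hy a (Subgroup.mem_sup_left ha),
          fun a ha => hy a (Subgroup.mem_sup_right ha)⟩)
  exact ⟨x, fun v a ha => hx v (Finset.mem_univ v) a ha⟩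

end Action

end GPArb

namespace GPArb

section Subdivision

variable {V : Type*} (T : SimpleGraph V)

/-- The barycentric subdivision of a graph. -/
def subdiv : SimpleGraph (V ⊕ T.edgeSet) where
  Adj p q := match p, q with
    | .inl x, .inr e => x ∈ e.1
    | .inr e, .inl x => x ∈ e.1
    | _, _ => False
  symm := ⟨by rintro (x | e) (y | f) h <;> simpa using h⟩
  loopless := ⟨by rintro (x | e) h <;> simpa using h⟩

@[simp] theorem subdiv_lr (x : V) (e : T.edgeSet) :
    (subdiv T).Adj (.inl x) (.inr e) ↔ x ∈ e.1 := Iff.rfl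
@[simp] theorem subdiv_rl (x : V) (e : T.edgeSet) :
    (subdiv T).Adj (.inr e) (.inl x) ↔ x ∈ e.1 := Iff.rfl
@[simp] theorem subdiv_ll (x y : V) : ¬ (subdiv T).Adj (.inl x) (.inl y) := fun h => h
@[simp] theorem subdiv_rr (x y : T.edgeSet) : ¬ (subdiv T).Adj (.inr x) (.inr y) := fun h => h

variable {T}

theorem subdiv_reach {x y : V} (h : T.Reachable x y) :
    (subdiv T).Reachable (.inl x) (.inl y) := by
  obtain ⟨p⟩ := h
  induction p with
  | nil => exact SimpleGraph.Reachable.refl _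
  | cons hadj p ih =>
    rename_i u v w
    refine SimpleGraph.Reachable.trans ?_ ih
    have h1 : (subdiv T).Adj (.inl u) (.inr ⟨s(u, v), hadj⟩) := by simp
    have h2 : (subdiv T).Adj (.inr ⟨s(u, v), hadj⟩) (.inl v) := by simp
    exact h1.reachable.trans h2.reachable

theorem subdiv_connected (hT : T.Connected) : (subdiv T).Connected := by
  obtain ⟨r⟩ := hT.nonempty
  have key : ∀ p, (subdiv T).Reachable (.inl r) p := by
    rintro (x | ⟨e, he⟩)
    · exact subdiv_reach (hT.preconnected r x)
    · induction e using Sym2.ind with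
      | _ x y =>
        refine (subdiv_reach (hT.preconnected r x)).trans ?_
        exact SimpleGraph.Adj.reachable (by simp)
  exact (SimpleGraph.connected_iff_exists_forall_reachable _).2 ⟨_, key⟩

theorem subdiv_isTree (hT : T.IsTree) : (subdiv T).IsTree := by
  obtain ⟨r⟩ := hT.1.nonempty
  refine isTree_of_rank (subdiv_connected hT.1)
    (Sum.elim (fun x => 2 * T.dist r x) (fun e => 2 * (e.1.map (T.dist r)).inf + 1)) ?_
  rintro (v | ⟨e, he⟩) (u | ⟨f, hf⟩) (u' | ⟨f', hf'⟩) h1 h2 h3 h4 <;> simp at h1 h2 h3 h4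
  · obtain ⟨y, rfl⟩ := h1
    obtain ⟨y', rfl⟩ := h2
    simp only [Sym2.map_mk, Sym2.inf_mk] at h3 h4
    have hf1 : T.Adj v y := hf
    have hf2 : T.Adj v y' := hf'
    have d1 := SimpleGraph.dist_eq_one_iff_adj.2 hf1
    have d2 := SimpleGraph.dist_eq_one_iff_adj.2 hf2
    have c1 := T.dist_comm (u := v) (v := y)
    have c2 := T.dist_comm (u := v) (v := y')
    have : y = y' := by
      apply btw_unique hT (x := r) (y := v)
      all_goals
        rcases dist_adj hT d1 r with h | h <;> rcases dist_adj hT d2 r with h' | h' <;>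
          (try unfold Btw) <;> omega
    subst this
    rfl
  · induction e using Sym2.ind with
    | _ x y =>
      have hf1 : T.Adj x y := he
      have d1 := SimpleGraph.dist_eq_one_iff_adj.2 hf1
      simp only [Sym2.map_mk, Sym2.inf_mk, Sym2.mem_iff] at h1 h2 h3 h4
      rcases h1 with rfl | rfl <;> rcases h2 with rfl | rfl <;> try rfl
      all_goals
        exfalso
        rcases dist_adj hT d1 r with h | h <;> omega

end Subdivision

section Transfer

variable {G : Type*} [Group G] (A : TreeAction G)

/-- The action of the group on the vertices of the tree. -/
@[reducible] def treeMulAction : MulAction G A.V where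
  smul g x := A.act g x
  one_smul x := by
    change A.act 1 x = x
    rw [map_one]; rfl
  mul_smul g h x := by
    change A.act (g * h) x = A.act g (A.act h x)
    rw [map_mul]; rfl

/-- The action on the subdivision. -/
@[reducible] def subdivMulAction : MulAction G (A.V ⊕ A.T.edgeSet) where
  smul g p := p.map (A.act g) (A.act g).mapEdgeSet
  one_smul p := by
    change p.map (A.act 1) (A.act 1).mapEdgeSet = p
    rw [map_one]
    rcases p with x | ⟨e, he⟩
    · rfl
    · induction e using Sym2.ind with
      | _ x y => rfl
  mul_smul g h p := by
    change p.map (A.act (g * h)) (A.act (g * h)).mapEdgeSet =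
      (p.map (A.act h) (A.act h).mapEdgeSet).map (A.act g) (A.act g).mapEdgeSet
    rw [map_mul]
    rcases p with x | ⟨e, he⟩
    · rfl
    · induction e using Sym2.ind with
      | _ x y => rfl

theorem dist_of_adj {X : Type*} {T : SimpleGraph X} {G : Type*} [Group G] [MulAction G X]
    (hc : T.Connected) (h : ∀ (g : G) x y, T.Adj x y → T.Adj (g • x) (g • y)) (g : G) (x y : X) :
    T.dist (g • x) (g • y) = T.dist x y := by
  have key : ∀ (g : G) x y, T.dist (g • x) (g • y) ≤ T.dist x y := by
    intro g x y
    have := dist_map_le hc hc (fun x => g • x) 1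
      (fun x y hxy => (SimpleGraph.dist_eq_one_iff_adj.2 (h g x y hxy)).le) x y
    simpa using this
  refine le_antisymm (key g x y) ?_
  simpa using key g⁻¹ (g • x) (g • y)

/-- Passing to the subdivision, acylindricity is retained, there are no inversions, and a
global fixed point implies bounded orbits. -/
theorem exists_good_action (hA : A.Acylindrical) (hb : ¬ A.BoundedOrbits) :
    ∃ (X : Type) (T : SimpleGraph X) (_ : MulAction G X), T.IsTree ∧
      (∀ (g : G) x y, T.dist (g • x) (g • y) = T.dist x y) ∧
      (∀ (g : G) x, T.dist x (g • x) ≠ 1) ∧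
      (∃ k C : ℕ, ∀ x y : X, k ≤ T.dist x y → {g : G | g • x = x ∧ g • y = y}.Finite ∧
      {g : G | g • x = x ∧ g • y = y}.ncard ≤ C) ∧ ¬ ∃ x : X, ∀ g : G, g • x = x := by
  letI := subdivMulAction A
  have hT := A.isTree
  have hS := subdiv_isTree hT
  have hsl : ∀ (g : G) (x : A.V), g • (Sum.inl x : A.V ⊕ A.T.edgeSet) = .inl (A.act g x) :=
    fun g x => rfl
  have hsr : ∀ (g : G) (e : A.T.edgeSet), g • (Sum.inr e : A.V ⊕ A.T.edgeSet) =
    .inr ((A.act g).mapEdgeSet e) := fun g x => rfl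
  have hd : ∀ (g : G) (x y : A.V ⊕ A.T.edgeSet),
      (subdiv A.T).dist (g • x) (g • y) = (subdiv A.T).dist x y := by
    refine dist_of_adj hS.1 ?_
    have hm : ∀ (g : G) (x : A.V) (e : A.T.edgeSet), x ∈ e.1 →
        A.act g x ∈ ((A.act g).mapEdgeSet e).1 := by
      rintro g x ⟨e, he⟩ hx
      exact Sym2.mem_map.2 ⟨x, hx, rfl⟩
    rintro g (x | e) (y | f) h
    · exact absurd h (by simp)
    · exact hm g x f h
    · exact hm g y e h
    · exact absurd h (by simp)
  refine ⟨_, subdiv A.T, inferInstance, hS, hd, ?_, ?_, ?_⟩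
  · rintro g (x | e) h
    · rw [SimpleGraph.dist_eq_one_iff_adj] at h
      exact h
    · rw [SimpleGraph.dist_eq_one_iff_adj] at h
      exact h
  · obtain ⟨k, C, _, hk⟩ := hA
    refine ⟨2 * k + 2, C, fun p q hpq => ?_⟩
    -- every point has a vertex near it
    have near : ∀ p q : A.V ⊕ A.T.edgeSet, 1 ≤ (subdiv A.T).dist p q →
        ∃ x : A.V, Btw (subdiv A.T) p (.inl x) q ∧ (subdiv A.T).dist p (.inl x) ≤ 1 := by
      rintro (x | e) q h
      · exact ⟨x, btw_left hS.1 _ _, by simp⟩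
      · obtain ⟨z, hz, hz1⟩ := exists_btw hS.1 (.inr e) q h
        rcases z with x | f
        · exact ⟨x, hz, hz1.le⟩
        · rw [SimpleGraph.dist_eq_one_iff_adj] at hz1
          exact absurd hz1 (by simp)
    obtain ⟨x, hx, hx1⟩ := near p q (by omega)
    obtain ⟨y, hy, hy1⟩ := near q (.inl x) (by
      rw [SimpleGraph.dist_comm]
      unfold Btw at hx
      omega)
    have hxy : 2 * k ≤ (subdiv A.T).dist (.inl x) (.inl y) := by
      have c1 := (subdiv A.T).dist_comm (u := q) (v := .inl x)
      have c2 := (subdiv A.T).dist_comm (u := .inl y) (v := .inl x)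
      unfold Btw at hx hy
      omega
    have h2 := dist_map_le hT.1 hS.1 (fun x => (Sum.inl x : A.V ⊕ A.T.edgeSet)) 2 (by
      intro x y hadj
      have h1 : (subdiv A.T).Adj (.inl x) (.inr ⟨s(x, y), hadj⟩) := by simp
      have h2 : (subdiv A.T).Adj (.inr ⟨s(x, y), hadj⟩) (.inl y) := by simp
      exact (subdiv A.T).dist_le (.cons h1 (.cons h2 .nil))) x y
    obtain ⟨hf, hc⟩ := hk x y (by omega)
    have hsub : {g : G | g • p = p ∧ g • q = q} ⊆ {g : G | A.act g x = x ∧ A.act g y = y} := by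
      rintro g ⟨hgp, hgq⟩
      have e1 := fix_btw hS hd hgp hgq hx
      have e2 := fix_btw hS hd hgq e1 hy
      exact ⟨Sum.inl_injective e1, Sum.inl_injective e2⟩
    exact ⟨hf.subset hsub, (Set.ncard_le_ncard hsub hf).trans hc⟩
  · rintro ⟨p, hp⟩
    apply hb
    rcases p with x | ⟨e, he⟩
    · refine ⟨x, 0, fun g => ?_⟩
      have := Sum.inl_injective (hp g)
      rw [this]
      simp
    · induction e using Sym2.ind with
      | _ x y =>
        refine ⟨x, 1, fun g => ?_⟩
        have h1 := Sum.inr_injective (hp g)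
        have h1 : s(A.act g x, A.act g y) = s(x, y) := congrArg Subtype.val h1
        have h2 : A.act g x ∈ s(x, y) := by rw [← h1]; simp
        rcases Sym2.mem_iff.1 h2 with h | h <;> rw [h]
        · simp
        · exact (SimpleGraph.dist_eq_one_iff_adj.2 he).le

end Transfer

section GP

variable {V : Type} {Γ : SimpleGraph V} {Gv : V → Type} [∀ v, Group (Gv v)]

theorem gp_comm {u v : V} (h : Γ.Adj u v) (a : Gv u) (b : Gv v) :
    GraphProduct.of Γ Gv u a * GraphProduct.of Γ Gv v b =
      GraphProduct.of Γ Gv v b * GraphProduct.of Γ Gv u a := by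
  have : GraphProduct.of Γ Gv u a * GraphProduct.of Γ Gv v b * (GraphProduct.of Γ Gv u a)⁻¹ *
      (GraphProduct.of Γ Gv v b)⁻¹ = 1 := by
    refine (QuotientGroup.eq_one_iff (N := Subgroup.normalClosure (graphProductRels Γ Gv))
      (Monoid.CoprodI.of a * Monoid.CoprodI.of b *
      (Monoid.CoprodI.of a)⁻¹ * (Monoid.CoprodI.of b)⁻¹)).2 ?_
    exact Subgroup.subset_normalClosure ⟨u, v, h, a, b, rfl⟩
  rw [mul_inv_eq_one, mul_inv_eq_iff_eq_mul] at this
  exact this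

/-- The universal property of the graph product. -/
def gpLift {H : Type*} [Group H] (f : ∀ v, Gv v →* H)
    (hf : ∀ u v, Γ.Adj u v → ∀ a b, f u a * f v b = f v b * f u a) : GraphProduct Γ Gv →* H :=
  QuotientGroup.lift _ (Monoid.CoprodI.lift f) (by
    have : Subgroup.normalClosure (graphProductRels Γ Gv) ≤ (Monoid.CoprodI.lift f).ker := by
      apply Subgroup.normalClosure_le_normal
      rintro _ ⟨u, v, h, a, b, rfl⟩
      rw [SetLike.mem_coe, MonoidHom.mem_ker]
      simp only [map_mul, map_inv, Monoid.CoprodI.lift_of]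
      rw [hf u v h]
      group
    exact fun x hx => this hx)

@[simp] theorem gpLift_of {H : Type*} [Group H] (f : ∀ v, Gv v →* H)
    (hf : ∀ u v, Γ.Adj u v → ∀ a b, f u a * f v b = f v b * f u a) (v : V) (a : Gv v) :
    gpLift f hf (GraphProduct.of Γ Gv v a) = f v a :=
  Monoid.CoprodI.lift_of f a

theorem gp_induction {P : GraphProduct Γ Gv → Prop} (h1 : P 1)
    (hof : ∀ v a, P (GraphProduct.of Γ Gv v a)) (hmul : ∀ x y, P x → P y → P (x * y)) :
    ∀ x, P x := by
  intro x
  obtain ⟨w, rfl⟩ := QuotientGroup.mk_surjective x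
  induction w using Monoid.CoprodI.induction_on with
  | one => exact h1
  | of v a => exact hof v a
  | mul x y hx hy => exact hmul _ _ hx hy

/-- The retraction of the graph product to the full subgroup on `S`. -/
noncomputable def gpRetr (S : Set V) : GraphProduct Γ Gv →* GraphProduct Γ Gv := by
  classical
  exact gpLift (fun v => if v ∈ S then GraphProduct.of Γ Gv v else 1) (by
    intro u v h a b
    split_ifs <;> simp [gp_comm h])

theorem gpRetr_of (S : Set V) (v : V) (a : Gv v) (hv : v ∈ S) :
    gpRetr S (GraphProduct.of Γ Gv v a) = GraphProduct.of Γ Gv v a := by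
  simp [gpRetr, hv]

theorem gpRetr_of' (S : Set V) (v : V) (a : Gv v) (hv : v ∉ S) :
    gpRetr S (GraphProduct.of Γ Gv v a) = 1 := by
  simp [gpRetr, hv]

theorem gpRetr_full {S : Set V} {x : GraphProduct Γ Gv} (hx : x ∈ GraphProduct.full Γ Gv S) :
    gpRetr S x = x := by
  have : GraphProduct.full Γ Gv S ≤ MonoidHom.eqLocus (gpRetr S) (MonoidHom.id _) := by
    refine iSup₂_le fun v hv => ?_
    rintro _ ⟨a, rfl⟩
    exact gpRetr_of S v a hv
  exact this hx

theorem gpRetr_full_disj {S S' : Set V} (hd : Disjoint S S') {x : GraphProduct Γ Gv}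
    (hx : x ∈ GraphProduct.full Γ Gv S') : gpRetr S x = 1 := by
  have : GraphProduct.full Γ Gv S' ≤ (gpRetr S).ker := by
    refine iSup₂_le fun v hv => ?_
    rintro _ ⟨a, rfl⟩
    exact gpRetr_of' S v a (fun h => hd.ne_of_mem h hv rfl)
  exact this hx

theorem gp_of_injective (v : V) : Function.Injective (GraphProduct.of Γ Gv v) := by
  classical
  let f0 : ∀ u, Gv u →* Gv v := fun u =>
    if h : u = v then (MulEquiv.cast h).toMonoidHom else 1
  have h0 : ∀ u v, Γ.Adj u v → ∀ a b, f0 u a * f0 v b = f0 v b * f0 u a := by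
    intro x y hxy a b
    by_cases hx : x = v
    · have hy : y ≠ v := fun hy => hxy.ne (hx.trans hy.symm)
      simp [f0, hy]
    · simp [f0, hx]
  have hf : ∀ a, gpLift f0 h0 (GraphProduct.of Γ Gv v a) = a := by
    intro a
    rw [gpLift_of]
    simp [f0]
  exact Function.LeftInverse.injective hf

theorem gp_disj {u v : V} (h : u ≠ v) {x : GraphProduct Γ Gv}
    (hu : x ∈ (GraphProduct.of Γ Gv u).range) (hv : x ∈ (GraphProduct.of Γ Gv v).range) :
    x = 1 := by
  obtain ⟨a, rfl⟩ := hu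
  obtain ⟨b, hb⟩ := hv
  rw [← gpRetr_of {u} u a rfl, ← hb, gpRetr_of' {u} v b (by simpa using h.symm)]

theorem gp_forward [Fintype V] (hV : Nontrivial V) (hinf : ∀ v, Infinite (Gv v))
    (h : AcylindricallyArboreal (GraphProduct Γ Gv)) : Γ.diamAtLeast 3 := by
  by_contra hdiam
  have hreach : ∀ u v, Γ.Reachable u v := by
    intro u v
    by_contra hr
    refine hdiam ⟨u, v, ?_, Or.inl hr⟩
    rintro rfl
    exact hr (SimpleGraph.Reachable.refl _)
  have hdist : ∀ u v, Γ.dist u v ≤ 2 := by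
    intro u v
    by_contra hr
    refine hdiam ⟨u, v, ?_, Or.inr (by omega)⟩
    rintro rfl
    simp at hr
  obtain ⟨A, hA, hne⟩ := h
  obtain ⟨X, T, _, hT, hd, hi, ⟨k, C, hk⟩, hno⟩ := exists_good_action A hA hne.1
  have hcn : Γ.Connected := ⟨fun u v => hreach u v⟩
  obtain ⟨x, hx⟩ := fixed_of_diam_le_two hT hd hi k C hk Γ
    (fun v => (GraphProduct.of Γ Gv v).range)
    (fun v => Infinite.of_injective (GraphProduct.of Γ Gv v).rangeRestrict (by
      intro a b hab
      exact gp_of_injective v (congrArg Subtype.val hab)))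
    (by
      rintro u v h _ ⟨a, rfl⟩ _ ⟨b, rfl⟩
      exact gp_comm h a b)
    (fun u v h a ha hb => gp_disj h.ne ha hb)
    (by
      intro u
      obtain ⟨v, hv⟩ := exists_ne u
      obtain ⟨w, hw, hw1⟩ := exists_btw hcn u v (i := 1) (hcn.pos_dist_of_ne hv.symm)
      exact ⟨w, SimpleGraph.dist_eq_one_iff_adj.1 hw1⟩)
    (by
      intro u v
      have h2 := hdist u v
      by_cases h0 : Γ.dist u v = 0
      · exact Or.inl (hcn.dist_eq_zero_iff.1 h0)
      obtain ⟨w, hw, hw1⟩ := exists_btw hcn u v (i := 1) (by omega)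
      have hw1' := SimpleGraph.dist_eq_one_iff_adj.1 hw1
      unfold Btw at hw
      by_cases h1 : Γ.dist u v = 1
      · exact Or.inr (Or.inl (SimpleGraph.dist_eq_one_iff_adj.1 h1))
      · exact Or.inr (Or.inr ⟨w, hw1', SimpleGraph.dist_eq_one_iff_adj.1 (by omega)⟩))
  apply hno
  refine ⟨x, fun g => ?_⟩
  refine gp_induction (P := fun g => g • x = x) (by simp) ?_ ?_ g
  · intro v a
    exact hx v _ ⟨a, rfl⟩
  · intro a b ha hb
    rw [mul_smul, hb, ha]

end GP

end GPArb

namespace GPArb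

section CosetGraph

variable {G : Type*} [Group G] {J : Type*} (S : J → Subgroup G)

/-- The coset graph of a family of subgroups. -/
def cosetGraph : SimpleGraph (Σ j, G ⧸ S j) where
  Adj p q := p.1 ≠ q.1 ∧ ∃ g : G, p.2 = QuotientGroup.mk g ∧ q.2 = QuotientGroup.mk g
  symm := ⟨fun _ _ h => ⟨h.1.symm, h.2.imp fun _ hg => ⟨hg.2, hg.1⟩⟩⟩
  loopless := ⟨fun _ h => h.1 rfl⟩

variable {S}

theorem cosetGraph_smul (g : G) (x y : Σ j, G ⧸ S j) (h : (cosetGraph S).Adj x y) :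
    (cosetGraph S).Adj (g • x) (g • y) := by
  obtain ⟨i, x⟩ := x
  obtain ⟨j, y⟩ := y
  obtain ⟨h1, q, h2, h3⟩ := h
  dsimp only at h1 h2 h3
  subst h2 h3
  exact ⟨h1, g * q, rfl, rfl⟩

theorem cosetGraph_adj_mk {i j : J} (h : i ≠ j) (g : G) :
    (cosetGraph S).Adj ⟨i, QuotientGroup.mk g⟩ ⟨j, QuotientGroup.mk g⟩ :=
  ⟨h, g, rfl, rfl⟩

theorem cosetGraph_connected [Nonempty J] (hgen : ⨆ j, S j = ⊤) : (cosetGraph S).Connected := by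
  have hr : ∀ (i j : J) (g : G), (cosetGraph S).Reachable ⟨i, QuotientGroup.mk g⟩
      ⟨j, QuotientGroup.mk g⟩ := by
    intro i j g
    by_cases h : i = j
    · subst h; exact SimpleGraph.Reachable.refl _
    · exact (cosetGraph_adj_mk h g).reachable
  have key : ∀ n : G, ∀ (i : J) (m : G), (cosetGraph S).Reachable ⟨i, QuotientGroup.mk m⟩
      ⟨i, QuotientGroup.mk (m * n)⟩ := by
    intro n
    have hn : n ∈ ⨆ j, S j := by rw [hgen]; trivial
    refine Subgroup.iSup_induction S (C := fun n => ∀ (i : J) (m : G),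
      (cosetGraph S).Reachable ⟨i, QuotientGroup.mk m⟩ ⟨i, QuotientGroup.mk (m * n)⟩) hn ?_ ?_ ?_
    · intro j x hx i m
      refine (hr i j m).trans (SimpleGraph.Reachable.trans ?_ (hr j i (m * x)))
      have : (QuotientGroup.mk (m * x) : G ⧸ S j) = QuotientGroup.mk m :=
        QuotientGroup.mk_mul_of_mem m hx
      rw [this]
    · intro i m; rw [mul_one]
    · intro x y hx hy i m
      rw [← mul_assoc]
      exact (hx i m).trans (hy i (m * x))
  have : Nonempty (Σ j, G ⧸ S j) := ⟨⟨Classical.arbitrary J, QuotientGroup.mk 1⟩⟩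
  refine ⟨?_⟩
  rintro ⟨i, x⟩ ⟨j, y⟩
  obtain ⟨x, rfl⟩ := QuotientGroup.mk_surjective x
  obtain ⟨y, rfl⟩ := QuotientGroup.mk_surjective y
  have := key (x⁻¹ * y) i x
  rw [mul_inv_cancel_left] at this
  exact this.trans (hr i j y)

theorem cosetGraph_three (hJ : ∀ i j k : J, i ≠ k → j ≠ k → i = j)
    (hT : (cosetGraph S).IsTree) (g : G) (x y : Σ j, G ⧸ S j) (hx : g • x = x)
    (hy : g • y = y) (h3 : 3 ≤ (cosetGraph S).dist x y) :
    ∃ (i j : J) (q s s' : G), i ≠ j ∧ q⁻¹ * g * q ∈ S i ∧ q⁻¹ * g * q ∈ S j ∧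
      s ∈ S i ∧ s ∉ S j ∧ s' ∈ S j ∧ s' ∉ S i ∧ s⁻¹ * (q⁻¹ * g * q) * s ∈ S j ∧
      s'⁻¹ * (q⁻¹ * g * q) * s' ∈ S i := by
  have hd := dist_of_adj (G := G) hT.connected cosetGraph_smul
  obtain ⟨v1, hb1, hd1⟩ := exists_btw hT.connected x y (i := 1) (by omega)
  have hb1' := hb1
  unfold Btw at hb1'
  obtain ⟨v2, hb2, hd2⟩ := exists_btw hT.connected v1 y (i := 1) (by omega)
  have hb2' := hb2
  unfold Btw at hb2'
  obtain ⟨v3, hb3, hd3⟩ := exists_btw hT.connected v2 y (i := 1) (by omega)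
  have hb3' := hb3
  unfold Btw at hb3'
  have f1 := fix_btw hT hd hx hy hb1
  have f2 := fix_btw hT hd f1 hy hb2
  have f3 := fix_btw hT hd f2 hy hb3
  have n1 : x ≠ v2 := by rintro rfl; omega
  have n2 : v1 ≠ v3 := by rintro rfl; omega
  have a1 := SimpleGraph.dist_eq_one_iff_adj.1 hd1
  have a2 := SimpleGraph.dist_eq_one_iff_adj.1 hd2
  have a3 := SimpleGraph.dist_eq_one_iff_adj.1 hd3
  clear hd1 hd2 hd3 hb1 hb2 hb3 hb1' hb2' hb3' h3 hy
  obtain ⟨i0, x⟩ := x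
  obtain ⟨i, v1⟩ := v1
  obtain ⟨j, v2⟩ := v2
  obtain ⟨j3, v3⟩ := v3
  obtain ⟨a1, p, p1, p2⟩ := a1
  obtain ⟨a2, q, q1, q2⟩ := a2
  obtain ⟨a3, r, r1, r2⟩ := a3
  dsimp only at a1 a2 a3 p1 p2 q1 q2 r1 r2
  have e1 := hJ i0 j i a1 a2.symm
  have e2 := hJ i j3 j a2 a3.symm
  subst e1 e2 p1 q1 q2 r2
  have fixm : ∀ {k : J} {p : G}, g • (⟨k, QuotientGroup.mk p⟩ : Σ j, G ⧸ S j) =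
      ⟨k, QuotientGroup.mk p⟩ → p⁻¹ * g * p ∈ S k := by
    intro k p h
    have h1 : (QuotientGroup.mk (g * p) : G ⧸ S k) = QuotientGroup.mk p := by
      simpa using h
    have := QuotientGroup.eq.1 h1.symm
    rwa [← mul_assoc] at this
  have hp := QuotientGroup.eq.1 p2
  have hr := QuotientGroup.eq.1 r1
  refine ⟨i, i0, q, q⁻¹ * p, q⁻¹ * r, a2, fixm f1, fixm f2, hp, ?_, hr, ?_, ?_, ?_⟩
  · intro h
    exact n1 (by rw [QuotientGroup.eq.2 h])
  · intro h
    exact n2 (by rw [QuotientGroup.eq.2 h])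
  · have := fixm hx
    group at this ⊢
    exact this
  · have := fixm f3
    group at this ⊢
    exact this

end CosetGraph

end GPArb

namespace GPArb

open Monoid

section Aut

/-- Build an action by automorphisms from a family of endomorphisms. -/
def mkAut {H N : Type*} [Group H] [Group N] (f : H → (N →* N)) (h1 : ∀ n, f 1 n = n)
    (hm : ∀ g h n, f (g * h) n = f g (f h n)) : H →* MulAut N where
  toFun h :=
    { toFun := f h
      invFun := f h⁻¹
      left_inv := fun n => by rw [← hm, inv_mul_cancel, h1]
      right_inv := fun n => by rw [← hm, mul_inv_cancel, h1]
      map_mul' := (f h).map_mul }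
  map_one' := by ext n; exact h1 n
  map_mul' g h := by ext n; exact hm g h n

@[simp] theorem mkAut_apply {H N : Type*} [Group H] [Group N] (f : H → (N →* N))
    (h1 : ∀ n, f 1 n = n) (hm : ∀ g h n, f (g * h) n = f g (f h n)) (h : H) (n : N) :
    mkAut f h1 hm h n = f h n := rfl

variable {H : Type*} [Group H] {J : Type*} {K : J → Type*} [∀ j, Group (K j)]

/-- The factorwise action on a free product. -/
def thetaAut (α : ∀ j, H →* MulAut (K j)) : H →* MulAut (CoprodI K) :=
  mkAut (fun h => CoprodI.lift (fun j => (CoprodI.of (i := j)).comp (α j h).toMonoidHom))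
    (by
      intro n
      induction n using CoprodI.induction_on with
      | one => simp
      | of i m => simp
      | mul x y hx hy => rw [map_mul, hx, hy])
    (by
      intro g h n
      induction n using CoprodI.induction_on with
      | one => simp
      | of i m => simp
      | mul x y hx hy => rw [map_mul, hx, hy, map_mul, map_mul])

@[simp] theorem thetaAut_of (α : ∀ j, H →* MulAut (K j)) (h : H) (j : J) (k : K j) :
    thetaAut α h (CoprodI.of k) = CoprodI.of (α j h k) := by
  simp [thetaAut]

end Aut

theorem coprodI_disj {J : Type*} {K : J → Type*} [∀ j, Group (K j)] {i j : J} (h : i ≠ j)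
    {k : K i} {l : K j} (e : (CoprodI.of k : CoprodI K) = CoprodI.of l) : k = 1 := by
  classical
  have := congrArg (CoprodI.lift (Pi.mulSingle i (MonoidHom.id (K i)))) e
  simpa [h.symm] using this

section Crossed

variable {G H : Type*} [Group G] [Group H] {J : Type*} {K : J → Type*} [∀ j, Group (K j)]
  {α : ∀ j, H →* MulAut (K j)} (φ : G →* CoprodI K ⋊[thetaAut α] H)

/-- The vertex stabilisers. -/
def crossS (j : J) : Subgroup G where
  carrier := {g | ∃ k : K j, (φ g).left = CoprodI.of k}
  one_mem' := ⟨1, by simp⟩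
  mul_mem' := by
    rintro g h ⟨k, hk⟩ ⟨l, hl⟩
    exact ⟨k * α j (φ g).right l, by simp [hk, hl]⟩
  inv_mem' := by
    rintro g ⟨k, hk⟩
    exact ⟨α j (φ g).right⁻¹ k⁻¹, by
      rw [map_inv, SemidirectProduct.inv_left, hk, ← map_inv, thetaAut_of]⟩

variable {φ}

theorem mem_crossS {j : J} {g : G} : g ∈ crossS φ j ↔ ∃ k : K j, (φ g).left = CoprodI.of k :=
  Iff.rfl

theorem mem_crossS_of_left_eq {g g' : G} (h : (φ g).left = (φ g').left) (j : J) :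
    g⁻¹ * g' ∈ crossS φ j := by
  refine ⟨1, ?_⟩
  simp only [map_mul, map_inv, SemidirectProduct.mul_left, SemidirectProduct.inv_left,
    SemidirectProduct.inv_right, h]
  rw [← map_inv, ← map_mul]
  simp

theorem left_eq_one {i j : J} (h : i ≠ j) {g : G} (hi : g ∈ crossS φ i) (hj : g ∈ crossS φ j) :
    (φ g).left = 1 := by
  obtain ⟨k, hk⟩ := hi
  obtain ⟨l, hl⟩ := hj
  rw [hk, coprodI_disj h (hk.symm.trans hl), map_one]

theorem fix_of_mem {i j : J} (h : i ≠ j) {g s : G} (hg : (φ g).left = 1)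
    (hs : s ∈ crossS φ i) (hs' : s ∉ crossS φ j) (hc : s⁻¹ * g * s ∈ crossS φ j) :
    ∃ k : K i, k ≠ 1 ∧ α i (φ g).right k = k := by
  obtain ⟨k, hk⟩ := hs
  refine ⟨k, ?_, ?_⟩
  · rintro rfl
    exact hs' ⟨1, by simpa using hk⟩
  · obtain ⟨l, hl⟩ := hc
    have e : (φ (s⁻¹ * g * s)).left =
        thetaAut α (φ s).right⁻¹ (CoprodI.of (k⁻¹ * α i (φ g).right k)) := by
      simp [hg, hk, mul_assoc]
    rw [e, thetaAut_of] at hl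
    have := coprodI_disj h hl
    rw [map_eq_one_iff _ (MulEquiv.injective _)] at this
    exact (inv_mul_eq_one.1 this).symm

open Classical in
/-- The reduced word of the inverse of the free product part. -/
noncomputable def crossW (φ : G →* CoprodI K ⋊[thetaAut α] H) (g : G) : CoprodI.Word K :=
  CoprodI.Word.equiv ((φ g).left)⁻¹

open Classical in
/-- The tail of the word, with the head in factor `j` removed. -/
noncomputable def crossT (φ : G →* CoprodI K ⋊[thetaAut α] H) (j : J) (g : G) : CoprodI.Word K :=
  (CoprodI.Word.equivPair j (crossW φ g)).tail

theorem crossT_congr (j : J) (g s : G) (hs : s ∈ crossS φ j) :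
    crossT φ j (g * s) = crossT φ j g := by
  classical
  obtain ⟨k, hk⟩ := hs
  have : ((φ (g * s)).left)⁻¹ = CoprodI.of (α j (φ g).right k)⁻¹ * ((φ g).left)⁻¹ := by
    simp [hk]
  unfold crossT crossW
  rw [this]
  have e : ∀ (k : K j) (n : CoprodI K), CoprodI.Word.equiv (CoprodI.of k * n) =
    CoprodI.of k • CoprodI.Word.equiv n := fun k n => by
      apply CoprodI.Word.equiv.symm.injective
      rw [Equiv.symm_apply_apply]
      have : CoprodI.Word.prod (CoprodI.of k • CoprodI.Word.equiv n) =
        CoprodI.of k * CoprodI.Word.equiv.symm (CoprodI.Word.equiv n) :=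
        CoprodI.Word.prod_smul _ _
      rw [Equiv.symm_apply_apply] at this
      exact this.symm
  rw [e, CoprodI.Word.equivPair_smul_same]

theorem crossT_cases {i j : J} (h : i ≠ j) (g : G) :
    (crossT φ i g = crossW φ g) ∨ (crossT φ j g = crossW φ g ∧
      (crossT φ i g).toList.length < (crossT φ j g).toList.length) := by
  classical
  by_cases hf : (crossW φ g).fstIdx = some i
  · right
    have hj : crossT φ j g = crossW φ g := by
      unfold crossT
      rw [CoprodI.Word.equivPair_eq_of_fstIdx_ne]
      rw [hf]
      simpa using h
    refine ⟨hj, ?_⟩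
    rw [hj]
    unfold crossT
    generalize crossW φ g = w at *
    have e := (CoprodI.Word.equivPair i).symm_apply_apply w
    rw [CoprodI.Word.equivPair_symm] at e
    have ht := (CoprodI.Word.equivPair i w).fstIdx_ne
    generalize CoprodI.Word.equivPair i w = p at *
    unfold CoprodI.Word.rcons at e
    split_ifs at e with h1
    · rw [e] at ht; exact absurd hf ht
    · rw [← e]
      simp [CoprodI.Word.cons]
  · left
    unfold crossT
    rw [CoprodI.Word.equivPair_eq_of_fstIdx_ne hf]

theorem crossW_inj {g g' : G} (h : crossW φ g = crossW φ g') : (φ g).left = (φ g').left := by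
  classical
  exact inv_injective (CoprodI.Word.equiv.injective h)

open Classical in
/-- The rank function. -/
noncomputable def crossRank (φ : G →* CoprodI K ⋊[thetaAut α] H) (a : J)
    (p : Σ j, G ⧸ crossS φ j) : ℕ :=
  2 * (crossT φ p.1 p.2.out).toList.length + if p.1 = a then 0 else 1

open Classical in
theorem crossRank_mk (a j : J) (g : G) : crossRank φ a ⟨j, QuotientGroup.mk g⟩ =
    2 * (crossT φ j g).toList.length + if j = a then 0 else 1 := by
  unfold crossRank
  obtain ⟨s, hs⟩ := QuotientGroup.mk_out_eq_mul (crossS φ j) g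
  dsimp only
  rw [hs, crossT_congr _ _ _ s.2]

theorem crossT_of_rank {a i j : J} (h : i ≠ j) (g : G)
    (hr : crossRank φ a ⟨j, QuotientGroup.mk g⟩ ≤ crossRank φ a ⟨i, QuotientGroup.mk g⟩) :
    crossT φ i g = crossW φ g := by
  rcases crossT_cases (φ := φ) h g with h1 | ⟨h1, h2⟩
  · exact h1
  · rw [crossRank_mk, crossRank_mk] at hr
    exfalso
    split_ifs at hr <;> omega

theorem cross_isTree [Nontrivial J] (hJ : ∀ i j k : J, i ≠ k → j ≠ k → i = j)
    (hgen : ⨆ j, crossS φ j = ⊤) : (cosetGraph (crossS φ)).IsTree := by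
  refine isTree_of_rank (cosetGraph_connected hgen) (crossRank φ (Classical.arbitrary J)) ?_
  rintro ⟨i, v⟩ ⟨j, u⟩ ⟨j', u'⟩ ⟨h1, g, h5, h6⟩ ⟨h2, g', h3, h4⟩ hr hr'
  dsimp only at h1 h2 h3 h4 h5 h6
  subst h4 h5 h6
  have := hJ j j' i h1.symm h2.symm
  subst this
  have t1 := crossT_of_rank h1 g hr
  have t2 : crossT φ i g' = crossW φ g' := by
    rw [h3] at hr'
    exact crossT_of_rank h1 g' hr'
  have t3 : crossT φ i g' = crossT φ i g := by
    have := QuotientGroup.eq.1 h3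
    rw [← crossT_congr i g _ this, mul_inv_cancel_left]
  have hw := crossW_inj (t1.symm.trans (t3.symm.trans t2))
  rw [QuotientGroup.eq.2 (mem_crossS_of_left_eq hw j)]

end Crossed

theorem arboreal_of_crossed {G H J : Type} [Group G] [Group H] {K : J → Type}
    [∀ j, Group (K j)] {α : ∀ j, H →* MulAut (K j)} [Nontrivial J]
    (hJ : ∀ i j k : J, i ≠ k → j ≠ k → i = j)
    (φ : G →* CoprodI K ⋊[thetaAut α] H) (hφ : Function.Injective φ)
    (hgen : ⨆ j, crossS φ j = ⊤) (hS : ∀ j, crossS φ j ≠ ⊤)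
    (hα : ∀ h : H, (∀ j, ∃ k : K j, k ≠ 1 ∧ α j h k = k) → h = 1)
    (hvc : ¬ IsVirtuallyCyclic G) : AcylindricallyArboreal G := by
  have hT := cross_isTree hJ hgen
  have hd := dist_of_adj (G := G) hT.connected cosetGraph_smul
  let A : TreeAction G :=
    { V := Σ j, G ⧸ crossS φ j
      T := cosetGraph (crossS φ)
      isTree := hT
      act :=
        { toFun := fun g =>
            { toEquiv := MulAction.toPerm g
              map_rel_iff' := by
                intro x y
                refine ⟨fun h => ?_, cosetGraph_smul g x y⟩
                have := cosetGraph_smul g⁻¹ _ _ h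
                simpa using this }
          map_one' := by apply RelIso.ext; intro x; exact one_smul G x
          map_mul' := fun g h => by apply RelIso.ext; intro x; exact mul_smul g h x } }
  have hact : ∀ g x, A.act g x = g • x := fun g x => rfl
  refine ⟨A, ⟨3, 1, le_rfl, ?_⟩, ?_, hvc⟩
  · intro x y hxy
    have hsub : {g : G | A.act g x = x ∧ A.act g y = y} ⊆ {1} := by
      rintro g ⟨hx, hy⟩
      obtain ⟨i, j, q, s, s', hij, m1, m2, hs, hs1, hs', hs1', c1, c2⟩ :=
        cosetGraph_three hJ hT g x y hx hy hxy
      have l1 := left_eq_one hij m1 m2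
      have r1 : (φ (q⁻¹ * g * q)).right = 1 := by
        apply hα
        intro k
        by_cases hk : k = i
        · subst hk
          exact fix_of_mem hij l1 hs hs1 c1
        · have := hJ k j i hk hij.symm
          subst this
          exact fix_of_mem hij.symm l1 hs' hs1' c2
      have : φ (q⁻¹ * g * q) = 1 := SemidirectProduct.ext l1 r1
      have h1 := (map_eq_one_iff φ hφ).1 this
      have : g = q * (q⁻¹ * g * q) * q⁻¹ := by group
      rw [Set.mem_singleton_iff, this, h1]
      group
    exact ⟨(Set.finite_singleton 1).subset hsub,
      (Set.ncard_le_ncard hsub).trans (Set.ncard_singleton _).le⟩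
  · rintro ⟨x, B, hB⟩
    have hi : ∀ (g : G) (x : Σ j, G ⧸ crossS φ j),
        (cosetGraph (crossS φ)).dist x (g • x) ≠ 1 := by
      intro g x h
      exact (SimpleGraph.dist_eq_one_iff_adj.1 h).1 rfl
    obtain ⟨y, hy⟩ := fixed_of_bounded hT hd hi ⊤ x B (fun k _ => hB k)
    obtain ⟨j, y⟩ := y
    obtain ⟨q, rfl⟩ := QuotientGroup.mk_surjective y
    apply hS j
    rw [eq_top_iff]
    intro g _
    have := hy (q * g * q⁻¹) trivial
    have h1 : (QuotientGroup.mk (q * g * q⁻¹ * q) : G ⧸ crossS φ j) = QuotientGroup.mk q := by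
      exact eq_of_heq (Sigma.mk.inj this).2
    have := QuotientGroup.eq.1 h1.symm
    group at this
    exact this

end GPArb

namespace GPArb

open Monoid

section Perm

variable {H I M : Type*} [Group H] [MulAction H I] [Group M]

/-- Permuting the factors of a free power. -/
def permAut (H I M : Type*) [Group H] [MulAction H I] [Group M] :
    H →* MulAut (CoprodI (fun _ : I => M)) :=
  mkAut (fun h => CoprodI.lift (fun i => (CoprodI.of (M := fun _ : I => M) (i := h • i))))
    (by
      intro n
      induction n using CoprodI.induction_on with
      | one => simp
      | of i m => rw [CoprodI.lift_of, one_smul]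
      | mul x y hx hy => rw [map_mul, hx, hy])
    (by
      intro g h n
      induction n using CoprodI.induction_on with
      | one => simp
      | of i m => rw [CoprodI.lift_of, CoprodI.lift_of, CoprodI.lift_of, mul_smul]
      | mul x y hx hy => rw [map_mul, hx, hy, map_mul, map_mul])

theorem permAut_of (h : H) (i : I) (m : M) :
    permAut H I M h (CoprodI.of (M := fun _ : I => M) (i := i) m) =
      CoprodI.of (M := fun _ : I => M) (i := h • i) m := by
  unfold permAut
  rw [mkAut_apply, CoprodI.lift_of]

/-- The permuted word. -/
def permWord (h : H) (w : CoprodI.Word (fun _ : I => M)) : CoprodI.Word (fun _ : I => M) where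
  toList := w.toList.map (fun p => ⟨h • p.1, p.2⟩)
  ne_one := by
    intro l hl
    obtain ⟨p, hp, rfl⟩ := List.mem_map.1 hl
    exact w.ne_one p hp
  chain_ne := by
    rw [List.isChain_map]
    refine w.chain_ne.imp ?_
    intro a b hab
    simpa using hab

theorem permWord_prod (h : H) (w : CoprodI.Word (fun _ : I => M)) :
    (permWord h w).prod = permAut H I M h w.prod := by
  unfold CoprodI.Word.prod permWord
  rw [map_list_prod, List.map_map, List.map_map]
  refine congrArg List.prod (List.map_congr_left ?_)
  intro p _
  exact (permAut_of h p.1 p.2).symm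

theorem permAut_fix {h : H} {n : CoprodI (fun _ : I => M)} (hn : n ≠ 1)
    (hf : permAut H I M h n = n) : ∃ i : I, h • i = i := by
  classical
  obtain ⟨w, rfl⟩ := CoprodI.Word.equiv.symm.surjective n
  change w.prod ≠ 1 at hn
  change permAut H I M h w.prod = w.prod at hf
  rw [← permWord_prod] at hf
  have hw : permWord h w = w := CoprodI.Word.equiv.symm.injective hf
  have hl := congrArg CoprodI.Word.toList hw
  unfold permWord at hl
  dsimp only at hl
  cases hc : w.toList with
  | nil =>
    exfalso
    apply hn
    unfold CoprodI.Word.prod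
    rw [hc]
    rfl
  | cons p l =>
    rw [hc, List.map_cons] at hl
    have := (List.cons.inj hl).1
    exact ⟨p.1, congrArg Sigma.fst this⟩

end Perm

section Back

variable {V : Type} {Γ : SimpleGraph V} {Gv : V → Type} [∀ v, Group (Gv v)]

theorem full_comm {j : V} {x : GraphProduct Γ Gv}
    (hx : x ∈ GraphProduct.full Γ Gv (Γ.neighborSet j)) (y : Gv j) :
    x * GraphProduct.of Γ Gv j y = GraphProduct.of Γ Gv j y * x := by
  have : GraphProduct.full Γ Gv (Γ.neighborSet j) ≤
      Subgroup.centralizer {GraphProduct.of Γ Gv j y} := by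
    refine iSup₂_le fun v hv => ?_
    rintro _ ⟨a, rfl⟩
    rw [Subgroup.mem_centralizer_singleton_iff]
    exact (gp_comm (Γ := Γ) (u := j) (v := v) hv y a).symm
  have := this hx
  rw [Subgroup.mem_centralizer_singleton_iff] at this
  exact this

theorem not_vc (hinf : ∀ v, Infinite (Gv v)) {a b : V} (hab : a ≠ b) :
    ¬ IsVirtuallyCyclic (GraphProduct Γ Gv) := by
  rintro ⟨H, hH, hc⟩
  obtain ⟨⟨z, hz⟩, hzg⟩ := hc.exists_generator
  have key : ∀ v, ∃ n : ℤ, z ^ n ≠ 1 ∧ z ^ n ∈ (GraphProduct.of Γ Gv v).range := by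
    intro v
    have hfi : (H.comap (GraphProduct.of Γ Gv v)).FiniteIndex :=
      ⟨by
        have h1 := Subgroup.relIndex_comap_ne_zero (GraphProduct.of Γ Gv v) (J := H) (K := ⊤)
          (by rw [Subgroup.relIndex_top_right]; exact hH.index_ne_zero)
        rwa [Subgroup.comap_top, Subgroup.relIndex_top_right] at h1⟩
    have hne : H.comap (GraphProduct.of Γ Gv v) ≠ ⊥ := by
      intro h
      rw [h] at hfi
      have := Subgroup.finite_quotient_of_finiteIndex (H := (⊥ : Subgroup (Gv v)))
      have := hinf v
      exact not_finite_iff_infinite.2 this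
        (Finite.of_equiv _ (QuotientGroup.quotientBot (G := Gv v)).toEquiv)
    obtain ⟨x, hx, hx1⟩ := (Subgroup.ne_bot_iff_exists_ne_one.1 hne : _) |>.imp
      (fun x hx => hx) |> fun ⟨x, hx⟩ => (⟨x.1, x.2, fun h => hx (Subtype.ext h)⟩ :
        ∃ x : Gv v, x ∈ H.comap (GraphProduct.of Γ Gv v) ∧ x ≠ 1)
    obtain ⟨n, hn⟩ := hzg ⟨_, hx⟩
    have hn' : z ^ n = GraphProduct.of Γ Gv v x := congrArg Subtype.val hn
    refine ⟨n, ?_, ?_⟩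
    · rw [hn']
      intro h
      exact hx1 ((map_eq_one_iff _ (gp_of_injective v)).1 h)
    · rw [hn']; exact ⟨x, rfl⟩
  obtain ⟨n, hn, hna⟩ := key a
  obtain ⟨m, hm, hmb⟩ := key b
  have h1 : z ^ (n * m) = 1 := by
    apply gp_disj hab
    · rw [zpow_mul]; exact Subgroup.zpow_mem _ hna _
    · rw [mul_comm, zpow_mul]; exact Subgroup.zpow_mem _ hmb _
  have hfo : IsOfFinOrder z := isOfFinOrder_iff_zpow_eq_one.2 ⟨n * m, by
    intro h
    rcases mul_eq_zero.1 h with h | h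
    · exact hn (by rw [h, zpow_zero])
    · exact hm (by rw [h, zpow_zero]), h1⟩
  have hfo' : IsOfFinOrder (⟨z, hz⟩ : H) := by
    exact (isOfFinOrder_iff_zpow_eq_one.1 hfo).elim fun n hn =>
      isOfFinOrder_iff_zpow_eq_one.2 ⟨n, hn.1, Subtype.ext hn.2⟩
  have hHf : Finite H := by
    have h2 : (Subgroup.zpowers (⟨z, hz⟩ : H) : Set H).Finite := hfo'.finite_zpowers
    exact Set.finite_univ_iff.1 (h2.subset fun x _ => hzg x)
  have hGf : Finite (GraphProduct Γ Gv) := by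
    have := Subgroup.finite_quotient_of_finiteIndex (H := H)
    exact Finite.of_equiv _ (Subgroup.groupEquivQuotientProdSubgroup (s := H)).symm
  have := hinf a
  exact not_finite_iff_infinite.2 this (Finite.of_injective _ (gp_of_injective (Γ := Γ) a))

variable (Γ Gv) in
/-- The factors of the normal free product. -/
abbrev BK (s : Set V) (j : s) : Type :=
  CoprodI (fun _ : GraphProduct Γ Gv ⧸ GraphProduct.full Γ Gv (Γ.neighborSet j) => Gv j)

variable (Γ Gv) in
/-- The action on the factors. -/
abbrev Bα (s : Set V) (j : s) : GraphProduct Γ Gv →* MulAut (BK Γ Gv s j) :=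
  permAut (GraphProduct Γ Gv)
    (GraphProduct Γ Gv ⧸ GraphProduct.full Γ Gv (Γ.neighborSet j)) (Gv j)

variable (Γ Gv) in
/-- The ambient semidirect product. -/
abbrev BQ (s : Set V) : Type :=
  CoprodI (BK Γ Gv s) ⋊[thetaAut (Bα Γ Gv s)] GraphProduct Γ Gv

variable (Γ Gv) in
/-- The inclusion of a vertex group of `s` in the factor. -/
def Bof (s : Set V) (j : s) (g : GraphProduct Γ Gv) : Gv j →* BK Γ Gv s j :=
  CoprodI.of (M := fun _ : GraphProduct Γ Gv ⧸ GraphProduct.full Γ Gv (Γ.neighborSet j) => Gv j)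
    (i := QuotientGroup.mk g)

theorem Bα_of (s : Set V) (j : s) (h g : GraphProduct Γ Gv) (x : Gv j) :
    Bα Γ Gv s j h (Bof Γ Gv s j g x) = Bof Γ Gv s j (h * g) x :=
  permAut_of h _ x

theorem Bof_congr (s : Set V) (j : s) (h g : GraphProduct Γ Gv) (x : Gv j)
    (hgh : g⁻¹ * h ∈ GraphProduct.full Γ Gv (Γ.neighborSet j)) :
    Bof Γ Gv s j g x = Bof Γ Gv s j h x := by
  unfold Bof
  rw [QuotientGroup.eq.2 hgh]

open Classical in
variable (Γ Gv) in
/-- The image of a vertex group in the semidirect product. -/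
noncomputable def Bf (s : Set V) (v : V) : Gv v →* BQ Γ Gv s :=
  if h : v ∈ s then
    SemidirectProduct.inl.comp ((CoprodI.of (i := (⟨v, h⟩ : s))).comp (Bof Γ Gv s ⟨v, h⟩ 1))
  else SemidirectProduct.inr.comp (GraphProduct.of Γ Gv v)

theorem Bf_mem {s : Set V} (j : s) (x : Gv j) : Bf Γ Gv s j x =
    SemidirectProduct.inl (CoprodI.of (Bof Γ Gv s j 1 x)) := by
  simp [Bf]

theorem Bf_not_mem {s : Set V} {v : V} (h : v ∉ s) (x : Gv v) : Bf Γ Gv s v x =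
    SemidirectProduct.inr (GraphProduct.of Γ Gv v x) := by
  simp [Bf, h]

theorem Bf_comm1 {s : Set V} (j : s) {v : V} (hv : v ∉ s) (h : Γ.Adj j v) (x : Gv j) (y : Gv v) :
    Bf Γ Gv s v y * Bf Γ Gv s j x = Bf Γ Gv s j x * Bf Γ Gv s v y := by
  rw [Bf_mem, Bf_not_mem hv]
  rw [← mul_inv_eq_iff_eq_mul, ← map_inv, ← SemidirectProduct.inl_aut, thetaAut_of, Bα_of]
  rw [Bof_congr]
  rw [mul_one, mul_one, ← map_inv]
  have : (GraphProduct.of Γ Gv v).range ≤ GraphProduct.full Γ Gv (Γ.neighborSet j) :=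
    le_iSup₂_of_le v h le_rfl
  exact this ⟨_, rfl⟩

theorem Bf_comm {s : Set V} (hs : ∀ u v, u ∈ s → v ∈ s → ¬ Γ.Adj u v) (u v : V) (h : Γ.Adj u v)
    (x : Gv u) (y : Gv v) :
    Bf Γ Gv s u x * Bf Γ Gv s v y = Bf Γ Gv s v y * Bf Γ Gv s u x := by
  by_cases hu : u ∈ s
  · have hv : v ∉ s := fun hv => hs u v hu hv h
    exact (Bf_comm1 ⟨u, hu⟩ hv h x y).symm
  · by_cases hv : v ∈ s
    · exact Bf_comm1 ⟨v, hv⟩ hu h.symm y x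
    · rw [Bf_not_mem hu, Bf_not_mem hv, ← map_mul, gp_comm h, map_mul]

/-- The embedding in the semidirect product. -/
noncomputable def Bφ {s : Set V} (hs : ∀ u v, u ∈ s → v ∈ s → ¬ Γ.Adj u v) :
    GraphProduct Γ Gv →* BQ Γ Gv s :=
  gpLift (Bf Γ Gv s) (Bf_comm hs)

variable (Γ Gv) in
/-- The evaluation of the normal factor. -/
noncomputable def Bε (s : Set V) : CoprodI (BK Γ Gv s) →* GraphProduct Γ Gv :=
  CoprodI.lift (fun j => CoprodI.lift (fun i =>
    (MulAut.conj i.out).toMonoidHom.comp (GraphProduct.of Γ Gv j)))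

theorem Bε_of {s : Set V} (j : s) (g : GraphProduct Γ Gv) (x : Gv j) :
    Bε Γ Gv s (CoprodI.of (Bof Γ Gv s j g x)) = g * GraphProduct.of Γ Gv j x * g⁻¹ := by
  unfold Bε Bof
  rw [CoprodI.lift_of, CoprodI.lift_of]
  obtain ⟨l, hl⟩ := QuotientGroup.mk_out_eq_mul (GraphProduct.full Γ Gv (Γ.neighborSet j)) g
  rw [MonoidHom.comp_apply]
  change (QuotientGroup.mk g : GraphProduct Γ Gv ⧸ GraphProduct.full Γ Gv
    (Γ.neighborSet j)).out * GraphProduct.of Γ Gv j x * ((QuotientGroup.mk g : GraphProduct Γ Gv ⧸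
    GraphProduct.full Γ Gv (Γ.neighborSet j)).out)⁻¹ = _
  rw [hl]
  have := full_comm l.2 x
  rw [mul_assoc g, this]
  group

theorem Bε_aut {s : Set V} (g : GraphProduct Γ Gv) (n : CoprodI (BK Γ Gv s)) :
    Bε Γ Gv s (thetaAut (Bα Γ Gv s) g n) = g * Bε Γ Gv s n * g⁻¹ := by
  induction n using CoprodI.induction_on with
  | one => simp
  | mul x y hx hy => rw [map_mul, map_mul, hx, hy, map_mul]; group
  | of j n =>
    rw [thetaAut_of]
    induction n using CoprodI.induction_on with
    | one => simp
    | mul x y hx hy => rw [map_mul, map_mul, map_mul, hx, hy, map_mul, map_mul]; group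
    | of i x =>
      obtain ⟨h, rfl⟩ := QuotientGroup.mk_surjective i
      change Bε Γ Gv s (CoprodI.of (Bα Γ Gv s j g (Bof Γ Gv s j h x))) =
        g * Bε Γ Gv s (CoprodI.of (Bof Γ Gv s j h x)) * g⁻¹
      rw [Bα_of, Bε_of, Bε_of]
      group

theorem Bφ_injective {s : Set V} (hs : ∀ u v, u ∈ s → v ∈ s → ¬ Γ.Adj u v) :
    Function.Injective (Bφ (Gv := Gv) hs) := by
  let ψ : BQ Γ Gv s →* GraphProduct Γ Gv :=
    SemidirectProduct.lift (Bε Γ Gv s) (MonoidHom.id _) (by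
      intro g
      refine MonoidHom.ext fun n => ?_
      exact Bε_aut g n)
  have : ∀ g, ψ (Bφ hs g) = g := by
    apply gp_induction
    · simp
    · intro v x
      unfold Bφ
      rw [gpLift_of]
      by_cases hv : v ∈ s
      · rw [Bf_mem ⟨v, hv⟩, SemidirectProduct.lift_inl, Bε_of]
        simp
      · rw [Bf_not_mem hv, SemidirectProduct.lift_inr]
        rfl
    · intro x y hx hy
      rw [map_mul, map_mul, hx, hy]
  exact Function.LeftInverse.injective this

theorem distAtLeast_three {a b : V} (h : Γ.distAtLeast 3 a b) :
    a ≠ b ∧ ¬ Γ.Adj a b ∧ Disjoint (Γ.neighborSet a) (Γ.neighborSet b) := by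
  obtain ⟨hab, h⟩ := h
  have key : ∀ p : Γ.Walk a b, 3 ≤ p.length := by
    intro p
    rcases h with h | h
    · exact absurd ⟨p⟩ h
    · exact h.trans (SimpleGraph.dist_le p)
  refine ⟨hab, fun hadj => ?_, ?_⟩
  · have := key hadj.toWalk
    simp at this
  · rw [Set.disjoint_left]
    intro c ha hb
    have ha : Γ.Adj a c := ha
    have hb : Γ.Adj b c := hb
    have := key (.cons ha (.cons hb.symm .nil))
    simp at this

theorem gp_backward (hinf : ∀ v, Infinite (Gv v)) (h : Γ.diamAtLeast 3) :
    AcylindricallyArboreal (GraphProduct Γ Gv) := by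
  obtain ⟨a, b, h⟩ := h
  obtain ⟨hab, hadj, hdisj⟩ := distAtLeast_three h
  let s : Set V := {a, b}
  let ja : s := ⟨a, by simp [s]⟩
  let jb : s := ⟨b, by simp [s]⟩
  have hjab : ja ≠ jb := fun h => hab (congrArg Subtype.val h)
  have hcase : ∀ j : s, j = ja ∨ j = jb := by
    rintro ⟨v, hv⟩
    rcases hv with rfl | hv
    · exact Or.inl rfl
    · exact Or.inr (Subtype.ext hv)
  have : Nontrivial s := ⟨ja, jb, hjab⟩
  have hs : ∀ u v, u ∈ s → v ∈ s → ¬ Γ.Adj u v := by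
    rintro u v (rfl | rfl) (rfl | rfl)
    · simp
    · exact hadj
    · exact fun h => hadj h.symm
    · simp
  have hJ : ∀ i j k : s, i ≠ k → j ≠ k → i = j := by
    intro i j k h1 h2
    rcases hcase i with rfl | rfl <;> rcases hcase j with rfl | rfl <;>
      rcases hcase k with rfl | rfl <;> first | rfl | exact absurd rfl h1 | exact absurd rfl h2
  have hφof : ∀ (j : s) (x : Gv j), Bφ hs (GraphProduct.of Γ Gv j x) =
      SemidirectProduct.inl (CoprodI.of (Bof Γ Gv s j 1 x)) := by
    intro j x
    rw [Bφ, gpLift_of, Bf_mem]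
  refine arboreal_of_crossed (K := BK Γ Gv s) (α := Bα Γ Gv s) hJ (Bφ hs) (Bφ_injective hs)
    ?_ ?_ ?_ (not_vc hinf hab)
  · rw [eq_top_iff]
    intro g _
    refine gp_induction (P := fun g => g ∈ ⨆ j, crossS (Bφ hs) j) (one_mem _) ?_
      (fun _ _ => mul_mem) g
    intro v x
    by_cases hv : v ∈ s
    · refine Subgroup.mem_iSup_of_mem ⟨v, hv⟩ ⟨Bof Γ Gv s ⟨v, hv⟩ 1 x, ?_⟩
      rw [hφof ⟨v, hv⟩, SemidirectProduct.left_inl]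
    · refine Subgroup.mem_iSup_of_mem ja ⟨1, ?_⟩
      rw [Bφ, gpLift_of, Bf_not_mem hv, SemidirectProduct.left_inr, map_one]
  · intro j hj
    obtain ⟨i, hi⟩ := exists_ne j
    have := hinf i
    obtain ⟨x, hx⟩ := exists_ne (1 : Gv i)
    have hm : GraphProduct.of Γ Gv i x ∈ crossS (Bφ hs) j := by rw [hj]; trivial
    obtain ⟨k, hk⟩ := hm
    rw [hφof, SemidirectProduct.left_inl] at hk
    have := coprodI_disj hi hk
    exact hx ((map_eq_one_iff (Bof Γ Gv s i 1) (CoprodI.of_injective _)).1 this)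
  · intro h hfix
    have conj : ∀ j : s, ∃ x : GraphProduct Γ Gv,
        x⁻¹ * h * x ∈ GraphProduct.full Γ Gv (Γ.neighborSet j) := by
      intro j
      obtain ⟨k, hk, hk'⟩ := hfix j
      obtain ⟨i, hi⟩ := permAut_fix hk hk'
      obtain ⟨x, rfl⟩ := QuotientGroup.mk_surjective i
      have := QuotientGroup.eq.1 hi.symm
      exact ⟨x, by
        rw [mul_assoc]
        exact this⟩
    obtain ⟨x, hx⟩ := conj ja
    obtain ⟨y, hy⟩ := conj jb
    have hr : gpRetr (Γ.neighborSet a) h = 1 := by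
      have := gpRetr_full_disj hdisj hy
      rw [map_mul, map_mul, map_inv] at this
      generalize gpRetr (Γ.neighborSet a) y = t at this
      have e : gpRetr (Γ.neighborSet a) h = t * (t⁻¹ * gpRetr (Γ.neighborSet a) h * t) * t⁻¹ := by
        group
      rw [e, this]
      group
    have h1 := gpRetr_full hx
    rw [map_mul, map_mul, hr, map_inv] at h1
    have h2 : x⁻¹ * h * x = 1 := by
      rw [← h1]
      group
    have e : h = x * (x⁻¹ * h * x) * x⁻¹ := by group
    rw [e, h2]
    group

end Back

end GPArb

/-- A non-degenerate graph product over a finite simple graph all of whose vertex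
groups are infinite is acylindrically arboreal if and only if `diam(Γ) ≥ 3`. -/
theorem graphProduct_infinite_vertexGroups_acylindricallyArboreal_iff {V : Type}
    [Fintype V] (Γ : SimpleGraph V) (Gv : V → Type) [∀ v, Group (Gv v)]
    (hnd : GraphProduct.NonDegenerate Gv) (hinf : ∀ v, Infinite (Gv v)) :
    AcylindricallyArboreal (GraphProduct Γ Gv) ↔ Γ.diamAtLeast 3 := by
  exact ⟨GPArb.gp_forward hnd.2 hinf, GPArb.gp_backward hinf⟩
end

section
/- Let G = GP(Γ, 𝒢) be a non-degenerate graph product and H ≤ G a subgroup. If the sub-graph product induced by the essential support esupp(H) contains a pair of separated vertices, then H is either acylindrically arboreal or virtually cyclic. -/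
/-- `S` is the essential support of a subgroup `H` of a graph product: `H` is
contained in a conjugate of the full subgroup on `S`, and `S` is contained in any
vertex set with this property (so that the parabolic closure of `H` is a conjugate of
`G_S`). -/
def GraphProduct.IsEssentialSupport {V : Type} (Γ : SimpleGraph V) (Gv : V → Type)
    [∀ v, Group (Gv v)] (H : Subgroup (GraphProduct Γ Gv)) (S : Set V) : Prop :=
  (∃ g : GraphProduct Γ Gv, H ≤ conjSubgroup g (GraphProduct.full Γ Gv S)) ∧
    ∀ (S' : Set V) (g' : GraphProduct Γ Gv),
      H ≤ conjSubgroup g' (GraphProduct.full Γ Gv S') → S ⊆ S'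

namespace SubArb

section Tree
variable {V : Type*} {T : SimpleGraph V}

theorem isAcyclic_of_depth (d : V → ℕ)
    (h : ∀ v n₁ n₂, T.Adj v n₁ → T.Adj v n₂ → d n₁ ≤ d v → d n₂ ≤ d v → n₁ = n₂) :
    T.IsAcyclic := by
  classical
  intro v c hc
  obtain ⟨m, hm, hmax⟩ := Finset.exists_max_image c.support.toFinset d
    ⟨v, by simp⟩
  have hm' : m ∈ c.support := by simpa using hm
  have hmem : ∀ x ∈ (c.rotate m hm').support, d x ≤ d m := by
    intro x hx
    apply hmax
    rw [List.mem_toFinset]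
    simpa using hx
  have hc' := hc.rotate hm'
  set c' := c.rotate m hm'
  have hnn : ¬ c'.Nil := hc'.not_nil
  apply hc'.snd_ne_penultimate
  apply h m
  · exact c'.adj_snd hnn
  · exact (c'.adj_penultimate hnn).symm
  · exact hmem _ (c'.getVert_mem_support _)
  · exact hmem _ (c'.getVert_mem_support _)

theorem path_unique' (hT : T.IsTree) {v w : V} (p q : T.Path v w) : p = q :=
  (SimpleGraph.IsAcyclic.subsingleton_path hT.isAcyclic v w).elim p q

theorem path_length (hT : T.IsTree) {v w : V} {p : T.Walk v w} (hp : p.IsPath) :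
    p.length = T.dist v w := by
  obtain ⟨q, hq, hl⟩ := (hT.connected v w).exists_path_of_dist
  rw [← hl]
  exact congrArg (fun r : T.Path v w => r.1.length) (path_unique' hT ⟨p, hp⟩ ⟨q, hq⟩)

theorem dist_split (hT : T.IsTree) {v w m : V} {p : T.Walk v w} (hp : p.IsPath)
    (hm : m ∈ p.support) (o : V) :
    T.dist v o = T.dist v m + T.dist m o ∨ T.dist w o = T.dist w m + T.dist m o := by
  classical
  have key : ∀ x, ∀ q : T.Walk x o, q.IsPath → m ∈ q.support →
      T.dist x o = T.dist x m + T.dist m o := by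
    intro x q hq hmq
    rw [← path_length hT hq,
      ← path_length hT (hq.takeUntil hmq),
      ← path_length hT (hq.dropUntil hmq),
      ← SimpleGraph.Walk.length_append, SimpleGraph.Walk.take_spec]
  obtain ⟨q1, hq1, -⟩ := hT.existsUnique_path v o
  obtain ⟨q2, hq2, -⟩ := hT.existsUnique_path w o
  by_cases h1 : m ∈ q1.support
  · exact Or.inl (key _ _ hq1 h1)
  by_cases h2 : m ∈ q2.support
  · exact Or.inr (key _ _ hq2 h2)
  exfalso
  have heq : p = (q1.append q2.reverse).bypass :=
    congrArg Subtype.val (path_unique' hT ⟨p, hp⟩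
      ⟨_, (q1.append q2.reverse).bypass_isPath⟩)
  rw [heq] at hm
  have := SimpleGraph.Walk.support_bypass_subset_support _ hm
  rw [SimpleGraph.Walk.mem_support_append_iff] at this
  simp at this
  tauto

theorem iso_dist (hT : T.IsTree) (e : T ≃g T) (x y : V) : T.dist (e x) (e y) = T.dist x y := by
  have hle : ∀ (e : T ≃g T) (x y : V), T.Reachable x y → T.dist (e x) (e y) ≤ T.dist x y := by
    intro e x y h
    obtain ⟨p, hp⟩ := h.exists_walk_length_eq_dist
    rw [← hp, ← SimpleGraph.Walk.length_map e.toHom p]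
    exact SimpleGraph.dist_le _
  apply le_antisymm
  · exact hle e x y (hT.connected x y)
  · simpa using hle e.symm (e x) (e y) (hT.connected _ _)

theorem exists_fixed {H : Type*} [Group H] (hT : T.IsTree) (act : H →* (T ≃g T))
    (ty : V → Bool) (hty : ∀ x y, T.Adj x y → ty x ≠ ty y)
    (hact : ∀ h x, ty (act h x) = ty x) (x : V) (B : ℕ)
    (hB : ∀ h, T.dist x (act h x) ≤ B) : ∃ v, ∀ h, act h v = v := by
  classical
  have hex : ∃ n, ∃ v, ∀ h, T.dist v (act h x) ≤ n := ⟨B, x, hB⟩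
  obtain ⟨v, hv⟩ := Nat.find_spec hex
  have hmin : ∀ m, m < Nat.find hex → ¬ ∃ v, ∀ h, T.dist v (act h x) ≤ m :=
    fun m => Nat.find_min hex
  set r := Nat.find hex
  have hdiam : ∀ v w, (∀ h, T.dist v (act h x) ≤ r) → (∀ h, T.dist w (act h x) ≤ r) →
      v = w ∨ T.Adj v w := by
    intro v w hv hw
    by_contra! hcon
    obtain ⟨p, hp, -⟩ := hT.existsUnique_path v w
    cases p with
    | nil => exact hcon.1 rfl
    | @cons _ m _ hadj q =>
      have hmw : m ≠ w := by rintro rfl; exact hcon.2 hadj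
      have h1 : ∀ h, T.dist m (act h x) + 1 ≤ r := by
        intro h
        have hv' := hv h
        have hw' := hw h
        have a1 : 0 < T.dist v m := hT.connected.pos_dist_of_ne hadj.ne
        have a2 : 0 < T.dist w m := hT.connected.pos_dist_of_ne hmw.symm
        rcases dist_split hT hp (m := m) (by simp) (act h x) with h' | h' <;> omega
      have hr : 1 ≤ r := le_trans (by omega) (h1 1)
      exact hmin (r - 1) (by omega) ⟨m, fun h => by have := h1 h; omega⟩
  refine ⟨v, fun h => ?_⟩
  have hmem : ∀ k, T.dist (act h v) (act k x) ≤ r := by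
    intro k
    have : act k x = act h (act (h⁻¹ * k) x) := by
      have : act k = act h * act (h⁻¹ * k) := by rw [← map_mul]; simp
      rw [this]; rfl
    rw [this, iso_dist hT]
    exact hv _
  rcases hdiam (act h v) v hmem hv with heq | hadj
  · exact heq
  · exact absurd (hact h v) (hty _ _ hadj)

/-- Three consecutive edges fixed by everything fixing both ends. -/
theorem exists_three (hT : T.IsTree) (x y : V) (h3 : 3 ≤ T.dist x y) :
    ∃ v₀ v₁ v₂ v₃, T.Adj v₀ v₁ ∧ T.Adj v₁ v₂ ∧ T.Adj v₂ v₃ ∧ v₀ ≠ v₂ ∧ v₁ ≠ v₃ ∧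
      ∀ e : T ≃g T, e x = x → e y = y → e v₀ = v₀ ∧ e v₁ = v₁ ∧ e v₂ = v₂ ∧ e v₃ = v₃ := by
  obtain ⟨p, hp, -⟩ := hT.existsUnique_path x y
  have hl : 3 ≤ p.length := by
    rwa [path_length hT hp]
  have hne : ∀ i j, i ≤ 3 → j ≤ 3 → i ≠ j → p.getVert i ≠ p.getVert j := by
    intro i j hi hj hij h
    exact hij (hp.getVert_injOn (by simp; omega) (by simp; omega) h)
  refine ⟨p.getVert 0, p.getVert 1, p.getVert 2, p.getVert 3,
    p.adj_getVert_succ (by omega), p.adj_getVert_succ (by omega),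
    p.adj_getVert_succ (by omega), hne _ _ (by omega) (by omega) (by omega),
    hne _ _ (by omega) (by omega) (by omega), ?_⟩
  intro e hx hy
  have hfix : ∀ i, e (p.getVert i) = p.getVert i := by
    intro i
    have h1 : ((p.map e.toHom).copy hx hy).IsPath := by
      rw [SimpleGraph.Walk.isPath_copy]
      exact SimpleGraph.Walk.IsPath.map e.injective hp
    have heq : (p.map e.toHom).copy hx hy = p :=
      congrArg Subtype.val (path_unique' hT ⟨_, h1⟩ ⟨p, hp⟩)
    have := congrArg (fun q => q.getVert i) heq
    simpa [SimpleGraph.Walk.getVert_map] using this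
  exact ⟨hfix _, hfix _, hfix _, hfix _⟩

end Tree
open Monoid

section Free
variable {K : Bool → Type} [∀ t, Group (K t)] {A : Type} [Group A]
variable (φ : ∀ t, A →* MulAut (K t))

noncomputable def PhiHom (u : A) : CoprodI K →* CoprodI K :=
  CoprodI.lift (fun t => CoprodI.of.comp (φ t u).toMonoidHom)

@[simp] theorem PhiHom_of (u : A) (t : Bool) (x : K t) :
    PhiHom φ u (CoprodI.of x) = CoprodI.of (φ t u x) := by
  simp [PhiHom]

theorem PhiHom_mul (u v : A) (k : CoprodI K) :
    PhiHom φ (u * v) k = PhiHom φ u (PhiHom φ v k) := by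
  have : PhiHom φ (u * v) = (PhiHom φ u).comp (PhiHom φ v) := by
    apply CoprodI.ext_hom
    intro t
    ext x
    simp
  rw [this]; rfl

theorem PhiHom_one (k : CoprodI K) : PhiHom φ 1 k = k := by
  have : PhiHom φ 1 = MonoidHom.id _ := by
    apply CoprodI.ext_hom
    intro t
    ext x
    simp
  rw [this]; rfl

noncomputable def Phi : A →* MulAut (CoprodI K) where
  toFun u :=
    { toFun := PhiHom φ u
      invFun := PhiHom φ u⁻¹
      left_inv := fun k => by rw [← PhiHom_mul, inv_mul_cancel, PhiHom_one]
      right_inv := fun k => by rw [← PhiHom_mul, mul_inv_cancel, PhiHom_one]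
      map_mul' := map_mul _ }
  map_one' := by ext k; exact PhiHom_one φ k
  map_mul' u v := by ext k; exact PhiHom_mul φ u v k

@[simp] theorem Phi_of (u : A) (t : Bool) (x : K t) :
    Phi φ u (CoprodI.of x) = CoprodI.of (φ t u x) := PhiHom_of φ u t x

abbrev GG := CoprodI K ⋊[Phi φ] A

def P (t : Bool) : Subgroup (GG φ) where
  carrier := {g | ∃ x : K t, g.left = CoprodI.of x}
  mul_mem' := by
    rintro g h ⟨x, hx⟩ ⟨y, hy⟩
    exact ⟨x * φ t g.right y, by simp [hx, hy]⟩
  one_mem' := ⟨1, by simp⟩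
  inv_mem' := by
    rintro g ⟨x, hx⟩
    refine ⟨φ t g.right⁻¹ x⁻¹, ?_⟩
    rw [SemidirectProduct.inv_left, hx, ← map_inv, Phi_of]

theorem mem_P {t : Bool} {g : GG φ} : g ∈ P φ t ↔ ∃ x : K t, g.left = CoprodI.of x := Iff.rfl

theorem of_eq_of_ne {s t : Bool} (h : s ≠ t) (x : K s) (y : K t)
    (hxy : (CoprodI.of x : CoprodI K) = CoprodI.of y) : x = 1 := by
  have := congrArg (CoprodI.lift (fun i => if h : i = s then h ▸ MonoidHom.id _ else 1 :
    ∀ i, K i →* K s)) hxy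
  simpa [h.symm] using this

def vsetoid : Setoid (Bool × GG φ) where
  r p q := p.1 = q.1 ∧ p.2⁻¹ * q.2 ∈ P φ p.1
  iseqv :=
    { refl := fun p => ⟨rfl, by simpa using (P φ p.1).one_mem⟩
      symm := by
        rintro ⟨t, p⟩ ⟨s, q⟩ ⟨h1, h2⟩
        obtain rfl : t = s := h1
        exact ⟨rfl, by simpa using (P φ t).inv_mem h2⟩
      trans := by
        rintro ⟨t, p⟩ ⟨s, q⟩ ⟨s', r⟩ ⟨h1, h2⟩ ⟨h3, h4⟩
        obtain rfl : t = s := h1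
        obtain rfl : t = s' := h3
        exact ⟨rfl, by simpa [mul_assoc] using (P φ t).mul_mem h2 h4⟩ }

def Vtx : Type := Quotient (vsetoid φ)

def mk (t : Bool) (g : GG φ) : Vtx φ := Quotient.mk (vsetoid φ) (t, g)

theorem mk_eq {s t : Bool} {g h : GG φ} :
    mk φ s g = mk φ t h ↔ s = t ∧ g⁻¹ * h ∈ P φ s :=
  Quotient.eq (r := vsetoid φ)

theorem mk_surj (v : Vtx φ) : ∃ t g, v = mk φ t g := by
  induction v using Quotient.inductionOn with
  | h p => exact ⟨p.1, p.2, rfl⟩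

def ty : Vtx φ → Bool := Quotient.lift (fun p => p.1) (fun _ _ h => h.1)

@[simp] theorem ty_mk (t : Bool) (g : GG φ) : ty φ (mk φ t g) = t := rfl

noncomputable def smulV (g : GG φ) : Vtx φ → Vtx φ :=
  Quotient.lift (fun p => mk φ p.1 (g * p.2)) (fun p q h => by
    rw [mk_eq]; exact ⟨h.1, by simpa [mul_assoc] using h.2⟩)

@[simp] theorem smulV_mk (g : GG φ) (t : Bool) (h : GG φ) :
    smulV φ g (mk φ t h) = mk φ t (g * h) := rfl

def tree : SimpleGraph (Vtx φ) where
  Adj x y := ∃ t g, x = mk φ t g ∧ y = mk φ (!t) g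
  symm := ⟨by
    rintro x y ⟨t, g, rfl, rfl⟩
    exact ⟨!t, g, rfl, by simp⟩⟩
  loopless := ⟨by
    rintro x ⟨t, g, rfl, h⟩
    rw [mk_eq] at h
    simp at h⟩

theorem tree_adj {x y : Vtx φ} :
    (tree φ).Adj x y ↔ ∃ t g, x = mk φ t g ∧ y = mk φ (!t) g := Iff.rfl

theorem ty_ne {x y : Vtx φ} (h : (tree φ).Adj x y) : ty φ x ≠ ty φ y := by
  obtain ⟨t, g, rfl, rfl⟩ := h
  simp

noncomputable def actIso (g : GG φ) : tree φ ≃g tree φ where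
  toFun := smulV φ g
  invFun := smulV φ g⁻¹
  left_inv v := by obtain ⟨t, h, rfl⟩ := mk_surj φ v; simp
  right_inv v := by obtain ⟨t, h, rfl⟩ := mk_surj φ v; simp
  map_rel_iff' := by
    intro x y
    constructor
    · rintro ⟨t, h, h1, h2⟩
      refine ⟨t, g⁻¹ * h, ?_, ?_⟩
      · obtain ⟨s, k, rfl⟩ := mk_surj φ x
        have h1 : mk φ s (g * k) = _ := h1
        rw [mk_eq] at h1 ⊢
        simpa [mul_assoc] using h1
      · obtain ⟨s, k, rfl⟩ := mk_surj φ y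
        have h2 : mk φ s (g * k) = _ := h2
        rw [mk_eq] at h2 ⊢
        simpa [mul_assoc] using h2
    · rintro ⟨t, h, rfl, rfl⟩
      exact ⟨t, g * h, rfl, rfl⟩

noncomputable def treeAct : GG φ →* (tree φ ≃g tree φ) where
  toFun := actIso φ
  map_one' := by
    ext v
    obtain ⟨t, h, rfl⟩ := mk_surj φ v
    show mk φ t (1 * h) = mk φ t h
    rw [one_mul]
  map_mul' g k := by
    ext v
    obtain ⟨t, h, rfl⟩ := mk_surj φ v
    show mk φ t (g * k * h) = mk φ t (g * (k * h))
    rw [mul_assoc]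

@[simp] theorem treeAct_mk (g : GG φ) (t : Bool) (h : GG φ) :
    treeAct φ g (mk φ t h) = mk φ t (g * h) := rfl

theorem ty_act (g : GG φ) (v : Vtx φ) : ty φ (treeAct φ g v) = ty φ v := by
  obtain ⟨t, h, rfl⟩ := mk_surj φ v
  rfl

theorem mk_inl_eq (t : Bool) (g : GG φ) :
    mk φ t g = mk φ t (SemidirectProduct.inl g.left) := by
  rw [mk_eq]
  refine ⟨rfl, 1, ?_⟩
  simp [← map_mul]

theorem tree_connected : (tree φ).Connected := by
  have hr : ∀ (s t : Bool) (g : GG φ), (tree φ).Reachable (mk φ s g) (mk φ t g) := by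
    intro s t g
    by_cases h : s = t
    · rw [h]
    · have : t = !s := by cases s <;> cases t <;> simp_all
      subst this
      exact SimpleGraph.Adj.reachable ⟨s, g, rfl, rfl⟩
  have base : ∀ k : CoprodI K, ∀ g : GG φ, ∀ t,
      (tree φ).Reachable (mk φ t g) (mk φ t (g * SemidirectProduct.inl k)) := by
    intro k
    induction k using CoprodI.induction_on with
    | one => intro g t; simp
    | of s x =>
      intro g t
      have : mk φ s g = mk φ s (g * SemidirectProduct.inl (CoprodI.of x)) := by
        rw [mk_eq]
        exact ⟨rfl, x, by simp⟩
      exact (hr t s g).trans (this ▸ hr s t _)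
    | mul x y hx hy =>
      intro g t
      rw [map_mul, ← mul_assoc]
      exact (hx g t).trans (hy _ t)
  have base' : ∀ v, (tree φ).Reachable (mk φ true 1) v := by
    intro v
    obtain ⟨t, g, rfl⟩ := mk_surj φ v
    rw [mk_inl_eq φ t g]
    exact (hr true t 1).trans (by simpa using base g.left 1 t)
  haveI : Nonempty (Vtx φ) := ⟨mk φ true 1⟩
  exact ⟨fun x y => (base' x).symm.trans (base' y)⟩

open Classical in
noncomputable def wd (k : CoprodI K) : CoprodI.Word K := k⁻¹ • CoprodI.Word.empty

open Classical in
noncomputable def dep : Vtx φ → ℕ :=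
  Quotient.lift (fun p => ((CoprodI.Word.equivPair p.1 (wd p.2.left)).tail.toList).length) (by
    rintro ⟨t, g⟩ ⟨s, h⟩ ⟨h1, h2⟩
    obtain rfl : t = s := h1
    obtain ⟨x, hx⟩ := h2
    have hx : (g⁻¹ * h).left = CoprodI.of x := hx
    have hh : h.left = g.left * CoprodI.of (φ t g.right x) := by
      conv_lhs => rw [show h = g * (g⁻¹ * h) by simp]
      rw [SemidirectProduct.mul_left, hx, Phi_of]
    simp only [hh, wd, mul_inv_rev, ← map_inv, mul_smul, CoprodI.Word.equivPair_smul_same])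

open Classical in
theorem dep_mk (t : Bool) (g : GG φ) : dep φ (mk φ t g) =
    ((CoprodI.Word.equivPair t (wd g.left)).tail.toList).length := rfl

open Classical in
theorem exists_rep (t : Bool) (g : GG φ) : ∃ g₀ : GG φ, mk φ t g = mk φ t g₀ ∧
    (wd g₀.left).fstIdx ≠ some t := by
  let x := (CoprodI.Word.equivPair t (wd g.left)).head
  refine ⟨SemidirectProduct.inl (g.left * CoprodI.of x), ?_, ?_⟩
  · rw [mk_inl_eq, mk_eq]
    refine ⟨rfl, x, by simp⟩
  · have : wd (g.left * CoprodI.of x) = (CoprodI.Word.equivPair t (wd g.left)).tail := by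
      rw [CoprodI.Word.equivPair_tail_eq_inv_smul]
      simp only [wd, mul_inv_rev, mul_smul, ← map_inv]
      rfl
    rw [SemidirectProduct.left_inl, this]
    exact (CoprodI.Word.equivPair t (wd g.left)).fstIdx_ne

theorem tree_acyclic : (tree φ).IsAcyclic := by
  classical
  apply isAcyclic_of_depth (dep φ)
  have key : ∀ t (g₀ : GG φ), (wd g₀.left).fstIdx ≠ some t → ∀ n,
      (tree φ).Adj (mk φ t g₀) n → dep φ n ≤ dep φ (mk φ t g₀) → n = mk φ (!t) g₀ := by
    rintro t g₀ hg n ⟨s, h, h1, rfl⟩ hd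
    rw [mk_eq] at h1
    obtain ⟨rfl, x, hx⟩ := h1
    by_cases hx1 : x = 1
    · rw [eq_comm, mk_eq]
      exact ⟨rfl, 1, by simp [hx, hx1]⟩
    · exfalso
      set y := φ t g₀.right x with hy
      have hy1 : y ≠ 1 := by simpa [hy] using hx1
      have hy1' : y⁻¹ ≠ 1 := by simpa using hy1
      have hh : h.left = g₀.left * CoprodI.of y := by
        conv_lhs => rw [show h = g₀ * (g₀⁻¹ * h) by simp]
        rw [SemidirectProduct.mul_left, hx, Phi_of]
      have hw : wd h.left = CoprodI.Word.cons y⁻¹ (wd g₀.left) hg hy1' := by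
        rw [CoprodI.Word.cons_eq_smul, hh]
        simp only [wd, mul_inv_rev, mul_smul, ← map_inv]
      have hne : (wd h.left).fstIdx ≠ some (!t) := by
        rw [hw]; simp
      rw [dep_mk, dep_mk, CoprodI.Word.equivPair_eq_of_fstIdx_ne hg,
        CoprodI.Word.equivPair_eq_of_fstIdx_ne hne] at hd
      simp [hw] at hd
  intro v n₁ n₂ a1 a2 d1 d2
  obtain ⟨t, g, rfl⟩ := mk_surj φ v
  obtain ⟨g₀, hg, hw⟩ := exists_rep φ t g
  rw [hg] at a1 a2 d1 d2
  rw [key t g₀ hw _ a1 d1, key t g₀ hw _ a2 d2]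

theorem tree_isTree : (tree φ).IsTree := ⟨tree_connected φ, tree_acyclic φ⟩

theorem fix_mk {t : Bool} {g h : GG φ} (hf : treeAct φ g (mk φ t h) = mk φ t h) :
    h⁻¹ * g * h ∈ P φ t := by
  rw [treeAct_mk, mk_eq] at hf
  have := (P φ t).inv_mem hf.2
  simpa [mul_assoc] using this

/-- Neighbours of a based edge. -/
theorem nbr {t : Bool} {c : GG φ} {v : Vtx φ} (h : (tree φ).Adj (mk φ t c) v)
    (hv : v ≠ mk φ (!t) c) : ∃ x : K t, x ≠ 1 ∧
      v = mk φ (!t) (c * SemidirectProduct.inl (CoprodI.of x)) := by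
  obtain ⟨s, g, h1, rfl⟩ := h
  rw [mk_eq] at h1
  obtain ⟨rfl, x, hx⟩ := h1
  have heq : mk φ (!t) g = mk φ (!t) (c * SemidirectProduct.inl (CoprodI.of x)) := by
    rw [eq_comm, mk_eq]
    refine ⟨rfl, 1, ?_⟩
    rw [mul_inv_rev, mul_assoc, SemidirectProduct.mul_left, hx]
    simp [← map_mul]
  refine ⟨x, ?_, heq⟩
  rintro rfl
  apply hv
  rw [heq]; simp

theorem stab_three (v w : Vtx φ) (h3 : 3 ≤ (tree φ).dist v w) :
    ∃ (c : GG φ) (x : ∀ t, K t), (∀ t, x t ≠ 1) ∧ ∀ g : GG φ,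
      treeAct φ g v = v → treeAct φ g w = w →
        ∃ u : A, c⁻¹ * g * c = SemidirectProduct.inr u ∧ ∀ t, φ t u (x t) = x t := by
  obtain ⟨v₀, v₁, v₂, v₃, a01, a12, a23, n02, n13, hfix⟩ :=
    exists_three (tree_isTree φ) v w h3
  obtain ⟨t, c, rfl, rfl⟩ := a12
  obtain ⟨x, hx, rfl⟩ := nbr φ a01.symm n02
  obtain ⟨y, hy, rfl⟩ := nbr φ a23 (by simpa using n13.symm)
  have main : ∃ z : ∀ s, K s, z t = x ∧ z (!t) = y := by
    cases t
    · exact ⟨fun s => match s with | false => x | true => y, rfl, rfl⟩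
    · exact ⟨fun s => match s with | true => x | false => y, rfl, rfl⟩
  obtain ⟨z, rfl, rfl⟩ := main
  have hall : ∀ {p : Bool → Prop}, p t → p (!t) → ∀ s, p s := by
    intro p h1 h2 s
    cases t <;> cases s <;> assumption
  refine ⟨c, z, hall hx hy, ?_⟩
  intro g hgv hgw
  obtain ⟨f0, f1, f2, f3⟩ := hfix (treeAct φ g) hgv hgw
  obtain ⟨p, hp⟩ := fix_mk φ f1
  obtain ⟨q, hq⟩ := fix_mk φ f2
  have hp1 : p = 1 := of_eq_of_ne (by simp) p q (hp.symm.trans hq)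
  subst hp1
  refine ⟨(c⁻¹ * g * c).right, ?_, ?_⟩
  · ext
    · simpa using hp
    · simp
  · have hu : c⁻¹ * g * c = SemidirectProduct.inr (c⁻¹ * g * c).right := by
      ext
      · simpa using hp
      · simp
    generalize (c⁻¹ * g * c).right = u at hu
    have side : ∀ s, treeAct φ g (mk φ (!s) (c * SemidirectProduct.inl (CoprodI.of (z s)))) =
        mk φ (!s) (c * SemidirectProduct.inl (CoprodI.of (z s))) → φ s u (z s) = z s := by
      intro s hs
      obtain ⟨r, hr⟩ := fix_mk φ hs
      have : (c * SemidirectProduct.inl (CoprodI.of (z s)))⁻¹ * g *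
          (c * SemidirectProduct.inl (CoprodI.of (z s))) =
          (SemidirectProduct.inl (CoprodI.of (z s)))⁻¹ * (c⁻¹ * g * c) *
          (SemidirectProduct.inl (CoprodI.of (z s)) : GG φ) := by group
      rw [this, hu] at hr
      have hr' : (CoprodI.of ((z s)⁻¹ * φ s u (z s)) : CoprodI K) = CoprodI.of r := by
        rw [← hr]; simp
      have := of_eq_of_ne (by simp) _ _ hr'
      exact (inv_mul_eq_one.1 this).symm
    exact hall (side t f0) (side (!t) (by simpa using f3))

end Free
section Perm
variable {I : Type} {M : Type} [Group M] {A : Type} [Group A] [MulAction A I]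

noncomputable def permHom (u : A) : CoprodI (fun _ : I => M) →* CoprodI (fun _ : I => M) :=
  CoprodI.lift (fun c => CoprodI.of (M := fun _ : I => M) (i := u • c))

@[simp] theorem permHom_of (u : A) (c : I) (x : M) :
    permHom u (CoprodI.of (M := fun _ : I => M) (i := c) x) =
      CoprodI.of (M := fun _ : I => M) (i := u • c) x := by
  rw [permHom, CoprodI.lift_of]

theorem permHom_mul (u v : A) (k : CoprodI (fun _ : I => M)) :
    permHom (u * v) k = permHom u (permHom v k) := by
  have : (permHom (u * v) : CoprodI (fun _ : I => M) →* _) = (permHom u).comp (permHom v) := by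
    apply CoprodI.ext_hom
    intro t
    ext x
    rw [MonoidHom.comp_apply, MonoidHom.comp_apply, MonoidHom.comp_apply, permHom_of, permHom_of,
      permHom_of, mul_smul]
  rw [this]; rfl

theorem permHom_one (k : CoprodI (fun _ : I => M)) : permHom (1 : A) k = k := by
  have : (permHom (1 : A) : CoprodI (fun _ : I => M) →* _) = MonoidHom.id _ := by
    apply CoprodI.ext_hom
    intro t
    ext x
    rw [MonoidHom.comp_apply, permHom_of, one_smul]
    rfl
  rw [this]; rfl

variable (I M A) in
noncomputable def perm : A →* MulAut (CoprodI (fun _ : I => M)) where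
  toFun u :=
    { toFun := permHom u
      invFun := permHom u⁻¹
      left_inv := fun k => by rw [← permHom_mul, inv_mul_cancel, permHom_one]
      right_inv := fun k => by rw [← permHom_mul, mul_inv_cancel, permHom_one]
      map_mul' := map_mul _ }
  map_one' := by ext k; exact permHom_one k
  map_mul' u v := by ext k; exact permHom_mul u v k

@[simp] theorem perm_of (u : A) (c : I) (x : M) :
    perm I M A u (CoprodI.of (M := fun _ : I => M) (i := c) x) =
      CoprodI.of (M := fun _ : I => M) (i := u • c) x := permHom_of u c x

def mapWord (u : A) (w : CoprodI.Word (fun _ : I => M)) : CoprodI.Word (fun _ : I => M) where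
  toList := w.toList.map (fun p => ⟨u • p.1, p.2⟩)
  ne_one := by
    intro l hl
    obtain ⟨p, hp, rfl⟩ := List.mem_map.1 hl
    exact w.ne_one p hp
  chain_ne := by
    rw [List.isChain_map]
    refine w.chain_ne.imp ?_
    intro p q h h'
    exact h (MulAction.injective u h')

theorem prod_mapWord (u : A) (w : CoprodI.Word (fun _ : I => M)) :
    (mapWord u w).prod = perm I M A u w.prod := by
  simp only [CoprodI.Word.prod, mapWord, map_list_prod, List.map_map]
  congr 1

theorem perm_fix (k : CoprodI (fun _ : I => M)) (hk : k ≠ 1) :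
    ∃ c : I, ∀ u : A, perm I M A u k = k → u • c = c := by
  classical
  set w := CoprodI.Word.equiv k with hw
  have hwk : w.prod = k := CoprodI.Word.equiv.symm_apply_apply k
  rcases hl : w.toList with _ | ⟨⟨c, m⟩, l⟩
  · exfalso
    apply hk
    rw [← hwk, CoprodI.Word.prod, hl]
    simp
  · refine ⟨c, fun u hu => ?_⟩
    have h1 : (mapWord u w).prod = w.prod := by rw [prod_mapWord, hwk, hu]
    have h2 : mapWord u w = w := CoprodI.Word.equiv.symm.injective h1
    have h3 := congrArg (fun w => w.toList.head?.map Sigma.fst) h2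
    simpa [mapWord, hl] using h3

end Perm

section GP
variable {V : Type} {Γ : SimpleGraph V} {Gv : V → Type} [∀ v, Group (Gv v)]

open GraphProduct

noncomputable def gpLift {N : Type} [Group N] (f : ∀ v, Gv v →* N)
    (hf : ∀ u v, Γ.Adj u v → ∀ x y, Commute (f u x) (f v y)) : GraphProduct Γ Gv →* N :=
  QuotientGroup.lift _ (CoprodI.lift f) (by
    intro x hx
    have : Subgroup.normalClosure (graphProductRels Γ Gv) ≤ (CoprodI.lift f).ker := by
      apply Subgroup.normalClosure_le_normal
      rintro x ⟨u, v, huv, a, b, rfl⟩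
      have := hf u v huv a b
      simp only [SetLike.mem_coe, MonoidHom.mem_ker, map_mul, map_inv, CoprodI.lift_of]
      rw [this.eq]; group
    exact this hx)

@[simp] theorem gpLift_of {N : Type} [Group N] (f : ∀ v, Gv v →* N)
    (hf : ∀ u v, Γ.Adj u v → ∀ x y, Commute (f u x) (f v y)) (v : V) (x : Gv v) :
    gpLift f hf (GraphProduct.of Γ Gv v x) = f v x := by
  show CoprodI.lift f (CoprodI.of x) = f v x
  simp

theorem of_commute {u v : V} (h : Γ.Adj u v) (x : Gv u) (y : Gv v) :
    Commute (GraphProduct.of Γ Gv u x) (GraphProduct.of Γ Gv v y) := by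
  have : (QuotientGroup.mk' (Subgroup.normalClosure (graphProductRels Γ Gv)))
      (CoprodI.of x * CoprodI.of y * (CoprodI.of x)⁻¹ * (CoprodI.of y)⁻¹) = 1 :=
    (QuotientGroup.eq_one_iff _).2 (Subgroup.subset_normalClosure ⟨u, v, h, x, y, rfl⟩)
  simp only [map_mul, map_inv] at this
  rw [mul_inv_eq_one, mul_inv_eq_iff_eq_mul] at this
  exact this

theorem of_mem_full {S : Set V} {v : V} (hv : v ∈ S) (x : Gv v) :
    GraphProduct.of Γ Gv v x ∈ full Γ Gv S :=
  (le_iSup₂_of_le (f := fun v (_ : v ∈ S) => (GraphProduct.of Γ Gv v).range) v hv le_rfl) ⟨x, rfl⟩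

theorem full_le {S : Set V} {P : Subgroup (GraphProduct Γ Gv)}
    (h : ∀ v ∈ S, ∀ x, GraphProduct.of Γ Gv v x ∈ P) : full Γ Gv S ≤ P := by
  apply iSup₂_le
  rintro v hv _ ⟨x, rfl⟩
  exact h v hv x

theorem full_mono {S S' : Set V} (h : S ⊆ S') : full Γ Gv S ≤ full Γ Gv S' :=
  full_le fun _ hv x => of_mem_full (h hv) x

theorem full_commute {S : Set V} {v : V} (h : S ⊆ Γ.neighborSet v) {g : GraphProduct Γ Gv}
    (hg : g ∈ full Γ Gv S) (x : Gv v) : Commute g (GraphProduct.of Γ Gv v x) := by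
  have : full Γ Gv S ≤ Subgroup.centralizer {GraphProduct.of Γ Gv v x} := by
    apply full_le
    intro w hw y
    rw [Subgroup.mem_centralizer_singleton_iff]
    exact (of_commute (h hw) x y).symm
  exact Subgroup.mem_centralizer_singleton_iff.1 (this hg)

open Classical in
noncomputable def retr (B : Set V) : GraphProduct Γ Gv →* GraphProduct Γ Gv :=
  gpLift (fun v => if v ∈ B then GraphProduct.of Γ Gv v else 1) (by
    intro u v h x y
    by_cases hu : u ∈ B <;> by_cases hv : v ∈ B <;> simp [hu, hv, of_commute h])

theorem retr_mem {B S : Set V} {g : GraphProduct Γ Gv} (hg : g ∈ full Γ Gv S) :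
    retr B g ∈ full Γ Gv (B ∩ S) := by
  have : full Γ Gv S ≤ (full Γ Gv (B ∩ S)).comap (retr B) := by
    apply full_le
    intro v hv x
    rw [Subgroup.mem_comap, retr, gpLift_of]
    by_cases h : v ∈ B
    · simpa [h] using of_mem_full (S := B ∩ S) ⟨h, hv⟩ x
    · simp [h]
  exact this hg

theorem retr_eq {B : Set V} {g : GraphProduct Γ Gv} (hg : g ∈ full Γ Gv B) :
    retr B g = g := by
  have : full Γ Gv B ≤ (retr B).eqLocus (MonoidHom.id _) := by
    apply full_le
    intro v hv x
    show retr B _ = _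
    rw [retr, gpLift_of]
    simp [hv]
  exact this hg

/-- Intersections of conjugates of two full subgroups. -/
theorem conj_inter (B C : Set V) (p q : GraphProduct Γ Gv) : ∃ r, ∀ u : GraphProduct Γ Gv,
    p⁻¹ * u * p ∈ full Γ Gv B → q⁻¹ * u * q ∈ full Γ Gv C →
      r⁻¹ * u * r ∈ full Γ Gv (B ∩ C) := by
  refine ⟨p * retr B (p⁻¹ * q), fun u h1 h2 => ?_⟩
  have h3 := retr_eq h1
  have h4 := retr_mem (B := B) h2
  convert h4 using 1
  have : q⁻¹ * u * q = (p⁻¹ * q)⁻¹ * (p⁻¹ * u * p) * (p⁻¹ * q) := by group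
  rw [this, map_mul _ _ (p⁻¹ * q), map_mul _ _ (p⁻¹ * u * p), map_inv, h3]
  group

end GP
section Split
variable {V : Type} (Γ : SimpleGraph V) (Gv : V → Type) [∀ v, Group (Gv v)]
variable (S : Set V) (vt : Bool → V)

open GraphProduct

def DD : Set V := {v | v ∈ S ∧ ∀ t, v ≠ vt t}

abbrev AA : Type := full Γ Gv (DD S vt)

def LL (t : Bool) : Subgroup (AA Γ Gv S vt) :=
  (full Γ Gv (Γ.neighborSet (vt t) ∩ S)).subgroupOf (full Γ Gv (DD S vt))

abbrev KK (t : Bool) : Type := CoprodI (fun _ : AA Γ Gv S vt ⧸ LL Γ Gv S vt t => Gv (vt t))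

noncomputable def ph (t : Bool) : AA Γ Gv S vt →* MulAut (KK Γ Gv S vt t) :=
  perm (AA Γ Gv S vt ⧸ LL Γ Gv S vt t) (Gv (vt t)) (AA Γ Gv S vt)

noncomputable def baseK (t : Bool) (c : AA Γ Gv S vt ⧸ LL Γ Gv S vt t) :
    Gv (vt t) →* KK Γ Gv S vt t :=
  CoprodI.of (M := fun _ : AA Γ Gv S vt ⧸ LL Γ Gv S vt t => Gv (vt t)) (i := c)

theorem ph_base (t : Bool) (u : AA Γ Gv S vt) (c : AA Γ Gv S vt ⧸ LL Γ Gv S vt t)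
    (x : Gv (vt t)) :
    ph Γ Gv S vt t u (baseK Γ Gv S vt t c x) = baseK Γ Gv S vt t (u • c) x :=
  perm_of u c x

/-- The map from the `t`-part of the kernel back to the graph product. -/
noncomputable def psiK (t : Bool) : KK Γ Gv S vt t →* GraphProduct Γ Gv :=
  CoprodI.lift (fun c => (MulAut.conj (c.out : GraphProduct Γ Gv)).toMonoidHom.comp
    (GraphProduct.of Γ Gv (vt t)))

theorem psiK_base (t : Bool) (u : AA Γ Gv S vt) (x : Gv (vt t)) :
    psiK Γ Gv S vt t (baseK Γ Gv S vt t (QuotientGroup.mk u) x) =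
      u * GraphProduct.of Γ Gv (vt t) x * (u : GraphProduct Γ Gv)⁻¹ := by
  have h0 : psiK Γ Gv S vt t (baseK Γ Gv S vt t (QuotientGroup.mk u) x) =
      ((QuotientGroup.mk u : AA Γ Gv S vt ⧸ LL Γ Gv S vt t).out : GraphProduct Γ Gv) *
        GraphProduct.of Γ Gv (vt t) x *
      ((QuotientGroup.mk u : AA Γ Gv S vt ⧸ LL Γ Gv S vt t).out : GraphProduct Γ Gv)⁻¹ := by
    rw [psiK, baseK, CoprodI.lift_of]; rfl
  obtain ⟨l, hl⟩ := QuotientGroup.mk_out_eq_mul (LL Γ Gv S vt t) u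
  have hl' : ((l : AA Γ Gv S vt) : GraphProduct Γ Gv) ∈
      full Γ Gv (Γ.neighborSet (vt t) ∩ S) := Subgroup.mem_subgroupOf.1 l.2
  have hc := (full_commute Set.inter_subset_left hl' x).eq
  rw [h0, hl]
  simp only [Subgroup.coe_mul, mul_inv_rev, mul_assoc]
  rw [← mul_assoc _ (GraphProduct.of Γ Gv (vt t) x), hc]
  simp [mul_assoc]

theorem psiK_ph (t : Bool) (u : AA Γ Gv S vt) (k : KK Γ Gv S vt t) :
    psiK Γ Gv S vt t (ph Γ Gv S vt t u k) =
      u * psiK Γ Gv S vt t k * (u : GraphProduct Γ Gv)⁻¹ := by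
  have : (psiK Γ Gv S vt t).comp (ph Γ Gv S vt t u).toMonoidHom =
      (MulAut.conj (u : GraphProduct Γ Gv)).toMonoidHom.comp (psiK Γ Gv S vt t) := by
    apply CoprodI.ext_hom
    intro c
    ext x
    obtain ⟨v, rfl⟩ := QuotientGroup.mk_surjective c
    show psiK Γ Gv S vt t (ph Γ Gv S vt t u (baseK Γ Gv S vt t (QuotientGroup.mk v) x)) =
      u * psiK Γ Gv S vt t (baseK Γ Gv S vt t (QuotientGroup.mk v) x) *
        (u : GraphProduct Γ Gv)⁻¹
    rw [ph_base]
    have : u • (QuotientGroup.mk v : AA Γ Gv S vt ⧸ LL Γ Gv S vt t) =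
      QuotientGroup.mk (u * v) := rfl
    rw [this, psiK_base, psiK_base]
    simp [mul_assoc]
  exact DFunLike.congr_fun this k

theorem psiK_mem (t : Bool) (k : KK Γ Gv S vt t) :
    psiK Γ Gv S vt t k ∈ full Γ Gv (DD S vt ∪ {vt t}) := by
  have hD : full Γ Gv (DD S vt) ≤ full Γ Gv (DD S vt ∪ {vt t}) := full_mono Set.subset_union_left
  have : (psiK Γ Gv S vt t).range ≤ full Γ Gv (DD S vt ∪ {vt t}) := by
    apply CoprodI.lift_range_le
    rintro c _ ⟨x, rfl⟩
    exact mul_mem (mul_mem (hD c.out.2) (of_mem_full (by simp) x)) (inv_mem (hD c.out.2))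
  exact this ⟨k, rfl⟩

noncomputable def Psi : GG (ph Γ Gv S vt) →* GraphProduct Γ Gv :=
  SemidirectProduct.lift (CoprodI.lift (psiK Γ Gv S vt)) (full Γ Gv (DD S vt)).subtype (by
    intro u
    apply CoprodI.ext_hom
    intro t
    refine MonoidHom.ext fun k => ?_
    show CoprodI.lift (psiK Γ Gv S vt) (Phi (ph Γ Gv S vt) u (CoprodI.of k)) =
      u * CoprodI.lift (psiK Γ Gv S vt) (CoprodI.of k) * (u : GraphProduct Γ Gv)⁻¹
    rw [Phi_of, CoprodI.lift_of, CoprodI.lift_of, psiK_ph])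

theorem Psi_inr (u : AA Γ Gv S vt) :
    Psi Γ Gv S vt (SemidirectProduct.inr u) = u := by
  rw [Psi, SemidirectProduct.lift_inr]; rfl

theorem Psi_inl (t : Bool) (k : KK Γ Gv S vt t) :
    Psi Γ Gv S vt (SemidirectProduct.inl (CoprodI.of k)) = psiK Γ Gv S vt t k := by
  rw [Psi, SemidirectProduct.lift_inl, CoprodI.lift_of]

theorem Psi_mem (t : Bool) (g : GG (ph Γ Gv S vt)) (hg : g ∈ P (ph Γ Gv S vt) t) :
    Psi Γ Gv S vt g ∈ full Γ Gv (DD S vt ∪ {vt t}) := by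
  obtain ⟨k, hk⟩ := hg
  rw [← SemidirectProduct.inl_left_mul_inr_right g, map_mul, hk, Psi_inl, Psi_inr]
  exact mul_mem (psiK_mem _ _ _ _ _ _) (full_mono Set.subset_union_left g.right.2)

theorem exists_Theta (hinj : Function.Injective vt) (hnadj : ∀ s t, ¬ Γ.Adj (vt s) (vt t)) :
    ∃ Θ : GraphProduct Γ Gv →* GG (ph Γ Gv S vt),
      ∀ g ∈ full Γ Gv S, Psi Γ Gv S vt (Θ g) = g := by
  classical
  let base : ∀ t, Gv (vt t) →* GG (ph Γ Gv S vt) := fun t =>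
    SemidirectProduct.inl.comp (CoprodI.of.comp (baseK Γ Gv S vt t (QuotientGroup.mk 1)))
  have hex : ∀ v, ∃ f : Gv v →* GG (ph Γ Gv S vt),
      (∀ t (h : vt t = v), ∀ x, f (h ▸ x) = base t x) ∧
      (∀ h : v ∈ DD S vt, ∀ x, f x = SemidirectProduct.inr ⟨_, of_mem_full h x⟩) ∧
      (v ∉ DD S vt → (∀ t, vt t ≠ v) → f = 1) := by
    intro v
    by_cases hv : ∃ t, vt t = v
    · obtain ⟨t, rfl⟩ := hv
      refine ⟨base t, ?_, ?_, ?_⟩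
      · intro s h x
        obtain rfl := hinj h
        rfl
      · intro h; exact absurd rfl (h.2 t)
      · intro _ h; exact absurd rfl (h t)
    · push Not at hv
      by_cases hD : v ∈ DD S vt
      · refine ⟨SemidirectProduct.inr.comp
          ((GraphProduct.of Γ Gv v).codRestrict (full Γ Gv (DD S vt)) (of_mem_full hD)),
          fun t h => absurd h (hv t), fun h x => rfl, fun h => absurd hD h⟩
      · exact ⟨1, fun t h => absurd h (hv t), fun h => absurd h hD, fun _ _ => rfl⟩
  choose f hf1 hf2 hf3 using hex
  have hf1' : ∀ t x, f (vt t) x = base t x := fun t x => hf1 (vt t) t rfl x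
  have hbc : ∀ t v, Γ.Adj (vt t) v → ∀ x y, Commute (f (vt t) x) (f v y) := by
    intro t v hadj x y
    by_cases hv : ∃ s, vt s = v
    · obtain ⟨s, rfl⟩ := hv
      exact absurd hadj (hnadj t s)
    push Not at hv
    by_cases hD : v ∈ DD S vt
    · rw [hf1', hf2 v hD]
      set u : AA Γ Gv S vt := ⟨_, of_mem_full hD y⟩
      have hu : u ∈ LL Γ Gv S vt t :=
        Subgroup.mem_subgroupOf.2 (of_mem_full (S := Γ.neighborSet (vt t) ∩ S) ⟨hadj, hD.1⟩ y)
      have hfix : ph Γ Gv S vt t u (baseK Γ Gv S vt t (QuotientGroup.mk 1) x) =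
          baseK Γ Gv S vt t (QuotientGroup.mk 1) x := by
        rw [ph_base]
        congr 2
        show (QuotientGroup.mk (u * 1) : AA Γ Gv S vt ⧸ LL Γ Gv S vt t) = QuotientGroup.mk 1
        rw [mul_one, eq_comm, QuotientGroup.eq]
        simpa using hu
      have := SemidirectProduct.inl_aut (φ := Phi (ph Γ Gv S vt)) u
        (CoprodI.of (baseK Γ Gv S vt t (QuotientGroup.mk 1) x))
      rw [Phi_of, hfix, map_inv, eq_mul_inv_iff_mul_eq] at this
      exact this
    · rw [hf3 v hD hv]
      exact Commute.one_right _
  have hcomm : ∀ u v, Γ.Adj u v → ∀ x y, Commute (f u x) (f v y) := by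
    intro u v hadj x y
    by_cases hu : ∃ t, vt t = u
    · obtain ⟨t, rfl⟩ := hu
      exact hbc t v hadj x y
    by_cases hv : ∃ t, vt t = v
    · obtain ⟨t, rfl⟩ := hv
      exact (hbc t u hadj.symm y x).symm
    push Not at hu hv
    by_cases hDu : u ∈ DD S vt
    · by_cases hDv : v ∈ DD S vt
      · rw [hf2 u hDu, hf2 v hDv]
        apply Commute.map
        exact Subtype.ext (of_commute hadj x y)
      · rw [hf3 v hDv hv]; exact Commute.one_right _
    · rw [hf3 u hDu hu]; exact Commute.one_left _
  refine ⟨gpLift f hcomm, ?_⟩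
  · intro g hg
    have : full Γ Gv S ≤ ((Psi Γ Gv S vt).comp (gpLift f hcomm)).eqLocus (MonoidHom.id _) := by
      apply full_le
      intro v hv x
      show Psi Γ Gv S vt (gpLift f hcomm _) = _
      rw [gpLift_of]
      by_cases ht : ∃ t, vt t = v
      · obtain ⟨t, rfl⟩ := ht
        rw [hf1']
        show Psi Γ Gv S vt (SemidirectProduct.inl (CoprodI.of _)) = _
        rw [Psi_inl, psiK_base]
        simp
      · push Not at ht
        rw [hf2 v ⟨hv, fun t => (ht t).symm⟩, Psi_inr]
        rfl
    exact this hg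

/-- An element of `A` fixing a nontrivial element of `K t` lies in a fixed conjugate of the
full subgroup on the link. -/
theorem stab_link (t : Bool) (k : KK Γ Gv S vt t) (hk : k ≠ 1) :
    ∃ p : GraphProduct Γ Gv, ∀ u : AA Γ Gv S vt, ph Γ Gv S vt t u k = k →
      p⁻¹ * u * p ∈ full Γ Gv (Γ.neighborSet (vt t) ∩ S) := by
  obtain ⟨c, hc⟩ := perm_fix (A := AA Γ Gv S vt) k hk
  obtain ⟨p, rfl⟩ := QuotientGroup.mk_surjective c
  refine ⟨p, fun u hu => ?_⟩
  have h1 : (QuotientGroup.mk (u * p) : AA Γ Gv S vt ⧸ LL Γ Gv S vt t) = QuotientGroup.mk p :=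
    hc u hu
  rw [eq_comm, QuotientGroup.eq] at h1
  have := Subgroup.mem_subgroupOf.1 h1
  simpa [mul_assoc] using this

end Split

theorem mem_conj {G : Type*} [Group G] {g x : G} {H : Subgroup G} :
    x ∈ conjSubgroup g H ↔ g⁻¹ * x * g ∈ H := by
  constructor
  · rintro ⟨y, hy, rfl⟩
    simpa [mul_assoc] using hy
  · intro h
    exact ⟨_, h, by simp [mul_assoc]⟩

end SubArb

theorem subgroup_of_graphProduct_acylindricallyArboreal {V : Type} [Fintype V]
    (Γ : SimpleGraph V) (Gv : V → Type) [∀ v, Group (Gv v)]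
    (hnd : GraphProduct.NonDegenerate Gv)
    (H : Subgroup (GraphProduct Γ Gv)) (S : Set V)
    (hS : GraphProduct.IsEssentialSupport Γ Gv H S)
    (a b : V) (ha : a ∈ S) (hb : b ∈ S) (hab : a ≠ b) (hnadj : ¬ Γ.Adj a b)
    (hfin : Finite (GraphProduct.full Γ Gv (Γ.neighborSet a ∩ Γ.neighborSet b ∩ S))) :
    AcylindricallyArboreal H ∨ IsVirtuallyCyclic H := by

  classical
  obtain ⟨⟨g₀, hg₀⟩, hmin⟩ := hS
  let vt : Bool → V := fun t => match t with | true => a | false => b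
  have hvS : ∀ t, vt t ∈ S := by rintro (_ | _) <;> assumption
  have hinj : Function.Injective vt := by
    rintro (_ | _) (_ | _) h
    · rfl
    · exact absurd h.symm hab
    · exact absurd h hab
    · rfl
  have hna : ∀ s t, ¬ Γ.Adj (vt s) (vt t) := by
    rintro (_ | _) (_ | _) h
    · exact Γ.irrefl h
    · exact hnadj h.symm
    · exact hnadj h
    · exact Γ.irrefl h
  obtain ⟨Θ, hΘ⟩ := SubArb.exists_Theta Γ Gv S vt hinj hna
  let φ := SubArb.ph Γ Gv S vt
  let ι : H →* SubArb.GG φ := (Θ.comp (MulAut.conj g₀⁻¹).toMonoidHom).comp H.subtype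
  have hι : ∀ h : H, SubArb.Psi Γ Gv S vt (ι h) = g₀⁻¹ * h * g₀ := by
    intro h
    have h1 := SubArb.mem_conj.1 (hg₀ h.2)
    have h2 : ι h = Θ (g₀⁻¹ * h * g₀) := by
      show Θ (MulAut.conj g₀⁻¹ h) = _
      simp
    rw [h2]
    exact hΘ _ h1
  let T : TreeAction H := ⟨SubArb.Vtx φ, SubArb.tree φ, SubArb.tree_isTree φ,
    (SubArb.treeAct φ).comp ι⟩
  by_cases hvc : IsVirtuallyCyclic H
  · exact Or.inr hvc
  refine Or.inl ⟨T, ?_, ?_, hvc⟩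
  · -- acylindricity
    set F := GraphProduct.full Γ Gv (Γ.neighborSet a ∩ Γ.neighborSet b ∩ S)
    have : Finite F := hfin
    refine ⟨3, Nat.card F, Nat.card_pos, ?_⟩
    intro x y hxy
    obtain ⟨c, z, hz1, hz⟩ := SubArb.stab_three φ x y hxy
    choose p hp using fun t => SubArb.stab_link Γ Gv S vt t (z t) (hz1 t)
    obtain ⟨r, hr⟩ := SubArb.conj_inter (Γ.neighborSet a ∩ S) (Γ.neighborSet b ∩ S)
      (p true) (p false)
    have hsub : (Γ.neighborSet a ∩ S) ∩ (Γ.neighborSet b ∩ S) =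
        Γ.neighborSet a ∩ Γ.neighborSet b ∩ S := by
      ext v; simp; tauto
    rw [hsub] at hr
    let d : GraphProduct Γ Gv := g₀ * SubArb.Psi Γ Gv S vt c * r
    have hd : ∀ h : H, T.act h x = x ∧ T.act h y = y → d⁻¹ * h * d ∈ F := by
      rintro h ⟨h1, h2⟩
      obtain ⟨u, hu, hfix⟩ := hz (ι h) h1 h2
      have h3 := hr u (hp true u (hfix true)) (hp false u (hfix false))
      have h4 := congrArg (SubArb.Psi Γ Gv S vt) hu
      rw [map_mul, map_mul, map_inv, hι, SubArb.Psi_inr] at h4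
      rw [← h4] at h3
      convert h3 using 1
      simp only [d]
      group
    let e : H → GraphProduct Γ Gv := fun h => d⁻¹ * h * d
    have he : Function.Injective e := by
      intro h h' hh
      apply Subtype.ext
      simpa [e] using hh
    have hFfin : (F : Set (GraphProduct Γ Gv)).Finite := Set.toFinite _
    have hmaps : ∀ h ∈ {g : H | T.act g x = x ∧ T.act g y = y}, e h ∈
        (F : Set (GraphProduct Γ Gv)) := fun h hh => hd h hh
    refine ⟨Set.Finite.of_injOn hmaps he.injOn hFfin, ?_⟩
    have := Set.ncard_le_ncard_of_injOn e hmaps he.injOn hFfin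
    exact this
  · -- unbounded orbits
    rintro ⟨x, B, hB⟩
    obtain ⟨v, hv⟩ := SubArb.exists_fixed (SubArb.tree_isTree φ) T.act (SubArb.ty φ)
      (fun _ _ h => SubArb.ty_ne φ h) (fun h w => SubArb.ty_act φ (ι h) w) x B hB
    obtain ⟨t, c, rfl⟩ := SubArb.mk_surj φ v
    have hle : H ≤ conjSubgroup (g₀ * SubArb.Psi Γ Gv S vt c)
        (GraphProduct.full Γ Gv (SubArb.DD S vt ∪ {vt t})) := by
      intro h hh
      rw [SubArb.mem_conj]
      have h1 : SubArb.treeAct φ (ι ⟨h, hh⟩) (SubArb.mk φ t c) = SubArb.mk φ t c := hv ⟨h, hh⟩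
      have h2 := SubArb.Psi_mem Γ Gv S vt t _ (SubArb.fix_mk φ h1)
      rw [map_mul, map_mul, map_inv, hι] at h2
      convert h2 using 1
      group
    rcases hmin _ _ hle (hvS (!t)) with h | h
    · exact h.2 (!t) rfl
    · have := hinj h
      simp at this
end

section
/- Let G be a group with a non-elementary acylindrical action on a tree T, and let H ≤ G be s-normal, i.e., gHg⁻¹ ∩ H is infinite for every g ∈ G. Then H is acylindrically arboreal. In particular every finite index subgroup of an acylindrically arboreal group is acylindrically arboreal. -/
/-- A subgroup `H ≤ G` is s-normal if `gHg⁻¹ ∩ H` is infinite for every `g ∈ G`. -/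
def SNormal {G : Type*} [Group G] (H : Subgroup G) : Prop :=
  ∀ g : G, Infinite (conjSubgroup g H ⊓ H : Subgroup G)

namespace ArborealAux

open SimpleGraph

/-- `v` lies on the geodesic from `a` to `c`. -/
def Btw {V : Type} (T : SimpleGraph V) (a v c : V) : Prop :=
  T.dist a v + T.dist v c = T.dist a c

section Tree

variable {V : Type} {T : SimpleGraph V}

theorem mem_support_of_btw (hT : T.IsTree) {a v c : V} (h : Btw T a v c) (w : T.Walk a c) :
    v ∈ w.support := by
  classical
  obtain ⟨p, hp⟩ := hT.1.exists_walk_length_eq_dist a v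
  obtain ⟨q, hq⟩ := hT.1.exists_walk_length_eq_dist v c
  have hpath : (p.append q).IsPath := by
    apply Walk.isPath_of_length_eq_dist
    rw [Walk.length_append, hp, hq]
    exact h
  have hu := (hT.existsUnique_path a c).unique hpath w.bypass_isPath
  apply w.support_bypass_subset_support
  rw [← hu, Walk.mem_support_append_iff]
  left
  simp

theorem btw_of_mem_support (hT : T.IsTree) {a v c : V} (p : T.Walk a c)
    (hp : p.length = T.dist a c) (hv : v ∈ p.support) : Btw T a v c := by
  classical
  have h1 := dist_le (p.takeUntil v hv)
  have h2 := dist_le (p.dropUntil v hv)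
  have h3 := congrArg Walk.length (p.take_spec hv)
  rw [Walk.length_append] at h3
  have h4 := hT.1.dist_triangle (u := a) (v := v) (w := c)
  unfold Btw
  omega

theorem Btw.symm {a v c : V} (h : Btw T a v c) : Btw T c v a := by
  unfold Btw at *
  rw [T.dist_comm (u := c) (v := v), T.dist_comm (u := v) (v := a), T.dist_comm (u := c) (v := a)]
  omega

theorem Btw.split (hT : T.IsTree) {a v c : V} (h : Btw T a v c) (b : V) :
    Btw T a v b ∨ Btw T b v c := by
  obtain ⟨p, hp⟩ := hT.1.exists_walk_length_eq_dist a b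
  obtain ⟨q, hq⟩ := hT.1.exists_walk_length_eq_dist b c
  have := mem_support_of_btw hT h (p.append q)
  rw [Walk.mem_support_append_iff] at this
  exact this.imp (btw_of_mem_support hT p hp) (btw_of_mem_support hT q hq)

theorem finite_btw (hT : T.IsTree) (a c : V) : {v | Btw T a v c}.Finite := by
  classical
  obtain ⟨p, hp⟩ := hT.1.exists_walk_length_eq_dist a c
  exact (p.support.toFinset.finite_toSet).subset fun v hv => by
    simpa using mem_support_of_btw hT hv p

theorem exists_btw (hT : T.IsTree) (a c : V) (n : ℕ) (hn : n ≤ T.dist a c) :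
    ∃ v, Btw T a v c ∧ T.dist a v = n := by
  obtain ⟨p, hp⟩ := hT.1.exists_walk_length_eq_dist a c
  refine ⟨p.getVert n, btw_of_mem_support hT p hp (p.getVert_mem_support n), ?_⟩
  have h1 := dist_le (p.take n)
  have h2 := dist_le (p.drop n)
  have h4 := hT.1.dist_triangle (u := a) (v := p.getVert n) (w := c)
  rw [Walk.take_length] at h1
  rw [Walk.drop_length] at h2
  omega

theorem Btw.dist_eq (hT : T.IsTree) {a v v' c : V} (h : Btw T a v c) (h' : Btw T a v' c)
    (hle : T.dist a v ≤ T.dist a v') : T.dist a v + T.dist v v' = T.dist a v' := by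
  rcases h.split hT v' with h1 | h1
  · exact h1
  · unfold Btw at *
    rw [T.dist_comm (u := v') (v := v)] at h1
    omega

/-- Local geodesics are geodesics. -/
theorem four_point (hT : T.IsTree) {a b c d : V} (h1 : Btw T a b c) (h2 : Btw T b c d)
    (hne : b ≠ c) : T.dist a d = T.dist a b + T.dist b c + T.dist c d := by
  have hpos := hT.1.pos_dist_of_ne hne
  rcases h1.split hT d with h | h
  · unfold Btw at *; omega
  · unfold Btw at *
    rw [T.dist_comm (u := d) (v := b), T.dist_comm (u := d) (v := c)] at h
    omega

/-- If `b` is not on the geodesic from `a` to `c`, the geodesics from `b` share a first vertex. -/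
theorem exists_common (hT : T.IsTree) {a b c : V} (h : ¬ Btw T a b c) :
    ∃ q, T.dist b q = 1 ∧ Btw T b q a ∧ Btw T b q c := by
  have hba : b ≠ a := by
    rintro rfl
    apply h
    simp [Btw]
  have hpos := hT.1.pos_dist_of_ne hba
  obtain ⟨q, hq, hq1⟩ := exists_btw hT b a 1 hpos
  refine ⟨q, hq1, hq, ?_⟩
  have hadj : T.Adj b q := dist_eq_one_iff_adj.mp hq1
  rcases hT.dist_eq_dist_add_one_of_adj c hadj with h1 | h1
  · unfold Btw
    rw [T.dist_comm (u := q) (v := c), T.dist_comm (u := b) (v := c)]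
    omega
  · exfalso
    apply h
    have h2 : Btw T q b c := by
      unfold Btw
      rw [T.dist_comm (u := q) (v := b), T.dist_comm (u := b) (v := c),
        T.dist_comm (u := q) (v := c)]
      omega
    have h3 := four_point hT hq.symm h2 hadj.ne'
    unfold Btw at *
    rw [T.dist_comm (u := b) (v := a)] at hq
    rw [T.dist_comm (u := q) (v := a)] at hq
    rw [T.dist_comm (u := q) (v := b)] at h3
    omega

theorem iso_dist_le (f : T ≃g T) (hT : T.IsTree) (x y : V) :
    T.dist (f x) (f y) ≤ T.dist x y := by
  obtain ⟨p, hp⟩ := hT.1.exists_walk_length_eq_dist x y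
  have := dist_le (p.map f.toHom)
  rw [Walk.length_map, hp] at this
  exact this

theorem iso_dist (f : T ≃g T) (hT : T.IsTree) (x y : V) :
    T.dist (f x) (f y) = T.dist x y := by
  refine le_antisymm (iso_dist_le f hT x y) ?_
  have := iso_dist_le f.symm hT (f x) (f y)
  simpa using this

end Tree

section Action

variable {G : Type} [Group G] (A : TreeAction G)

theorem act_mul (g h : G) (x : A.V) : A.act (g * h) x = A.act g (A.act h x) := by
  rw [map_mul]; rfl

theorem act_one (x : A.V) : A.act 1 x = x := by
  rw [map_one]; rfl

theorem act_dist (g : G) (x y : A.V) : A.T.dist (A.act g x) (A.act g y) = A.T.dist x y :=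
  iso_dist _ A.isTree x y

theorem act_inv_act (g : G) (x : A.V) : A.act g⁻¹ (A.act g x) = x := by
  rw [← act_mul, inv_mul_cancel, act_one]

theorem act_btw (g : G) {x y z : A.V} (h : Btw A.T x y z) :
    Btw A.T (A.act g x) (A.act g y) (A.act g z) := by
  unfold Btw at *
  simpa only [act_dist] using h

/-- Finitely many elements send a far apart pair into a finite set. -/
theorem finite_of_pair {k C : ℕ} (hA : A.KCAcylindrical k C) {p q : A.V}
    (hpq : k ≤ A.T.dist p q) {F : Set A.V} (hF : F.Finite) :
    {g : G | A.act g p ∈ F ∧ A.act g q ∈ F}.Finite := by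
  by_contra hinf
  have hinf' : {g : G | A.act g p ∈ F ∧ A.act g q ∈ F}.Infinite := hinf
  have := hinf'.to_subtype
  have := hF.to_subtype
  let f : {g : G | A.act g p ∈ F ∧ A.act g q ∈ F} → F × F :=
    fun g => (⟨_, g.2.1⟩, ⟨_, g.2.2⟩)
  obtain ⟨y, hy⟩ := Finite.exists_infinite_fiber f
  obtain ⟨g0⟩ := hy.nonempty
  have hst := (hA p q hpq).1.to_subtype
  let e : f ⁻¹' {y} → {g : G | A.act g p = p ∧ A.act g q = q} := fun g =>
    ⟨g0.1.1⁻¹ * g.1.1, by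
      have h1 : f g.1 = f g0.1 := by rw [g.2, g0.2]
      have h2 : A.act g.1.1 p = A.act g0.1.1 p := congrArg (fun z => (z.1 : A.V)) h1
      have h3 : A.act g.1.1 q = A.act g0.1.1 q := congrArg (fun z => (z.2 : A.V)) h1
      constructor
      · rw [act_mul, h2, act_inv_act]
      · rw [act_mul, h3, act_inv_act]⟩
  have he : Function.Injective e := by
    intro g g' h
    have h1 : g0.1.1⁻¹ * g.1.1 = g0.1.1⁻¹ * g'.1.1 := congrArg (fun z => z.1) h
    exact Subtype.ext (Subtype.ext (mul_left_cancel h1))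
  have := Finite.of_injective e he
  exact not_finite (f ⁻¹' {y})

/-- Elements moving two far apart points little form a finite set. -/
theorem finite_coarse {k C : ℕ} (hA : A.KCAcylindrical k C) (B : ℕ) {x y : A.V}
    (hxy : k + 2 * B + 2 ≤ A.T.dist x y) :
    {g : G | A.T.dist x (A.act g x) ≤ B ∧ A.T.dist y (A.act g y) ≤ B}.Finite := by
  have hT := A.isTree
  obtain ⟨p, hp, hp1⟩ := exists_btw hT x y (B + 1) (by omega)
  obtain ⟨q, hq, hq1⟩ := exists_btw hT x y (B + 1 + k) (by omega)
  have hpq := hp.dist_eq hT hq (by omega)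
  refine (finite_of_pair A hA (p := p) (q := q) (by omega) (finite_btw hT x y)).subset ?_
  have key : ∀ g : G, A.T.dist x (A.act g x) ≤ B → A.T.dist y (A.act g y) ≤ B →
      ∀ r, Btw A.T x r y → B < A.T.dist x r → B < A.T.dist r y →
        Btw A.T x (A.act g r) y := by
    intro g h1 h2 r hr hr1 hr2
    have hgr := act_btw A g hr
    have e1 := act_dist A g x r
    have e2 := act_dist A g r y
    rcases hgr.split hT x with h | h
    · unfold Btw at h
      rw [A.T.dist_comm (u := A.act g x) (v := x)] at h
      omega
    rcases h.split hT y with h | h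
    · exact h
    · unfold Btw at h
      omega
  rintro g ⟨h1, h2⟩
  unfold Btw at hp hq
  exact ⟨key g h1 h2 p hp (by omega) (by omega), key g h1 h2 q hq (by omega) (by omega)⟩

theorem act_zpow_fixed {h : G} {p : A.V} (hp : A.act h p = p) (n : ℤ) :
    A.act (h ^ n) p = p := by
  have hinv : A.act h⁻¹ p = p := by
    conv_lhs => rw [← hp]
    exact act_inv_act A h p
  induction n using Int.induction_on with
  | zero => rw [zpow_zero, act_one]
  | succ i ih => rw [zpow_add_one, act_mul, hp, ih]
  | pred i ih => rw [zpow_sub_one, act_mul, hinv, ih]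

/-- An element with unbounded orbits translates some vertex along an axis. -/
theorem exists_axis_point (h : G)
    (hub : ∀ (x : A.V) (B : ℕ), ∃ n : ℤ, B < A.T.dist x (A.act (h ^ n) x)) :
    ∃ p : A.V, p ≠ A.act h p ∧ Btw A.T p (A.act h p) (A.act h (A.act h p)) := by
  classical
  have hT := A.isTree
  have := hT.1.nonempty
  obtain ⟨p, hp⟩ : ∃ p : A.V, ∀ q, A.T.dist p (A.act h p) ≤ A.T.dist q (A.act h q) := by
    let S : Set ℕ := Set.range fun q : A.V => A.T.dist q (A.act h q)
    have hS : S.Nonempty := Set.range_nonempty _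
    obtain ⟨p, hp⟩ := Nat.sInf_mem hS
    refine ⟨p, fun q => ?_⟩
    have h1 : sInf S ≤ A.T.dist q (A.act h q) := Nat.sInf_le ⟨q, rfl⟩
    have h2 : A.T.dist p (A.act h p) = sInf S := hp
    omega
  have hne : p ≠ A.act h p := by
    intro hfix
    obtain ⟨n, hn⟩ := hub p 0
    rw [act_zpow_fixed A hfix.symm, SimpleGraph.dist_self] at hn
    omega
  have hne2 : A.act h (A.act h p) ≠ p := by
    intro hfix
    rw [← act_mul] at hfix
    obtain ⟨n, hn⟩ := hub p (A.T.dist p (A.act h p))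
    rcases Int.even_or_odd' n with ⟨m, rfl | rfl⟩
    · rw [zpow_mul, zpow_two, act_zpow_fixed A hfix, SimpleGraph.dist_self] at hn
      omega
    · rw [add_comm, zpow_add, zpow_one, act_mul, zpow_mul, zpow_two, act_zpow_fixed A hfix] at hn
      omega
  refine ⟨p, hne, ?_⟩
  by_contra hnb
  obtain ⟨q, hq1, hq2, hq3⟩ := exists_common hT hnb
  have hpos := hT.1.pos_dist_of_ne hne
  set r := A.act h⁻¹ q with hr
  have hrq : A.act h r = q := by rw [hr, ← act_mul, mul_inv_cancel, act_one]
  have hr1 : A.T.dist p r = 1 := by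
    rw [← act_dist A h, hrq]; exact hq1
  have hr2 : Btw A.T p r (A.act h p) := by
    have := act_btw A h⁻¹ hq3
    rwa [act_inv_act, act_inv_act] at this
  have hq4 := hq2.symm
  have hq5 : A.T.dist p q + 1 = A.T.dist p (A.act h p) := by
    unfold Btw at hq4
    rw [A.T.dist_comm (u := q), hq1] at hq4
    exact hq4
  by_cases hl : 2 ≤ A.T.dist p (A.act h p)
  · have h1 := hr2.dist_eq hT hq4 (by omega)
    have h2 := hp r
    rw [hrq] at h2
    omega
  · have h1 : A.T.dist p q = 0 := by omega
    have h2 : p = q := hT.1.dist_eq_zero_iff.mp h1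
    unfold Btw at hr2
    have h3 : A.T.dist r (A.act h p) = 0 := by omega
    have h4 : r = A.act h p := hT.1.dist_eq_zero_iff.mp h3
    apply hne2
    rw [← h4, hrq, h2]

section Axis

variable {A} {h : G} {p : A.V}

theorem axis_dist_nat (hne : p ≠ A.act h p)
    (hb : Btw A.T p (A.act h p) (A.act h (A.act h p))) (n : ℕ) :
    A.T.dist p (A.act (h ^ n) p) = n * A.T.dist p (A.act h p) ∧
    A.T.dist p (A.act (h ^ (n + 1)) p) = (n + 1) * A.T.dist p (A.act h p) := by
  induction n with
  | zero => simp
  | succ n ih =>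
    obtain ⟨h1, h2⟩ := ih
    refine ⟨h2, ?_⟩
    have e1 : A.act (h ^ n) (A.act h p) = A.act (h ^ (n + 1)) p := by rw [pow_succ, act_mul]
    have e2 : A.act (h ^ n) (A.act h (A.act h p)) = A.act (h ^ (n + 1 + 1)) p := by
      rw [pow_succ, pow_succ, act_mul, act_mul]
    have d1 : A.T.dist (A.act (h ^ n) p) (A.act (h ^ (n + 1)) p) = A.T.dist p (A.act h p) := by
      rw [← e1, act_dist]
    have d2 : A.T.dist (A.act (h ^ (n + 1)) p) (A.act (h ^ (n + 1 + 1)) p)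
        = A.T.dist p (A.act h p) := by
      rw [← e1, ← e2, act_dist, act_dist]
    have b1 : Btw A.T p (A.act (h ^ n) p) (A.act (h ^ (n + 1)) p) := by
      unfold Btw; rw [h1, h2, d1]; ring
    have b2 := act_btw A (h ^ n) hb
    rw [e1, e2] at b2
    have hn : A.act (h ^ n) p ≠ A.act (h ^ (n + 1)) p := by
      intro hh
      rw [← e1] at hh
      exact hne ((A.act (h ^ n)).injective hh)
    rw [four_point A.isTree b1 b2 hn, h1, d1, d2]
    push_cast
    ring

theorem axis_dist (hne : p ≠ A.act h p)
    (hb : Btw A.T p (A.act h p) (A.act h (A.act h p))) (i : ℤ) (n : ℕ) :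
    A.T.dist (A.act (h ^ i) p) (A.act (h ^ (i + n)) p) = n * A.T.dist p (A.act h p) := by
  rw [zpow_add, act_mul, act_dist, zpow_natCast]
  exact (axis_dist_nat hne hb n).1

theorem axis_btw (hne : p ≠ A.act h p)
    (hb : Btw A.T p (A.act h p) (A.act h (A.act h p))) {i j l : ℤ} (hij : i ≤ j) (hjl : j ≤ l) :
    Btw A.T (A.act (h ^ i) p) (A.act (h ^ j) p) (A.act (h ^ l) p) := by
  obtain ⟨a, rfl⟩ := Int.le.dest hij
  obtain ⟨b, rfl⟩ := Int.le.dest hjl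
  unfold Btw
  rw [axis_dist hne hb, axis_dist hne hb, add_assoc, ← Nat.cast_add, axis_dist hne hb]
  ring

/-- The axis through the orbit of `p`. -/
def axis (A : TreeAction G) (h : G) (p : A.V) : Set A.V :=
  {v | ∃ a : ℕ, Btw A.T (A.act (h ^ (-(a : ℤ))) p) v (A.act (h ^ (a : ℤ)) p)}

theorem axis_far (hne : p ≠ A.act h p)
    (hb : Btw A.T p (A.act h p) (A.act h (A.act h p))) {R a : ℕ} (hRa : R ≤ a) {v : A.V}
    (hv : Btw A.T (A.act (h ^ (-(a : ℤ))) p) v (A.act (h ^ (a : ℤ)) p))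
    (hd : A.T.dist p v < R) :
    Btw A.T (A.act (h ^ (-(R : ℤ))) p) v (A.act (h ^ (R : ℤ)) p) := by
  have hT := A.isTree
  have hpos := hT.1.pos_dist_of_ne hne
  have hR : R ≤ R * A.T.dist p (A.act h p) := Nat.le_mul_of_pos_right _ hpos
  rcases hv.split hT (A.act (h ^ (-(R : ℤ))) p) with h1 | h1
  · exfalso
    have h2 := axis_btw hne hb (i := -(a : ℤ)) (j := -(R : ℤ)) (l := 0) (by omega) (by omega)
    have h3 := axis_dist hne hb (-(R : ℤ)) R
    rw [neg_add_cancel] at h3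
    rw [zpow_zero, act_one] at h2 h3
    have h4 := hT.1.dist_triangle (u := A.act (h ^ (-(a : ℤ))) p) (v := v) (w := p)
    rw [A.T.dist_comm (u := v) (v := p)] at h4
    unfold Btw at h1 h2
    omega
  rcases h1.split hT (A.act (h ^ (R : ℤ)) p) with h1 | h1
  · exact h1
  · exfalso
    have h2 := axis_btw hne hb (i := 0) (j := (R : ℤ)) (l := (a : ℤ)) (by omega) (by omega)
    have h3 := axis_dist hne hb 0 R
    rw [zero_add] at h3
    rw [zpow_zero, act_one] at h2 h3
    have h4 := hT.1.dist_triangle (u := p) (v := v) (w := A.act (h ^ (a : ℤ)) p)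
    unfold Btw at h1 h2
    omega

theorem axis_mono (hne : p ≠ A.act h p)
    (hb : Btw A.T p (A.act h p) (A.act h (A.act h p))) {a b : ℕ} (hab : a ≤ b) {v : A.V}
    (hv : Btw A.T (A.act (h ^ (-(a : ℤ))) p) v (A.act (h ^ (a : ℤ)) p)) :
    Btw A.T (A.act (h ^ (-(b : ℤ))) p) v (A.act (h ^ (b : ℤ)) p) := by
  have hT := A.isTree
  have h1 := axis_btw hne hb (i := -(b : ℤ)) (j := -(a : ℤ)) (l := (a : ℤ)) (by omega) (by omega)
  have h2 := axis_btw hne hb (i := -(b : ℤ)) (j := (a : ℤ)) (l := (b : ℤ)) (by omega) (by omega)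
  have t1 := hT.1.dist_triangle (u := A.act (h ^ (-(b : ℤ))) p)
    (v := A.act (h ^ (-(a : ℤ))) p) (w := v)
  have t2 := hT.1.dist_triangle (u := v) (v := A.act (h ^ (a : ℤ)) p)
    (w := A.act (h ^ (b : ℤ)) p)
  have t3 := hT.1.dist_triangle (u := A.act (h ^ (-(b : ℤ))) p) (v := v)
    (w := A.act (h ^ (b : ℤ)) p)
  unfold Btw at *
  omega

theorem axis_local (hne : p ≠ A.act h p)
    (hb : Btw A.T p (A.act h p) (A.act h (A.act h p))) {R : ℕ} {v : A.V}
    (hv : v ∈ axis A h p) (hd : A.T.dist p v < R) :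
    Btw A.T (A.act (h ^ (-(R : ℤ))) p) v (A.act (h ^ (R : ℤ)) p) := by
  obtain ⟨a, ha⟩ := hv
  rcases le_total R a with h1 | h1
  · exact axis_far hne hb h1 ha hd
  · exact axis_mono hne hb h1 ha

theorem mem_axis_of_btw_zpow (n : ℤ) {v : A.V}
    (hv : Btw A.T (A.act (h ^ (-n)) p) v (A.act (h ^ n) p)) : v ∈ axis A h p := by
  rcases Int.eq_nat_or_neg n with ⟨a, rfl | rfl⟩
  · exact ⟨a, hv⟩
  · refine ⟨a, ?_⟩
    rw [neg_neg] at hv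
    exact hv.symm

theorem axis_invariant (hne : p ≠ A.act h p)
    (hb : Btw A.T p (A.act h p) (A.act h (A.act h p))) {g : G} {m n : ℤ} (hm : m ≠ 0)
    (hg : g * h ^ m * g⁻¹ = h ^ n) {v : A.V} (hv : v ∈ axis A h p) :
    A.act g v ∈ axis A h p := by
  have hT := A.isTree
  -- make `m` positive
  wlog hmpos : 0 < m generalizing m n
  · refine this (m := -m) (n := -n) (by omega) ?_ (by omega)
    rw [zpow_neg, zpow_neg, ← hg]
    group
  have hpos := hT.1.pos_dist_of_ne hne
  obtain ⟨M, rfl⟩ := Int.eq_ofNat_of_zero_le hmpos.le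
  obtain ⟨a, ha⟩ := hv
  set D := A.T.dist p (A.act g p) with hD
  set E := A.T.dist p v with hE
  -- a large multiple
  set i : ℕ := a + D + E + 1 with hi
  have hMi : i ≤ M * i := Nat.le_mul_of_pos_left _ (by omega)
  have hMl : M * i ≤ M * i * A.T.dist p (A.act h p) := Nat.le_mul_of_pos_right _ hpos
  have hv' := axis_mono hne hb (b := M * i) (by omega) ha
  have hconj : ∀ j : ℤ, g * h ^ ((M : ℤ) * j) = h ^ (n * j) * g := by
    intro j
    rw [zpow_mul, zpow_mul, ← hg, conj_zpow]
    group
  have hmove : ∀ j : ℤ, A.T.dist (A.act (h ^ (n * j)) p) (A.act g (A.act (h ^ ((M : ℤ) * j)) p))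
      = D := by
    intro j
    rw [← act_mul, hconj, act_mul, act_dist]
  have f1 : A.T.dist p (A.act (h ^ ((M * i : ℕ) : ℤ)) p) = M * i * A.T.dist p (A.act h p) := by
    have := axis_dist hne hb 0 (M * i)
    rwa [zero_add, zpow_zero, act_one] at this
  have f2 : A.T.dist (A.act (h ^ (-((M * i : ℕ) : ℤ))) p) p
      = M * i * A.T.dist p (A.act h p) := by
    have := axis_dist hne hb (-((M * i : ℕ) : ℤ)) (M * i)
    rwa [neg_add_cancel, zpow_zero, act_one] at this
  have t1 := hT.1.dist_triangle (u := p) (v := v) (w := A.act (h ^ ((M * i : ℕ) : ℤ)) p)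
  have t2 := hT.1.dist_triangle (u := A.act (h ^ (-((M * i : ℕ) : ℤ))) p) (v := v) (w := p)
  rw [A.T.dist_comm (u := v) (v := p)] at t2
  have hgv := act_btw A g hv'
  have g1 := act_dist A g v (A.act (h ^ ((M * i : ℕ) : ℤ)) p)
  have g2 := act_dist A g (A.act (h ^ (-((M * i : ℕ) : ℤ))) p) v
  have m1 := hmove i
  have m2 := hmove (-i)
  have c1 : ((M * i : ℕ) : ℤ) = (M : ℤ) * i := by push_cast; ring
  have c2 : -((M * i : ℕ) : ℤ) = (M : ℤ) * (-i) := by push_cast; ring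
  rw [← c1] at m1
  rw [← c2, mul_neg] at m2
  apply mem_axis_of_btw_zpow (n * i)
  rcases hgv.split hT (A.act (h ^ (-(n * i))) p) with h1 | h1
  · exfalso
    unfold Btw at h1
    rw [A.T.dist_comm] at m2
    omega
  rcases h1.split hT (A.act (h ^ (n * i)) p) with h1 | h1
  · exact h1
  · exfalso
    unfold Btw at h1
    omega

theorem axis_cover (hne : p ≠ A.act h p)
    (hb : Btw A.T p (A.act h p) (A.act h (A.act h p))) {v : A.V} (hv : v ∈ axis A h p) :
    ∃ n : ℤ, Btw A.T p (A.act (h ^ n) v) (A.act h p) := by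
  have hT := A.isTree
  have main : ∀ (N : ℕ) (i : ℤ), Btw A.T (A.act (h ^ i) p) v (A.act (h ^ (i + (N + 1 : ℕ))) p) →
      ∃ j : ℤ, Btw A.T (A.act (h ^ j) p) v (A.act (h ^ (j + 1)) p) := by
    intro N
    induction N with
    | zero => intro i hi; exact ⟨i, by simpa using hi⟩
    | succ N ih =>
      intro i hi
      rcases hi.split hT (A.act (h ^ (i + 1)) p) with h1 | h1
      · exact ⟨i, h1⟩
      · apply ih (i + 1)
        convert h1 using 4
        push_cast
        ring
  obtain ⟨a, ha⟩ := hv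
  have ha' := axis_mono hne hb (b := a + 1) (by omega) ha
  obtain ⟨j, hj⟩ := main (2 * a + 1) (-((a + 1 : ℕ) : ℤ)) (by
    convert ha' using 4
    push_cast
    ring)
  refine ⟨-j, ?_⟩
  have := act_btw A (h ^ (-j)) hj
  rw [← act_mul, ← act_mul, ← zpow_add, ← zpow_add, neg_add_cancel, zpow_zero, act_one,
    ← add_assoc, neg_add_cancel, zero_add, zpow_one] at this
  exact this

theorem finiteIndex_zpowers {k C : ℕ} (hA : A.KCAcylindrical k C) (hne : p ≠ A.act h p)
    (hb : Btw A.T p (A.act h p) (A.act h (A.act h p)))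
    (hcomm : ∀ g : G, ∃ m n : ℤ, m ≠ 0 ∧ g * h ^ m * g⁻¹ = h ^ n) :
    (Subgroup.zpowers h).FiniteIndex := by
  have hT := A.isTree
  have hpos := hT.1.pos_dist_of_ne hne
  have hinv : ∀ (g : G) (v : A.V), v ∈ axis A h p → A.act g v ∈ axis A h p := by
    intro g v hv
    obtain ⟨m, n, hm, hmn⟩ := hcomm g
    exact axis_invariant hne hb hm hmn hv
  set q := A.act (h ^ k) p with hq
  have hpq : A.T.dist p q = k * A.T.dist p (A.act h p) := (axis_dist_nat hne hb k).1
  have hkpq : k ≤ A.T.dist p q := by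
    rw [hpq]; exact Nat.le_mul_of_pos_right _ hpos
  have hp_ax : p ∈ axis A h p := ⟨0, by simp [Btw]⟩
  have hq_ax : q ∈ axis A h p := hinv _ _ hp_ax
  set R := A.T.dist p (A.act h p) + A.T.dist p q + 1 with hR
  have hfin := finite_of_pair A hA hkpq
    (finite_btw hT (A.act (h ^ (-(R : ℤ))) p) (A.act (h ^ (R : ℤ)) p))
  set S := {g : G | A.act g p ∈ {v | Btw A.T (A.act (h ^ (-(R : ℤ))) p) v (A.act (h ^ (R : ℤ)) p)} ∧
    A.act g q ∈ {v | Btw A.T (A.act (h ^ (-(R : ℤ))) p) v (A.act (h ^ (R : ℤ)) p)}} with hS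
  have hcover : ∀ g : G, ∃ n : ℤ, h ^ n * g ∈ S := by
    intro g
    obtain ⟨n, hn⟩ := axis_cover hne hb (hinv g p hp_ax)
    refine ⟨n, ?_, ?_⟩
    · apply axis_local hne hb (hinv _ _ hp_ax)
      rw [act_mul]
      unfold Btw at hn
      omega
    · apply axis_local hne hb (hinv _ _ hq_ax)
      rw [act_mul]
      have t := hT.1.dist_triangle (u := p) (v := A.act (h ^ n) (A.act g p))
        (w := A.act (h ^ n) (A.act g q))
      rw [act_dist, act_dist] at t
      unfold Btw at hn
      omega
  have := hfin.to_subtype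
  have hsurj : Function.Surjective
      (fun s : S => (QuotientGroup.mk (s.1⁻¹) : G ⧸ Subgroup.zpowers h)) := by
    intro x
    induction x using QuotientGroup.induction_on with
    | H g =>
      obtain ⟨n, hn⟩ := hcover g⁻¹
      refine ⟨⟨_, hn⟩, ?_⟩
      rw [QuotientGroup.eq]
      refine ⟨n, ?_⟩
      group
  have := Finite.of_surjective _ hsurj
  exact Subgroup.finiteIndex_of_finite_quotient

end Axis

/-- The restriction of an action to a subgroup. -/
def restrict (A : TreeAction G) (H : Subgroup G) : TreeAction H where
  V := A.V
  T := A.T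
  isTree := A.isTree
  act := A.act.comp H.subtype

theorem restrict_acylindrical {k C : ℕ} (hA : A.KCAcylindrical k C) (H : Subgroup G) :
    (restrict A H).KCAcylindrical k C := by
  intro x y hxy
  obtain ⟨h1, h2⟩ := hA x y hxy
  have him : ((↑) : H → G) '' {g : H | (restrict A H).act g x = x ∧ (restrict A H).act g y = y} ⊆
      {g : G | A.act g x = x ∧ A.act g y = y} := by
    rintro _ ⟨g, hg, rfl⟩
    exact hg
  refine ⟨Set.Finite.of_finite_image (h1.subset him) Subtype.val_injective.injOn, ?_⟩
  rw [← Set.ncard_image_of_injective _ (Subtype.val_injective (p := (· ∈ H)))]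
  exact (Set.ncard_le_ncard him h1).trans h2

theorem restrict_unbounded {k C : ℕ} (hA : A.KCAcylindrical k C) (hub : ¬ A.BoundedOrbits)
    {H : Subgroup G} (hH : SNormal H) : ¬ (restrict A H).BoundedOrbits := by
  rintro ⟨x', B, hB⟩
  obtain ⟨x, rfl⟩ : ∃ x : A.V, x = x' := ⟨x', rfl⟩
  have hB' : ∀ g ∈ H, A.T.dist x (A.act g x) ≤ B := fun g hg => hB ⟨g, hg⟩
  obtain ⟨g, hg⟩ : ∃ g, k + 2 * B + 2 < A.T.dist x (A.act g x) := by
    by_contra hcon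
    push Not at hcon
    exact hub ⟨x, _, hcon⟩
  have hfin := finite_coarse A hA B hg.le
  have := hH g
  apply Set.infinite_coe_iff.mp this
  refine hfin.subset ?_
  rintro u ⟨⟨v, hv, rfl⟩, hu⟩
  refine ⟨hB' _ hu, ?_⟩
  have : (MulAut.conj g).toMonoidHom v = g * v * g⁻¹ := rfl
  rw [this, act_mul, act_inv_act, act_mul, act_dist]
  exact hB' v hv

theorem restrict_not_vc {k C : ℕ} (hA : A.KCAcylindrical k C) (hne : A.NonElementary)
    {H : Subgroup G} (hH : SNormal H) : ¬ IsVirtuallyCyclic H := by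
  rintro ⟨K, hK, hcyc⟩
  have hub := restrict_unbounded A hA hne.1 hH
  obtain ⟨h0, hh0⟩ := hcyc.exists_generator
  set h : G := h0.1.1 with hh
  have hmem : ∀ u : H, u ∈ K → ∃ n : ℤ, h ^ n = u.1 := by
    intro u hu
    obtain ⟨n, hn⟩ := hh0 ⟨u, hu⟩
    refine ⟨n, ?_⟩
    have := congrArg (fun z : K => (z.1.1 : G)) hn
    simpa using this
  have hfinq : Finite (H ⧸ K) := inferInstance
  have hunb : ∀ (x : A.V) (B : ℕ), ∃ n : ℤ, B < A.T.dist x (A.act (h ^ n) x) := by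
    intro x B
    by_contra hcon
    push Not at hcon
    apply hub
    have hfr := Set.finite_range
      (fun c : H ⧸ K => A.T.dist x (A.act (Quotient.out c : H).1 x))
    obtain ⟨M, hM⟩ := hfr.bddAbove
    refine ⟨x, M + B, fun u => ?_⟩
    have h1 : (Quotient.out (u : H ⧸ K))⁻¹ * u ∈ K :=
      QuotientGroup.eq.mp (QuotientGroup.out_eq' (u : H ⧸ K))
    obtain ⟨n, hn⟩ := hmem _ h1
    have h2 : u.1 = (Quotient.out (u : H ⧸ K)).1 * h ^ n := by
      rw [hn]; simp
    have h3 : A.T.dist x (A.act (Quotient.out (u : H ⧸ K)).1 x) ≤ M :=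
      hM ⟨(u : H ⧸ K), rfl⟩
    change A.T.dist x (A.act u.1 x) ≤ M + B
    rw [h2, act_mul]
    refine (A.isTree.1.dist_triangle (v := A.act (Quotient.out (u : H ⧸ K)).1 x)).trans ?_
    rw [act_dist]
    exact add_le_add h3 (hcon n)
  obtain ⟨p, hp, hb⟩ := exists_axis_point A h hunb
  apply hne.2
  refine ⟨Subgroup.zpowers h, finiteIndex_zpowers hA hp hb ?_, inferInstance⟩
  intro g
  have hinf := hH g
  have hdata : ∀ u : (conjSubgroup g H ⊓ H : Subgroup G), g⁻¹ * u.1 * g ∈ H := by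
    rintro ⟨u, ⟨v, hv, rfl⟩, hu⟩
    have : (MulAut.conj g).toMonoidHom v = g * v * g⁻¹ := rfl
    simp only [this]
    have e : g⁻¹ * (g * v * g⁻¹) * g = v := by group
    rw [e]
    exact hv
  let f : (conjSubgroup g H ⊓ H : Subgroup G) → (H ⧸ K) × (H ⧸ K) := fun u =>
    (((⟨u.1, u.2.2⟩ : H) : H ⧸ K), ((⟨g⁻¹ * u.1 * g, hdata u⟩ : H) : H ⧸ K))
  obtain ⟨u, u', huu, hf⟩ := Finite.exists_ne_map_eq_of_infinite f
  have h1 := QuotientGroup.eq.mp (congrArg Prod.fst hf)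
  have h2 := QuotientGroup.eq.mp (congrArg Prod.snd hf)
  obtain ⟨n, hn⟩ := hmem _ h1
  obtain ⟨m, hm⟩ := hmem _ h2
  simp only [Subgroup.coe_mul, Subgroup.coe_inv] at hn hm
  have hconj : g * h ^ m * g⁻¹ = h ^ n := by
    rw [hn, hm]; group
  refine ⟨m, n, ?_, hconj⟩
  rintro rfl
  apply huu
  rw [zpow_zero, mul_one, mul_inv_cancel] at hconj
  rw [← hconj] at hn
  exact Subtype.ext (inv_mul_eq_one.mp hn.symm)

theorem part_one (hA : A.Acylindrical) (hne : A.NonElementary) (H : Subgroup G)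
    (hH : SNormal H) : AcylindricallyArboreal H := by
  obtain ⟨k, C, hC, hA⟩ := hA
  exact ⟨restrict A H, ⟨k, C, hC, restrict_acylindrical A hA H⟩,
    restrict_unbounded A hA hne.1 hH, restrict_not_vc A hA hne hH⟩

theorem sNormal_of_finiteIndex (hG : ¬ IsVirtuallyCyclic G) (H : Subgroup G)
    (hH : H.FiniteIndex) : SNormal H := by
  intro g
  have h1 : (conjSubgroup g H).FiniteIndex := by
    constructor
    have : (conjSubgroup g H).index = H.index := Subgroup.index_map_equiv H (MulAut.conj g)
    rw [this]
    exact hH.index_ne_zero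
  have h2 : (conjSubgroup g H ⊓ H).FiniteIndex := inferInstance
  by_contra hfin
  rw [not_infinite_iff_finite] at hfin
  apply hG
  have hGf : Finite G := by
    have : Finite (G ⧸ (conjSubgroup g H ⊓ H)) := inferInstance
    exact Finite.of_equiv _ (Subgroup.groupEquivQuotientProdSubgroup
      (s := conjSubgroup g H ⊓ H)).symm
  exact ⟨⊥, inferInstance, inferInstance⟩

end Action

end ArborealAux

/-- If `G` has a non-elementary acylindrical action on a tree and `H ≤ G` is s-normal,
then `H` is acylindrically arboreal; in particular, every finite index subgroup of an
acylindrically arboreal group is acylindrically arboreal. -/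
theorem sNormal_acylindricallyArboreal :
    (∀ (G : Type) [Group G] (A : TreeAction G), A.Acylindrical → A.NonElementary →
      ∀ H : Subgroup G, SNormal H → AcylindricallyArboreal H) ∧
    (∀ (G : Type) [Group G], AcylindricallyArboreal G →
      ∀ H : Subgroup G, H.FiniteIndex → AcylindricallyArboreal H) := by
  refine ⟨fun G _ A hA hne H hH => ArborealAux.part_one A hA hne H hH, ?_⟩
  rintro G _ ⟨A, hA, hne⟩ H hH
  exact ArborealAux.part_one A hA hne H (ArborealAux.sNormal_of_finiteIndex hne.2 H hH)
end
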